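/- Let F₁ and F₂ be free groups, let a ∈ F₁ \ {1} and b ∈ F₂ \ {1} be elements that are not proper powers (i.e., a ≠ wᵏ for |k| > 1 and b ≠ zˡ for |l| > 1). Then the amalgamated free product G = F₁ *_{a=b} F₂ is 2-order separable: for any g₁, g₂ ∈ G such that g₁ is conjugate to neither g₂ nor g₂⁻¹, there exists a homomorphism φ from G onto a finite group with |φ(g₁)| ≠ |φ(g₂)|. -/

import Mathlib

open Monoid Subgroup

/-- The two free factors of the amalgam, indexed by `Bool`. -/
def fam (α β : Type) : Bool → Type
  | true => FreeGroup α
  | false => FreeGroup β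

instance famGroup (α β : Type) : ∀ i : Bool, Group (fam α β i)
  | true => inferInstanceAs (Group (FreeGroup α))
  | false => inferInstanceAs (Group (FreeGroup β))

/-- The maps from the infinite cyclic group `FreeGroup Unit` sending the
generator to `a` resp. `b`; their pushout is `F₁ *_{a=b} F₂`. -/
def amalMaps {α β : Type} (a : FreeGroup α) (b : FreeGroup β) :
    ∀ i : Bool, FreeGroup Unit →* fam α β i
  | true => FreeGroup.lift fun _ => a
  | false => FreeGroup.lift fun _ => b

/-- An element is not a proper power: `a = w ^ k` forces `|k| ≤ 1`. -/
def NotProperPower {G : Type} [Group G] (a : G) : Prop :=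
  ∀ (w : G) (k : ℤ), a = w ^ k → k.natAbs ≤ 1


theorem perm_extend {Y S : Type} [Finite Y] (i : Y → S) (hi : Function.Injective i)
    (σ : Equiv.Perm S) :
    ∃ τ : Equiv.Perm Y, ∀ y y' : Y, σ (i y) = i y' → τ y = y' := by
  classical
  have : Fintype Y := Fintype.ofFinite Y
  let e : {y : Y // ∃ y', σ (i y) = i y'} ≃ {y : Y // ∃ y', σ (i y') = i y} :=
    { toFun := fun y => ⟨y.2.choose, y.1, y.2.choose_spec⟩
      invFun := fun y => ⟨y.2.choose, y.1, y.2.choose_spec⟩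
      left_inv := by
        intro y
        apply Subtype.ext
        apply hi
        apply σ.injective
        have h1 := y.2.choose_spec
        have h2 := (⟨y.1, h1⟩ : ∃ y', σ (i y') = i y.2.choose).choose_spec
        exact h2.trans h1.symm
      right_inv := by
        intro y
        apply Subtype.ext
        apply hi
        have h1 := y.2.choose_spec
        have h2 := (⟨y.1, h1⟩ : ∃ y', σ (i y.2.choose) = i y').choose_spec
        exact h2.symm.trans h1 }
  refine ⟨e.extendSubtype, fun y y' h => ?_⟩
  have hp : ∃ y', σ (i y) = i y' := ⟨y', h⟩
  rw [Equiv.extendSubtype_apply_of_mem e y hp]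
  apply hi
  exact hp.choose_spec.symm.trans h

theorem trunc {α S : Type} [MulAction (FreeGroup α) S] (s0 : S) (W : Finset (FreeGroup α)) :
    ∃ (Y : Type) (_ : Finite Y) (ψ : FreeGroup α →* Equiv.Perm Y) (i : Y → S) (y0 : Y),
      Function.Injective i ∧ i y0 = s0 ∧ ∀ w ∈ W, i (ψ w y0) = w • s0 := by
  classical
  let T : Set S := {s0} ∪ ⋃ w ∈ W, (fun t => FreeGroup.mk t • s0) '' {t | t ∈ w.toWord.tails}
  have hT : T.Finite := by
    refine (Set.finite_singleton _).union (W.finite_toSet.biUnion fun w _ => ?_)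
    exact (List.finite_toSet _).image _
  have hfin : Finite T := hT
  choose σ hσ using fun x : α =>
    perm_extend (Y := T) Subtype.val Subtype.val_injective
      (MulAction.toPerm (FreeGroup.of x) : Equiv.Perm S)
  have hs0 : s0 ∈ T := Or.inl rfl
  refine ⟨T, hfin, FreeGroup.lift σ, Subtype.val, ⟨s0, hs0⟩, Subtype.val_injective, rfl, ?_⟩
  have key : ∀ t : List (α × Bool), (∀ t', t' <:+ t → FreeGroup.mk t' • s0 ∈ T) →
      ((FreeGroup.lift σ (FreeGroup.mk t)) ⟨s0, hs0⟩ : S) = FreeGroup.mk t • s0 := by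
    intro t
    induction t with
    | nil =>
      intro _
      rw [← FreeGroup.one_eq_mk, map_one, one_smul]
      rfl
    | cons p t ih =>
      intro h
      have ih' := ih (fun t' ht' => h t' (ht'.trans (List.suffix_cons p t)))
      have hm : FreeGroup.mk (p :: t) = FreeGroup.mk [p] * FreeGroup.mk t := by
        rw [FreeGroup.mul_mk]; rfl
      have hin := h _ List.suffix_rfl
      have hin2 := h t (List.suffix_cons p t)
      rw [hm, map_mul, Equiv.Perm.mul_apply]
      have e1 : (FreeGroup.lift σ (FreeGroup.mk t)) ⟨s0, hs0⟩
          = (⟨FreeGroup.mk t • s0, hin2⟩ : T) := Subtype.ext ih'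
      rw [e1]
      obtain ⟨x, b⟩ := p
      cases b with
      | true =>
        have : (FreeGroup.mk [(x, true)]) = FreeGroup.of x := rfl
        rw [this, FreeGroup.lift_apply_of]
        have := hσ x ⟨FreeGroup.mk t • s0, hin2⟩ ⟨_, hin⟩ (by
          simp only [MulAction.toPerm_apply]
          rw [hm, mul_smul]; rfl)
        rw [this]
        show FreeGroup.mk (_ :: t) • s0 = _
        rw [hm]
        rfl
      | false =>
        have h3 : (FreeGroup.mk [(x, false)]) = (FreeGroup.of x)⁻¹ := rfl
        rw [h3, map_inv, FreeGroup.lift_apply_of]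
        have := hσ x ⟨_, hin⟩ ⟨FreeGroup.mk t • s0, hin2⟩ (by
          simp only [MulAction.toPerm_apply]
          rw [hm, mul_smul, h3, smul_inv_smul])
        rw [Equiv.Perm.inv_eq_iff_eq.mpr this.symm]
        show FreeGroup.mk (_ :: t) • s0 = _
        rw [hm, h3]
  intro w hw
  have := key w.toWord (fun t' ht' => Or.inr (by
    simp only [Set.mem_iUnion]
    exact ⟨w, hw, t', by simpa using ht', rfl⟩))
  rwa [FreeGroup.mk_toWord] at this

/-- syllable decomposition -/
theorem syllables {α : Type} (g : FreeGroup α) : ∃ L : List (α × ℤ),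
    (L.map Prod.fst).IsChain (· ≠ ·) ∧ (∀ s ∈ L, s.2 ≠ 0) ∧
    g = (L.map fun s => FreeGroup.of s.1 ^ s.2).prod := by
  classical
  have step : ∀ (x : α) (e : ℤ) (he : e ≠ 0) (L : List (α × ℤ)),
      (L.map Prod.fst).IsChain (· ≠ ·) → (∀ s ∈ L, s.2 ≠ 0) → ∃ L' : List (α × ℤ),
    (L'.map Prod.fst).IsChain (· ≠ ·) ∧ (∀ s ∈ L', s.2 ≠ 0) ∧
    FreeGroup.of x ^ e * (L.map fun s => FreeGroup.of s.1 ^ s.2).prod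
      = (L'.map fun s => FreeGroup.of s.1 ^ s.2).prod := by
    intro x e he L hc hn
    cases L with
    | nil => exact ⟨[(x, e)], by simp, by simpa using he, by simp⟩
    | cons s L =>
      by_cases hx : s.1 = x
      · by_cases h0 : e + s.2 = 0
        · refine ⟨L, ?_, fun t ht => hn t (List.mem_cons_of_mem _ ht), ?_⟩
          · rw [List.map_cons] at hc
            exact hc.tail
          · rw [List.map_cons, List.prod_cons, ← mul_assoc, hx, ← zpow_add, h0]; simp
        · refine ⟨(x, e + s.2) :: L, ?_, ?_, ?_⟩
          · subst hx; simpa using hc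
          · intro t ht
            rcases List.mem_cons.mp ht with rfl | ht
            · exact h0
            · exact hn t (List.mem_cons_of_mem _ ht)
          · rw [List.map_cons, List.prod_cons, ← mul_assoc, hx, ← zpow_add]; simp
      · refine ⟨(x, e) :: s :: L, ?_, ?_, by simp⟩
        · simp only [List.map_cons] at hc ⊢
          exact List.IsChain.cons_cons (Ne.symm hx) hc
        · intro t ht
          rcases List.mem_cons.mp ht with rfl | ht
          · exact he
          · exact hn t ht
  have key : ∀ w : List (α × Bool), ∃ L : List (α × ℤ),
    (L.map Prod.fst).IsChain (· ≠ ·) ∧ (∀ s ∈ L, s.2 ≠ 0) ∧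
    FreeGroup.mk w = (L.map fun s => FreeGroup.of s.1 ^ s.2).prod := by
    intro w
    induction w with
    | nil => exact ⟨[], by simp, by simp, by simp [FreeGroup.one_eq_mk]⟩
    | cons p w ih =>
      obtain ⟨L, h1, h2, h3⟩ := ih
      have hm : FreeGroup.mk (p :: w) = FreeGroup.mk [p] * FreeGroup.mk w := by
        rw [FreeGroup.mul_mk]; rfl
      obtain ⟨x, b⟩ := p
      have hp : FreeGroup.mk [(x, b)] = FreeGroup.of x ^ (if b then (1 : ℤ) else -1) := by
        cases b
        · simp; rfl
        · simp; rfl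
      rw [hm, hp, h3]
      exact step x _ (by split <;> simp) L h1 h2
  obtain ⟨L, h1, h2, h3⟩ := key g.toWord
  exact ⟨L, h1, h2, by rw [← h3, FreeGroup.mk_toWord]⟩


section Potency
open Classical in
noncomputable def opFwd {α R : Type} [CommRing R] (y : ℕ → Option α) (x : α) (φ : ℕ → R) : ℕ → R
  | 0 => φ 0
  | j + 1 => φ (j + 1) + if y j = some x then φ j else 0

open Classical in
noncomputable def opBwd {α R : Type} [CommRing R] (y : ℕ → Option α) (x : α) (φ : ℕ → R) : ℕ → R
  | 0 => φ 0
  | j + 1 => φ (j + 1) - if y j = some x then opBwd y x φ j else 0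

noncomputable def opEquiv {α R : Type} [CommRing R] (y : ℕ → Option α) (x : α) :
    (ℕ → R) ≃ₗ[R] (ℕ → R) where
  toFun := opFwd y x
  invFun := opBwd y x
  map_add' φ ψ := by
    funext j
    cases j with
    | zero => simp [opFwd]
    | succ j => by_cases h : y j = some x <;> simp [opFwd, h]; ring
  map_smul' c φ := by
    funext j
    cases j with
    | zero => simp [opFwd]
    | succ j => by_cases h : y j = some x <;> simp [opFwd, h]; ring
  left_inv φ := by
    funext j
    induction j with
    | zero => simp [opFwd, opBwd]
    | succ j ih => by_cases h : y j = some x <;> simp [opFwd, opBwd, h, ih]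
  right_inv φ := by
    funext j
    cases j with
    | zero => simp [opFwd, opBwd]
    | succ j => by_cases h : y j = some x <;> simp [opFwd, opBwd, h]

noncomputable def rho {α : Type} (R : Type) [CommRing R] (y : ℕ → Option α) :
    FreeGroup α →* ((ℕ → R) ≃ₗ[R] (ℕ → R)) := FreeGroup.lift (opEquiv y)

theorem rho_of {α R : Type} [CommRing R] (y : ℕ → Option α) (x : α) (φ : ℕ → R) :
    rho R y (FreeGroup.of x) φ = opFwd y x φ := by
  simp [rho]; rfl

theorem rho_inv {α R : Type} [CommRing R] (y : ℕ → Option α) (x : α) (φ : ℕ → R) :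
    rho R y (FreeGroup.of x)⁻¹ φ = opBwd y x φ := by
  simp [rho]; rfl

theorem rho_mul {α R : Type} [CommRing R] (y : ℕ → Option α) (g h : FreeGroup α) (φ : ℕ → R) :
    rho R y (g * h) φ = rho R y g (rho R y h φ) := by
  simp [map_mul]

theorem free_ind {α : Type} (P : FreeGroup α → Prop) (h1 : P 1) (ho : ∀ x, P (FreeGroup.of x))
    (hi : ∀ x, P (FreeGroup.of x)⁻¹) (hm : ∀ g h, P g → P h → P (g * h)) (g : FreeGroup α) : P g :=
  FreeGroup.induction_on g h1 ho (fun x _ => hi x) hm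

theorem rho_tri {α R : Type} [CommRing R] (y : ℕ → Option α) (d : ℕ) (g : FreeGroup α) :
    ∀ φ φ' : ℕ → R, (∀ j ≤ d, φ j = φ' j) → ∀ j ≤ d, rho R y g φ j = rho R y g φ' j := by
  induction g using free_ind with
  | h1 => intro φ φ' h j hj; simpa using h j hj
  | ho x =>
    intro φ φ' h j hj
    rw [rho_of, rho_of]
    cases j with
    | zero => simpa [opFwd] using h 0 hj
    | succ j => simp only [opFwd]; rw [h _ hj, h j (by omega)]
  | hi x =>
    intro φ φ' h j
    rw [rho_inv, rho_inv]
    induction j with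
    | zero => intro hj; simpa [opBwd] using h 0 hj
    | succ j ih => intro hj; simp only [opBwd]; rw [h _ hj, ih (by omega)]
  | hm g g' ih ih' =>
    intro φ φ' h j hj
    rw [rho_mul, rho_mul]
    exact ih _ _ (ih' _ _ h) j hj

theorem rho_shift {α R : Type} [CommRing R] (y : ℕ → Option α) (g : FreeGroup α) :
    ∀ φ : ℕ → R, φ 0 = 0 → rho R y g φ 0 = 0 ∧
      ∀ j, rho R y g φ (j + 1) = rho R (fun i => y (i + 1)) g (fun i => φ (i + 1)) j := by
  induction g using free_ind with
  | h1 => intro φ h; simpa using h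
  | ho x =>
    intro φ h
    rw [rho_of, rho_of]
    refine ⟨by simpa [opFwd] using h, fun j => ?_⟩
    cases j with
    | zero => simp [opFwd, h]
    | succ j => simp [opFwd]
  | hi x =>
    intro φ h
    rw [rho_inv, rho_inv]
    refine ⟨by simpa [opBwd] using h, fun j => ?_⟩
    induction j with
    | zero => simp [opBwd, h]
    | succ j ih => rw [opBwd, ih]; simp [opBwd]
  | hm g g' ih ih' =>
    intro φ h
    rw [rho_mul, rho_mul]
    obtain ⟨h1, h2⟩ := ih' φ h
    obtain ⟨h3, h4⟩ := ih _ h1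
    refine ⟨h3, fun j => ?_⟩
    rw [h4, funext h2]

theorem rho_cast {α R : Type} [CommRing R] (y : ℕ → Option α) (g : FreeGroup α) :
    ∀ φ : ℕ → ℤ, rho R y g (fun j => (φ j : R)) = fun j => ((rho ℤ y g φ j : ℤ) : R) := by
  induction g using free_ind with
  | h1 => intro φ; simp
  | ho x =>
    intro φ; funext j
    rw [rho_of, rho_of]
    cases j with
    | zero => simp [opFwd]
    | succ j => simp [opFwd]
  | hi x =>
    intro φ; funext j
    rw [rho_inv, rho_inv]
    induction j with
    | zero => simp [opBwd]
    | succ j ih => simp [opBwd, ih]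
  | hm g g' ih ih' =>
    intro φ
    rw [rho_mul, rho_mul, ih', ih]

/-- action of a power of a generator at a position -/
theorem rho_zpow {α : Type} (y : ℕ → Option α) (x : α) (e : ℤ) (m : ℕ)
    (hm : y m = some x) (hm' : m = 0 ∨ y (m - 1) ≠ some x) (φ : ℕ → ℤ) :
    rho ℤ y (FreeGroup.of x ^ e) φ m = φ m ∧
    rho ℤ y (FreeGroup.of x ^ e) φ (m + 1) = φ (m + 1) + e * φ m := by
  have h0 : ∀ ψ : ℕ → ℤ, opFwd y x ψ m = ψ m := by
    intro ψ
    cases m with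
    | zero => simp [opFwd]
    | succ m => simp at hm'; simp [opFwd, hm']
  have h1 : ∀ ψ : ℕ → ℤ, opFwd y x ψ (m + 1) = ψ (m + 1) + ψ m := by
    intro ψ; simp [opFwd, hm]
  have key : ∀ (e : ℤ) (ψ : ℕ → ℤ), rho ℤ y (FreeGroup.of x ^ (e + 1)) ψ
      = opFwd y x (rho ℤ y (FreeGroup.of x ^ e) ψ) := by
    intro e ψ
    rw [add_comm, zpow_add, zpow_one, rho_mul, rho_of]
  induction e using Int.induction_on with
  | zero => simp
  | succ i ih =>
    rw [key, h0, h1]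
    refine ⟨ih.1, ?_⟩
    rw [ih.1, ih.2]; ring
  | pred i ih =>
    have k := key (-(i:ℤ) - 1) φ
    rw [sub_add_cancel] at k
    rw [k, h0, h1] at ih
    refine ⟨ih.1, ?_⟩
    rw [ih.1] at ih
    linarith [ih.2]

theorem rho_zpow_vanish {α : Type} (y : ℕ → Option α) (x : α) (e : ℤ) (m : ℕ)
    (hm : y m ≠ some x) (φ : ℕ → ℤ) (hφ : ∀ j, m < j → φ j = 0) :
    ∀ j, m < j → rho ℤ y (FreeGroup.of x ^ e) φ j = 0 := by
  have h0 : ∀ (ψ : ℕ → ℤ), (∀ j, m < j → ψ j = 0) → ∀ j, m < j → opFwd y x ψ j = 0 := by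
    intro ψ hψ j hj
    cases j with
    | zero => omega
    | succ j =>
      rw [opFwd, hψ _ hj, zero_add]
      split
      · rename_i h
        apply hψ
        rcases Nat.lt_or_ge m j with h' | h'
        · exact h'
        · have : j = m := by omega
          exact absurd (this ▸ h) hm
      · rfl
  have h1 : ∀ (ψ : ℕ → ℤ), (∀ j, m < j → ψ j = 0) → ∀ j, m < j → opBwd y x ψ j = 0 := by
    intro ψ hψ j
    induction j with
    | zero => intro hj; omega
    | succ j ih =>
      intro hj
      rw [opBwd, hψ _ hj, zero_sub, neg_eq_zero]
      split
      · rename_i h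
        apply ih
        rcases Nat.lt_or_ge m j with h' | h'
        · exact h'
        · have : j = m := by omega
          exact absurd (this ▸ h) hm
      · rfl
  induction e using Int.induction_on with
  | zero => simpa using hφ
  | succ i ih =>
    rw [add_comm, zpow_add, zpow_one, rho_mul, rho_of]
    exact h0 _ ih
  | pred i ih =>
    rw [sub_eq_add_neg, add_comm, zpow_add, zpow_neg_one, rho_mul, rho_inv]
    exact h1 _ ih

theorem rho_nontrivial_aux {α : Type} (L : List (α × ℤ)) :
    (L.map Prod.fst).IsChain (· ≠ ·) → (∀ s ∈ L, s.2 ≠ 0) → ∀ y : ℕ → Option α,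
    (∀ j < L.length, y j = (L.map Prod.fst)[L.length - 1 - j]?) →
    rho ℤ y ((L.map fun s => FreeGroup.of s.1 ^ s.2).prod) (fun j => if j = 0 then 1 else 0)
      L.length ≠ 0 ∧ ((L = [] ∨ (L.map Prod.fst)[0]? ≠ y L.length) → ∀ j > L.length,
    rho ℤ y ((L.map fun s => FreeGroup.of s.1 ^ s.2).prod) (fun j => if j = 0 then 1 else 0)
      j = 0) := by
  induction L with
  | nil =>
    intro _ _ y hy
    simp
    omega
  | cons s L ih =>
    intro hc hn y hy
    have hc' : (L.map Prod.fst).IsChain (· ≠ ·) := by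
      rw [List.map_cons] at hc; exact hc.tail
    obtain ⟨i1, i2⟩ := ih hc' (fun t ht => hn t (List.mem_cons_of_mem _ ht)) y (by
      intro j hj
      rw [hy j (by simp; omega)]
      have : (s :: L).length - 1 - j = (L.length - 1 - j) + 1 := by simp; omega
      rw [this]; simp)
    have hm : y L.length = some s.1 := by
      rw [hy L.length (by simp)]; simp
    have hd : L = [] ∨ (L.map Prod.fst)[0]? ≠ some s.1 := by
      cases L with
      | nil => left; rfl
      | cons t L =>
        right
        simp only [List.map_cons, List.isChain_cons_cons] at hc
        simpa using hc.1.symm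
    have hm' : L.length = 0 ∨ y (L.length - 1) ≠ some s.1 := by
      rcases hd with h | h
      · left; simp [h]
      · by_cases h0 : L.length = 0
        · left; exact h0
        right
        rw [hy _ (by rw [List.length_cons]; omega)]
        have : (s :: L).length - 1 - (L.length - 1) = 0 + 1 := by
          rw [List.length_cons]; omega
        rw [this]; simpa using h
    have i3 := i2 (by rw [hm]; exact hd)
    rw [List.map_cons, List.prod_cons, rho_mul]
    set φ := rho ℤ y ((L.map fun s => FreeGroup.of s.1 ^ s.2).prod)
      (fun j => if j = 0 then (1 : ℤ) else 0) with hφ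
    constructor
    · rw [List.length_cons, (rho_zpow y s.1 s.2 L.length hm hm' φ).2, i3 _ (by omega), zero_add]
      exact mul_ne_zero (hn s (by simp)) i1
    · intro h
      simp at h
      rw [List.length_cons]
      exact rho_zpow_vanish y s.1 s.2 _ (fun e => h e.symm) φ (fun j hj => i3 j (by omega))

theorem rho_nontrivial {α : Type} (b : FreeGroup α) (hb : b ≠ 1) :
    ∃ (d : ℕ) (y : ℕ → Option α) (φ : ℕ → ℤ), rho ℤ y b φ d ≠ φ d := by
  obtain ⟨L, h1, h2, h3⟩ := syllables b
  have hL : L.length ≠ 0 := by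
    intro h
    rw [List.length_eq_zero_iff] at h
    subst h
    exact hb (by simpa using h3)
  have := rho_nontrivial_aux L h1 h2 (fun j => (L.map Prod.fst)[L.length - 1 - j]?)
    (fun j _ => rfl)
  refine ⟨L.length, fun j => (L.map Prod.fst)[L.length - 1 - j]?,
    fun j => if j = 0 then 1 else 0, ?_⟩
  simp only [if_neg hL]
  rw [h3]
  exact this.1

theorem potency {α : Type} (b : FreeGroup α) (hb : b ≠ 1) (n : ℕ) (hn : 0 < n) :
    ∃ (Γ : Type) (_ : Group Γ) (_ : Finite Γ) (ψ : FreeGroup α →* Γ), orderOf (ψ b) = n := by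
  classical
  have hex := rho_nontrivial b hb
  let d := Nat.find hex
  obtain ⟨y, φ0, hφ0⟩ := Nat.find_spec hex
  have hmin : ∀ j < d, ∀ (y : ℕ → Option α) (φ : ℕ → ℤ), rho ℤ y b φ j = φ j := by
    intro j hj y φ
    by_contra h
    exact Nat.find_min hex hj ⟨y, φ, h⟩
  change rho ℤ y b φ0 d ≠ φ0 d at hφ0
  have hd : d ≠ 0 := by
    intro h
    have : ∀ g : FreeGroup α, ∀ φ : ℕ → ℤ, rho ℤ y g φ 0 = φ 0 := by
      intro g
      induction g using free_ind with
      | h1 => simp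
      | ho x => intro φ; rw [rho_of]; rfl
      | hi x => intro φ; rw [rho_inv]; simp [opBwd]
      | hm g g' ih ih' => intro φ; rw [rho_mul, ih, ih']
    rw [h] at hφ0
    exact hφ0 (this b φ0)
  obtain ⟨d', hd'⟩ := Nat.exists_eq_succ_of_ne_zero hd
  let δ : ℕ → ℤ := fun j => if j = 0 then 1 else 0
  let c : ℤ := rho ℤ y b δ d
  have hact : ∀ φ : ℕ → ℤ, rho ℤ y b φ d = φ d + c * φ 0 := by
    intro φ
    have hdec : φ = (φ - φ 0 • δ) + φ 0 • δ := by simp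
    have h1 : rho ℤ y b (φ - φ 0 • δ) d = (φ - φ 0 • δ) d := by
      rw [hd', (rho_shift y b (φ - φ 0 • δ) (by simp [δ])).2 d', hmin d' (by omega)]
    conv_lhs => rw [hdec]
    rw [map_add, map_smul, Pi.add_apply, h1]
    have : δ d = 0 := by simp [δ, hd]
    simp only [Pi.sub_apply, Pi.smul_apply, this, smul_eq_mul]
    show _ + _ * c = _
    ring
  have hc : c ≠ 0 := by
    intro h
    rw [hact, h] at hφ0
    simp at hφ0
  let N := c.natAbs * n
  have hN : N ≠ 0 := by
    simp only [N]
    exact Nat.mul_ne_zero (by simpa using hc) (by omega)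
  have : NeZero N := ⟨hN⟩
  have hlift : ∀ φ : ℕ → ZMod N, ∃ φ' : ℕ → ℤ, φ = fun j => (φ' j : ZMod N) := by
    intro φ
    choose f hf using fun j => ZMod.intCast_surjective (φ j)
    exact ⟨f, funext fun j => (hf j).symm⟩
  have hR : ∀ φ : ℕ → ZMod N, (∀ j < d, rho (ZMod N) y b φ j = φ j) ∧
      rho (ZMod N) y b φ d = φ d + c * φ 0 := by
    intro φ
    obtain ⟨φ', rfl⟩ := hlift φ
    rw [rho_cast]
    refine ⟨fun j hj => by simp only [hmin j hj], by simp only [hact]; push_cast; ring⟩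
  have hRk : ∀ (k : ℕ) (φ : ℕ → ZMod N), (∀ j < d, rho (ZMod N) y (b ^ k) φ j = φ j) ∧
      rho (ZMod N) y (b ^ k) φ d = φ d + k * c * φ 0 := by
    intro k
    induction k with
    | zero => intro φ; simp
    | succ k ih =>
      intro φ
      rw [pow_succ', rho_mul]
      obtain ⟨h1, h2⟩ := hR (rho (ZMod N) y (b ^ k) φ)
      obtain ⟨h3, h4⟩ := ih φ
      refine ⟨fun j hj => by rw [h1 j hj, h3 j hj], ?_⟩
      rw [h2, h4, h3 0 (by omega)]; push_cast; ring
  let ext : (Fin (d + 1) → ZMod N) → (ℕ → ZMod N) := fun φ j =>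
    if h : j < d + 1 then φ ⟨j, h⟩ else 0
  have hext : ∀ (φ : ℕ → ZMod N), ∀ j ≤ d, ext (fun i => φ i) j = φ j := by
    intro φ j hj
    exact dif_pos (show j < d + 1 by omega)
  have hext' : ∀ (φ : Fin (d + 1) → ZMod N) (i : Fin (d + 1)), ext φ i = φ i := by
    intro φ i
    exact dif_pos i.2
  let A : FreeGroup α →* Function.End (Fin (d + 1) → ZMod N) :=
    { toFun := fun g φ i => rho (ZMod N) y g (ext φ) i
      map_one' := by
        funext φ i
        show rho (ZMod N) y 1 (ext φ) i = φ i
        rw [map_one]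
        exact hext' φ i
      map_mul' := by
        intro g h
        funext φ i
        show rho (ZMod N) y (g * h) (ext φ) i = rho (ZMod N) y g (ext fun i => rho (ZMod N) y h (ext φ) i) i
        rw [rho_mul]
        exact rho_tri y d g _ _ (fun j hj => (hext _ j hj).symm) i (by omega) }
  have : Finite (Function.End (Fin (d + 1) → ZMod N)) :=
    inferInstanceAs (Finite ((Fin (d + 1) → ZMod N) → (Fin (d + 1) → ZMod N)))
  refine ⟨(Function.End (Fin (d + 1) → ZMod N))ˣ, inferInstance, inferInstance, A.toHomUnits, ?_⟩
  rw [← orderOf_units]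
  have hA : (↑(A.toHomUnits b) : Function.End (Fin (d + 1) → ZMod N)) = A b := rfl
  rw [hA]
  have hiff : ∀ k : ℕ, A b ^ k = 1 ↔ n ∣ k := by
    intro k
    rw [← map_pow]
    have h1 : ((k * c : ℤ) : ZMod N) = 0 ↔ n ∣ k := by
      rw [ZMod.intCast_zmod_eq_zero_iff_dvd, Int.natCast_dvd, Int.natAbs_mul, Int.natAbs_natCast,
        mul_comm k]
      exact Nat.mul_dvd_mul_iff_left (by omega)
    rw [← h1]
    constructor
    · intro h
      let ψ : Fin (d + 1) → ZMod N := fun i => if i = 0 then 1 else 0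
      have e2 : rho (ZMod N) y (b ^ k) (ext ψ) d = ψ ⟨d, by omega⟩ :=
        congrFun (congrFun h ψ) ⟨d, by omega⟩
      have e1 : ext ψ d = ψ ⟨d, by omega⟩ := hext' ψ ⟨d, by omega⟩
      have e0 : ext ψ 0 = ψ 0 := hext' ψ 0
      have h2 := (hRk k (ext ψ)).2
      rw [e2, e1, e0] at h2
      have hne : (⟨d, by omega⟩ : Fin (d + 1)) ≠ 0 := by
        rw [Ne, Fin.ext_iff]; exact hd
      have hp : ψ 0 = 1 := if_pos rfl
      rw [hp, mul_one] at h2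
      push_cast
      simpa using h2
    · intro h
      push_cast at h
      funext φ i
      show rho (ZMod N) y (b ^ k) (ext φ) i = φ i
      have hφ : ext φ i = φ i := hext' φ i
      rcases Nat.lt_or_ge i d with hi | hi
      · rw [(hRk k _).1 i hi, hφ]
      · have hi' : (i : ℕ) = d := by omega
        rw [← hφ, hi', (hRk k _).2, h]; simp
  apply Nat.dvd_antisymm
  · exact orderOf_dvd_of_pow_eq_one ((hiff n).2 dvd_rfl)
  · exact (hiff _).1 (pow_orderOf_eq_one _)
end Potency


theorem hopf {X : Type} [Finite X] (π : FreeGroup X →* FreeGroup X)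
    (hπ : Function.Surjective π) : Function.Injective π := by
  rw [injective_iff_map_eq_one]
  intro g hg
  by_contra hne
  obtain ⟨Γ, _, _, ψ, hψ⟩ := potency g hne 2 (by norm_num)
  have hfin : Finite (FreeGroup X →* Γ) := Finite.of_equiv (X → Γ) FreeGroup.lift
  have hinj : Function.Injective (fun θ : FreeGroup X →* Γ => θ.comp π) := by
    intro θ θ' h
    ext1 x
    obtain ⟨y, hy⟩ := hπ (FreeGroup.of x)
    rw [← hy]
    exact DFunLike.congr_fun h y
  obtain ⟨θ, hθ⟩ := (Finite.injective_iff_surjective.mp hinj) ψ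
  have : ψ g = 1 := by
    rw [← hθ]; simp [hg]
  rw [this, orderOf_one] at hψ
  omega

/-- free generation of rank two -/
def Free2 {G : Type} [Group G] (a b : G) : Prop :=
  Function.Injective (FreeGroup.lift (fun i : Bool => cond i a b))

theorem lift_surj_closure {G : Type} [Group G] (a b : G) (h : closure {a, b} = ⊤) :
    Function.Surjective (FreeGroup.lift (fun i : Bool => cond i a b)) := by
  rw [← MonoidHom.range_eq_top, eq_top_iff, ← h, closure_le]
  rintro x (rfl | rfl)
  · exact ⟨FreeGroup.of true, by simp⟩
  · exact ⟨FreeGroup.of false, by simp⟩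

theorem rank2_free {X : Type} (a b : FreeGroup X) (h : closure {a, b} = ⊤) :
    (∃ (z : FreeGroup X) (m n : ℤ), a = z ^ m ∧ b = z ^ n) ∨ Free2 a b := by
  classical
  have hs := lift_surj_closure a b h
  let Z := Multiplicative (ZMod 2)
  have hinj : Function.Injective
      (fun f : X → Z => ((FreeGroup.lift f a, FreeGroup.lift f b) : Z × Z)) := by
    intro f f' he
    simp only [Prod.mk.injEq] at he
    have hh : (FreeGroup.lift f).comp (FreeGroup.lift (fun i : Bool => cond i a b))
        = (FreeGroup.lift f').comp (FreeGroup.lift (fun i : Bool => cond i a b)) := by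
      ext i
      cases i
      · simpa using he.2
      · simpa using he.1
    have : FreeGroup.lift f = FreeGroup.lift f' := by
      ext1 x
      obtain ⟨y, hy⟩ := hs (FreeGroup.of x)
      rw [← hy]
      exact DFunLike.congr_fun hh y
    exact FreeGroup.lift.injective this
  have hZ : Finite Z := inferInstanceAs (Finite (ZMod 2))
  have hfin : Finite (X → Z) := Finite.of_injective _ hinj
  have hX : Finite X := by
    refine Finite.of_injective (fun x : X => (fun x' => if x = x' then
      (Multiplicative.ofAdd (1 : ZMod 2)) else 1 : X → Z)) ?_
    intro x x' hxx
    have := congrFun hxx x'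
    by_contra hne
    simp [hne] at this
    exact absurd this (by decide)
  have hcard : Nat.card X ≤ 2 := by
    have h1 := Nat.card_le_card_of_injective _ hinj
    have h2 : Nat.card Z = 2 := by
      show Nat.card (ZMod 2) = 2
      simp
    rw [Nat.card_prod, Nat.card_fun, h2] at h1
    exact (Nat.pow_le_pow_iff_right (n := Nat.card X) (m := 2) (a := 2) (by norm_num)).mp (by omega)
  rcases Nat.lt_or_ge (Nat.card X) 2 with hlt | hge
  · left
    have hsub : Subsingleton X := (Finite.card_le_one_iff_subsingleton).mp (by omega)
    have hz : ∃ z : FreeGroup X, ∀ g : FreeGroup X, ∃ m : ℤ, g = z ^ m := by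
      rcases isEmpty_or_nonempty X with he | ⟨⟨x⟩⟩
      · exact ⟨1, fun g => ⟨0, Subsingleton.elim _ _⟩⟩
      · refine ⟨FreeGroup.of x, fun g => ?_⟩
        induction g using free_ind with
        | h1 => exact ⟨0, by simp⟩
        | ho y => exact ⟨1, by rw [Subsingleton.elim y x]; simp⟩
        | hi y => exact ⟨-1, by rw [Subsingleton.elim y x]; simp⟩
        | hm g g' ih ih' =>
          obtain ⟨m, rfl⟩ := ih
          obtain ⟨m', rfl⟩ := ih'
          exact ⟨m + m', by rw [zpow_add]⟩
    obtain ⟨z, hz⟩ := hz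
    obtain ⟨m, hm⟩ := hz a
    obtain ⟨n, hn⟩ := hz b
    exact ⟨z, m, n, hm, hn⟩
  · right
    obtain ⟨e⟩ : Nonempty (X ≃ Bool) := Finite.card_eq.mp (by simp; omega)
    let E : FreeGroup Bool ≃* FreeGroup X := FreeGroup.freeGroupCongr e.symm
    have h1 := hopf ((E.symm.toMonoidHom).comp (FreeGroup.lift (fun i : Bool => cond i a b)))
      (E.symm.surjective.comp hs)
    exact Function.Injective.of_comp (f := E.symm) h1

theorem rank2 {α : Type} (a b : FreeGroup α) :
    (∃ (z : FreeGroup α) (m n : ℤ), a = z ^ m ∧ b = z ^ n) ∨ Free2 a b := by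
  let K := closure {a, b}
  let E : K ≃* FreeGroup (IsFreeGroup.Generators K) := IsFreeGroup.toFreeGroup K
  let a' : K := ⟨a, subset_closure (by simp)⟩
  let b' : K := ⟨b, subset_closure (by simp)⟩
  have hK : closure {a', b'} = (⊤ : Subgroup K) := by
    have h1 : Subgroup.map K.subtype (closure {a', b'}) = Subgroup.map K.subtype ⊤ := by
      rw [MonoidHom.map_closure, Set.image_pair, ← MonoidHom.range_eq_map, Subgroup.range_subtype]
      rfl
    exact Subgroup.map_injective K.subtype_injective h1
  have hcl : closure {E a', E b'} = ⊤ := by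
    have h1 : Subgroup.map E.toMonoidHom (closure {a', b'}) = ⊤ := by
      rw [hK, ← MonoidHom.range_eq_map, MonoidHom.range_eq_top]
      exact E.surjective
    rw [MonoidHom.map_closure, Set.image_pair] at h1
    exact h1
  rcases rank2_free _ _ hcl with ⟨z, m, n, h1, h2⟩ | h
  · left
    refine ⟨(E.symm z : K), m, n, ?_, ?_⟩
    · have : a' = (E.symm z) ^ m := by rw [← map_zpow, ← h1]; simp
      have := congrArg K.subtype this
      simpa using this
    · have : b' = (E.symm z) ^ n := by rw [← map_zpow, ← h2]; simp
      have := congrArg K.subtype this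
      simpa using this
  · right
    have h3 : FreeGroup.lift (fun i : Bool => cond i a b) =
        (K.subtype.comp E.symm.toMonoidHom).comp
          (FreeGroup.lift (fun i : Bool => cond i (E a') (E b'))) := by
      ext i
      cases i <;> simp [a', b']
    unfold Free2
    rw [h3]
    exact (K.subtype_injective.comp E.symm.injective).comp h

theorem free2_of_not_mem {α : Type} {a f : FreeGroup α} (ha : a ≠ 1) (hp : NotProperPower a)
    (hf : f ∉ zpowers a) : Free2 a f := by
  rcases rank2 a f with ⟨z, m, n, h1, h2⟩ | h
  · exfalso
    apply hf
    have hm := hp z m h1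
    have : m = 0 ∨ m = 1 ∨ m = -1 := by omega
    rcases this with rfl | rfl | rfl
    · simp at h1; exact absurd h1 ha
    · rw [mem_zpowers_iff]; exact ⟨n, by rw [h1, h2]; simp⟩
    · rw [mem_zpowers_iff]; exact ⟨-n, by rw [h1, h2]; simp⟩
  · exact h

theorem Free2.transfer {G K : Type} [Group G] [Group K] {a b : G} (h : Free2 a b) (A B : K)
    (w w' : FreeGroup Bool) (he : FreeGroup.lift (fun i : Bool => cond i a b) w =
      FreeGroup.lift (fun i : Bool => cond i a b) w') :
    FreeGroup.lift (fun i : Bool => cond i A B) w = FreeGroup.lift (fun i : Bool => cond i A B) w' := by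
  rw [h he]

theorem mal {α : Type} {a f : FreeGroup α} (ha : a ≠ 1) (hp : NotProperPower a)
    (hf : f ∉ zpowers a) (x y : ℤ) (h : f * a ^ x * f⁻¹ = a ^ y) : x = 0 ∧ y = 0 := by
  have h2 := free2_of_not_mem ha hp hf
  have hw : FreeGroup.lift (fun i : Bool => cond i a f)
      (FreeGroup.of false * FreeGroup.of true ^ x * (FreeGroup.of false)⁻¹) =
      FreeGroup.lift (fun i : Bool => cond i a f) (FreeGroup.of true ^ y) := by simpa using h
  have e1 := h2.transfer (Multiplicative.ofAdd (1 : ℤ)) 1 _ _ hw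
  have e2 := h2.transfer (Equiv.addRight (1 : ℚ)) (Equiv.mulLeft₀ (2 : ℚ) (by norm_num)) _ _ hw
  simp at e1
  have e1' := congrArg Multiplicative.toAdd e1
  simp at e1'
  have e2' := congrArg (fun p : Equiv.Perm ℚ => p 0) e2
  simp at e2'
  subst e1'
  have : (x : ℚ) = 0 := by linarith
  simpa using this

theorem root_mem {α : Type} {a f : FreeGroup α} (ha : a ≠ 1) (hp : NotProperPower a)
    (k l : ℤ) (hl : l ≠ 0) (h : f ^ k = a ^ l) : f ∈ zpowers a := by
  by_contra hf
  have h2 := free2_of_not_mem ha hp hf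
  have hw : FreeGroup.lift (fun i : Bool => cond i a f) (FreeGroup.of false ^ k) =
      FreeGroup.lift (fun i : Bool => cond i a f) (FreeGroup.of true ^ l) := by simpa using h
  have e1 := h2.transfer (Multiplicative.ofAdd (1 : ℤ)) 1 _ _ hw
  simp at e1
  have e1' := congrArg Multiplicative.toAdd e1
  simp at e1'
  exact hl e1'.symm

theorem conj_not_mem {α : Type} {a f : FreeGroup α} (ha : a ≠ 1) (hp : NotProperPower a)
    (hf : f ∉ zpowers a) : f * a * f⁻¹ ∉ zpowers a := by
  intro h
  obtain ⟨y, hy⟩ := mem_zpowers_iff.mp h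
  have := (mal ha hp hf 1 y (by rw [zpow_one, hy])).1
  omega

theorem double_unique {α : Type} {a f : FreeGroup α} (ha : a ≠ 1) (hp : NotProperPower a)
    (hf : f ∉ zpowers a) {x y x' y' : ℤ} (h : a ^ x * f * a ^ y = a ^ x' * f * a ^ y') :
    x = x' ∧ y = y' := by
  have : f * a ^ (y - y') * f⁻¹ = a ^ (x' - x) := by
    have h1 : f * a ^ y = a ^ (-x) * (a ^ x' * f * a ^ y') := by rw [← h, zpow_neg]; group
    rw [zpow_sub, ← mul_assoc, h1, sub_eq_add_neg, add_comm, zpow_add]; group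
  have := mal ha hp hf _ _ this
  omega


theorem combine {G ι T : Type} [Group G] [Finite ι] (g h : ι → T → G) (C : ι → T → Prop)
    (H : ∀ i, ∃ (Γ : Type) (_ : Group Γ) (_ : Finite Γ) (ψ : G →* Γ),
      ∀ t, ψ (g i t) = ψ (h i t) → C i t) :
    ∃ (Γ : Type) (_ : Group Γ) (_ : Finite Γ) (ψ : G →* Γ),
      ∀ i t, ψ (g i t) = ψ (h i t) → C i t := by
  choose Γ grp fin ψ hψ using H
  refine ⟨∀ i, Γ i, inferInstance, inferInstance, MonoidHom.pi ψ, fun i t he => hψ i t ?_⟩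
  exact congrFun he i

theorem sepA {α : Type} (a f : FreeGroup α) (hf : f ∉ zpowers a) :
    ∃ (Γ : Type) (_ : Group Γ) (_ : Finite Γ) (ψ : FreeGroup α →* Γ),
      ∀ x : ℤ, ψ f ≠ ψ (a ^ x) := by
  classical
  obtain ⟨Y, _, ψ, i, y0, hi, h0, hW⟩ := trunc (S := FreeGroup α ⧸ zpowers a)
    (QuotientGroup.mk 1) {a, f}
  refine ⟨Equiv.Perm Y, inferInstance, inferInstance, ψ, fun x hx => hf ?_⟩
  have h1 : ψ a y0 = y0 := by
    apply hi
    rw [hW a (by simp), h0]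
    show (QuotientGroup.mk (a * 1) : FreeGroup α ⧸ zpowers a) = QuotientGroup.mk 1
    rw [QuotientGroup.eq]; simp
  have h2 : ψ (a ^ x) y0 = y0 := by
    rw [map_zpow]
    exact Equiv.Perm.zpow_apply_eq_self_of_apply_eq_self h1 x
  have h3 := hW f (by simp)
  rw [hx, h2, h0] at h3
  have h4 : (QuotientGroup.mk 1 : FreeGroup α ⧸ zpowers a) = QuotientGroup.mk (f * 1) := h3
  rw [QuotientGroup.eq] at h4
  simpa using h4

theorem sepB1 {α : Type} (a b g : FreeGroup α) (m : ℕ) (hm : 0 < m) :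
    ∃ (Γ : Type) (_ : Group Γ) (_ : Finite Γ) (ψ : FreeGroup α →* Γ),
      ∀ x y : ℤ, ψ g = ψ (a ^ x * b ^ y) → ∃ x0 y0 : ℤ, (m : ℤ) ∣ x0 - x ∧ (m : ℤ) ∣ y0 - y ∧
        a ^ (-x0) * g * b ^ (-y0) ∈ closure {a ^ m, b ^ m} := by
  classical
  let H0 : Subgroup (FreeGroup α) := closure {a ^ m, b ^ m}
  let R : Finset (FreeGroup α) := (Finset.range m ×ˢ Finset.range m).image
    (fun p => a ^ (-(p.1 : ℤ)) * g * b ^ (-(p.2 : ℤ)))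
  obtain ⟨Y, _, ψ, i, y0, hi, h0, hW⟩ := trunc (S := FreeGroup α ⧸ H0)
    (QuotientGroup.mk 1) ({a ^ m, b ^ m} ∪ R)
  refine ⟨Equiv.Perm Y, inferInstance, inferInstance, ψ, fun x y hx => ?_⟩
  have hfix : ∀ w ∈ ({a ^ m, b ^ m} ∪ R : Finset (FreeGroup α)), ψ w y0 = y0 ↔ w ∈ H0 := by
    intro w hw
    have h1 : i (ψ w y0) = (QuotientGroup.mk (w * 1) : FreeGroup α ⧸ H0) := hW w hw
    rw [← hi.eq_iff, h1, h0, eq_comm, QuotientGroup.eq]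
    simp
  have ha : ψ (a ^ m) y0 = y0 := (hfix _ (by simp)).2 (subset_closure (by simp))
  have hb : ψ (b ^ m) y0 = y0 := (hfix _ (by simp)).2 (subset_closure (by simp))
  have hm' : (0 : ℤ) < m := by exact_mod_cast hm
  obtain ⟨x0, hx0⟩ := Int.eq_ofNat_of_zero_le (Int.emod_nonneg x hm'.ne')
  obtain ⟨z0, hz0⟩ := Int.eq_ofNat_of_zero_le (Int.emod_nonneg y hm'.ne')
  have hx1 := Int.emod_lt_of_pos x hm'
  have hz1 := Int.emod_lt_of_pos y hm'
  have hx2 := Int.mul_ediv_add_emod x m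
  have hz2 := Int.mul_ediv_add_emod y m
  refine ⟨x0, z0, ⟨-(x / m), by linarith⟩, ⟨-(y / m), by linarith⟩, ?_⟩
  refine (hfix _ ?_).1 ?_
  · apply Finset.mem_union_right
    apply Finset.mem_image.mpr
    refine ⟨(x0, z0), ?_, rfl⟩
    simp only [Finset.mem_product, Finset.mem_range]
    omega
  · have e1 : ψ (a ^ (-(x0 : ℤ)) * g * b ^ (-(z0 : ℤ)))
        = (ψ (a ^ m)) ^ (x / m) * (ψ (b ^ m)) ^ (y / m) := by
      rw [map_mul, map_mul, hx, ← map_zpow, ← map_zpow, ← map_mul, ← map_mul, ← map_mul]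
      congr 1
      have e2 : a ^ x = a ^ (x0 : ℤ) * (a ^ m) ^ (x / m) := by
        rw [← zpow_natCast a m, ← zpow_mul, ← zpow_add]
        congr 1
        have : (x0 : ℤ) = x % m := hx0.symm
        rw [this]; linarith
      have e3 : b ^ y = (b ^ m) ^ (y / m) * b ^ (z0 : ℤ) := by
        rw [← zpow_natCast b m, ← zpow_mul, ← zpow_add]
        congr 1
        have : (z0 : ℤ) = y % m := hz0.symm
        rw [this]; linarith
      rw [e2, e3]
      group
    rw [e1, Equiv.Perm.mul_apply, Equiv.Perm.zpow_apply_eq_self_of_apply_eq_self hb,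
      Equiv.Perm.zpow_apply_eq_self_of_apply_eq_self ha]

/-- pulling back membership in a closure along a free pair -/
theorem closure_pull {G : Type} [Group G] {a b : G} (h2 : Free2 a b) (m : ℕ) (W : FreeGroup Bool)
    (hW : FreeGroup.lift (fun i : Bool => cond i a b) W ∈ closure {a ^ m, b ^ m}) :
    W ∈ closure {FreeGroup.of true ^ m, FreeGroup.of false ^ m} := by
  have : closure {a ^ m, b ^ m} = Subgroup.map (FreeGroup.lift (fun i : Bool => cond i a b))
      (closure {FreeGroup.of true ^ m, FreeGroup.of false ^ m}) := by
    rw [MonoidHom.map_closure, Set.image_pair]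
    simp
  rw [this] at hW
  obtain ⟨w, hw, he⟩ := hW
  rwa [← h2 he]

theorem closure_kill {K : Type} [Group K] (θ : FreeGroup Bool →* K) (m : ℕ) (W : FreeGroup Bool)
    (hA : θ (FreeGroup.of true ^ m) = 1) (hB : θ (FreeGroup.of false ^ m) = 1)
    (hW : W ∈ closure {FreeGroup.of true ^ m, FreeGroup.of false ^ m}) : θ W = 1 := by
  have : closure {FreeGroup.of true ^ m, FreeGroup.of false ^ m} ≤ θ.ker := by
    rw [closure_le]
    rintro x (rfl | rfl)
    · exact hA
    · exact hB
  exact this hW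

/-- normal form of words in two letters -/
def NF2 (G : FreeGroup Bool) : Prop := ∃ (x y : ℤ) (L : List (ℤ × ℤ)),
  (∀ s ∈ L, s.1 ≠ 0 ∧ s.2 ≠ 0) ∧ G = FreeGroup.of true ^ x *
    (L.map fun s => FreeGroup.of false ^ s.1 * FreeGroup.of true ^ s.2).prod * FreeGroup.of false ^ y

theorem nf2_B (e : ℤ) (he : e ≠ 0) (G : FreeGroup Bool) (hG : NF2 G) :
    NF2 (FreeGroup.of false ^ e * G) := by
  obtain ⟨x, y, L, hL, rfl⟩ := hG
  by_cases hx : x = 0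
  · subst hx
    cases L with
    | nil => exact ⟨0, e + y, [], by simp, by simp [zpow_add]⟩
    | cons s L =>
      by_cases h0 : e + s.1 = 0
      · refine ⟨s.2, y, L, fun t ht => hL t (List.mem_cons_of_mem _ ht), ?_⟩
        rw [List.map_cons, List.prod_cons, zpow_zero, one_mul, ← mul_assoc, ← mul_assoc,
          ← mul_assoc, ← zpow_add, h0]
        simp
      · refine ⟨0, y, (e + s.1, s.2) :: L, ?_, ?_⟩
        · intro t ht
          rcases List.mem_cons.mp ht with rfl | ht
          · exact ⟨h0, (hL s (by simp)).2⟩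
          · exact hL t (List.mem_cons_of_mem _ ht)
        · simp [mul_assoc, zpow_add]
  · refine ⟨0, y, (e, x) :: L, ?_, ?_⟩
    · intro t ht
      rcases List.mem_cons.mp ht with rfl | ht
      · exact ⟨he, hx⟩
      · exact hL t ht
    · simp [mul_assoc]

theorem nf2_A (e : ℤ) (G : FreeGroup Bool) (hG : NF2 G) :
    NF2 (FreeGroup.of true ^ e * G) := by
  obtain ⟨x, y, L, hL, rfl⟩ := hG
  exact ⟨e + x, y, L, hL, by simp [mul_assoc, zpow_add]⟩

theorem nf2_all (G : FreeGroup Bool) : NF2 G := by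
  have : ∀ g : FreeGroup Bool, ∀ G, NF2 G → NF2 (g * G) := by
    intro g
    induction g using free_ind with
    | h1 => intro G hG; simpa using hG
    | ho x =>
      intro G hG
      cases x
      · simpa using nf2_B 1 (by norm_num) G hG
      · simpa using nf2_A 1 G hG
    | hi x =>
      intro G hG
      cases x
      · simpa using nf2_B (-1) (by norm_num) G hG
      · simpa using nf2_A (-1) G hG
    | hm g g' ih ih' => intro G hG; rw [mul_assoc]; exact ih _ (ih' _ hG)
  have h := this G 1 ⟨0, 0, [], by simp, by simp⟩
  simpa using h

open Polynomial in
noncomputable def shearA (R : Type) [CommRing R] : Equiv.Perm (R[X] × R[X]) where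
  toFun u := (u.1 + X * u.2, u.2)
  invFun u := (u.1 - X * u.2, u.2)
  left_inv u := by simp
  right_inv u := by simp

open Polynomial in
noncomputable def shearB (R : Type) [CommRing R] : Equiv.Perm (R[X] × R[X]) where
  toFun u := (u.1, u.2 + X * u.1)
  invFun u := (u.1, u.2 - X * u.1)
  left_inv u := by simp
  right_inv u := by simp

open Polynomial in
theorem shearA_zpow {R : Type} [CommRing R] (n : ℤ) : ∀ (u : R[X] × R[X]),
    (shearA R ^ n) u = (u.1 + C (n : R) * X * u.2, u.2) := by
  induction n using Int.induction_on with
  | zero => intro u; simp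
  | succ i ih =>
    intro u
    rw [zpow_add, zpow_one, Equiv.Perm.mul_apply, ih]
    ext1 <;> simp [shearA]; ring
  | pred i ih =>
    intro u
    rw [sub_eq_add_neg, zpow_add, zpow_neg_one, Equiv.Perm.mul_apply, ih]
    have : (shearA R)⁻¹ u = (u.1 - X * u.2, u.2) := rfl
    rw [this]
    ext1 <;> simp; ring

open Polynomial in
theorem shearB_zpow {R : Type} [CommRing R] (n : ℤ) : ∀ (u : R[X] × R[X]),
    (shearB R ^ n) u = (u.1, u.2 + C (n : R) * X * u.1) := by
  induction n using Int.induction_on with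
  | zero => intro u; simp
  | succ i ih =>
    intro u
    rw [zpow_add, zpow_one, Equiv.Perm.mul_apply, ih]
    ext1 <;> simp [shearB]; ring
  | pred i ih =>
    intro u
    rw [sub_eq_add_neg, zpow_add, zpow_neg_one, Equiv.Perm.mul_apply, ih]
    have : (shearB R)⁻¹ u = (u.1, u.2 - X * u.1) := rfl
    rw [this]
    ext1 <;> simp; ring

open Polynomial in
theorem shear_degree {R : Type} [Field R] (L : List (ℤ × ℤ))
    (hL : ∀ s ∈ L, (s.1 : R) ≠ 0 ∧ (s.2 : R) ≠ 0) :
    ∃ q s : R[X], (L.map fun s => shearB R ^ s.1 * shearA R ^ s.2).prod (0, 1) = (q, s) ∧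
      q.degree < s.degree ∧ s.degree = ((2 * L.length : ℕ) : WithBot ℕ) := by
  induction L with
  | nil => exact ⟨0, 1, by simp, by simp, by simp⟩
  | cons t L ih =>
    obtain ⟨q, s, h1, h2, h3⟩ := ih (fun s hs => hL s (List.mem_cons_of_mem _ hs))
    obtain ⟨hj, hi⟩ := hL t (by simp)
    set j : R := (t.1 : R)
    set i : R := (t.2 : R)
    have hq1 : q + C i * X * s = q + C i * X * s := rfl
    have hs0 : s ≠ 0 := by
      intro h; rw [h] at h2; simp at h2
    have hds : (C i * X * s).degree = 1 + s.degree := by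
      rw [degree_mul, degree_C_mul_X hi]
    have hlt : s.degree < 1 + s.degree := by
      rw [h3]; exact_mod_cast (by omega)
    have hq' : (q + C i * X * s).degree = 1 + s.degree := by
      rw [degree_add_eq_right_of_degree_lt, hds]
      rw [hds]; exact h2.trans hlt
    have hdq : (C j * X * (q + C i * X * s)).degree = 1 + (1 + s.degree) := by
      rw [degree_mul, degree_C_mul_X hj, hq']
    have hlt2 : 1 + s.degree < 1 + (1 + s.degree) := by
      rw [h3]; exact_mod_cast (by omega)
    have hs' : (s + C j * X * (q + C i * X * s)).degree = 1 + (1 + s.degree) := by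
      rw [degree_add_eq_right_of_degree_lt, hdq]
      rw [hdq]; exact hlt.trans hlt2
    refine ⟨q + C i * X * s, s + C j * X * (q + C i * X * s), ?_, ?_, ?_⟩
    · rw [List.map_cons, List.prod_cons, Equiv.Perm.mul_apply, Equiv.Perm.mul_apply, h1,
        shearA_zpow, shearB_zpow]
    · rw [hq', hs']; exact hlt2
    · rw [hs', h3]
      rw [List.length_cons]
      exact_mod_cast (by omega)

theorem sepB_free (G : FreeGroup Bool) (hG : ∀ p q : ℤ, G ≠ FreeGroup.of true ^ p * FreeGroup.of false ^ q) :
    ∃ m : ℕ, 0 < m ∧ ∀ x0 y0 : ℤ, FreeGroup.of true ^ (-x0) * G * FreeGroup.of false ^ (-y0) ∉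
      closure {FreeGroup.of true ^ m, FreeGroup.of false ^ m} := by
  obtain ⟨x, y, L, hL, rfl⟩ := nf2_all G
  have hne : L ≠ [] := by
    rintro rfl
    exact hG x y (by simp)
  have hbound : ∃ B : ℕ, ∀ s ∈ L, s.1.natAbs < B ∧ s.2.natAbs < B := by
    clear hG hL hne
    induction L with
    | nil => exact ⟨0, by simp⟩
    | cons s L ih =>
      obtain ⟨B, hB⟩ := ih
      refine ⟨B + s.1.natAbs + s.2.natAbs + 1, fun t ht => ?_⟩
      rcases List.mem_cons.mp ht with rfl | ht
      · omega
      · have := hB t ht; omega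
  obtain ⟨B, hB⟩ := hbound
  obtain ⟨p, hpB, hp⟩ := Nat.exists_infinite_primes B
  have : Fact p.Prime := ⟨hp⟩
  refine ⟨p, hp.pos, fun x0 y0 hmem => ?_⟩
  let θ : FreeGroup Bool →* Equiv.Perm _ :=
    FreeGroup.lift (fun i : Bool => cond i (shearA (ZMod p)) (shearB (ZMod p)))
  have hA : θ (FreeGroup.of true) = shearA (ZMod p) := by simp [θ]
  have hBB : θ (FreeGroup.of false) = shearB (ZMod p) := by simp [θ]
  have hk := closure_kill θ p _ (by
      rw [map_pow, hA, ← zpow_natCast]; ext1 u; rw [shearA_zpow]; simp) (by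
      rw [map_pow, hBB, ← zpow_natCast]; ext1 u; rw [shearB_zpow]; simp) hmem
  have hL' : ∀ s ∈ L, ((s.1 : ZMod p) ≠ 0 ∧ (s.2 : ZMod p) ≠ 0) := by
    have aux : ∀ n : ℤ, n ≠ 0 → n.natAbs < p → (n : ZMod p) ≠ 0 := by
      intro n hn hlt h
      rw [ZMod.intCast_zmod_eq_zero_iff_dvd, Int.natCast_dvd] at h
      have := Nat.le_of_dvd (by omega) h
      omega
    intro s hs
    have := hB s hs
    exact ⟨aux _ (hL s hs).1 (by omega), aux _ (hL s hs).2 (by omega)⟩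
  obtain ⟨q, s, h1, h2, h3⟩ := shear_degree (R := ZMod p) L hL'
  have hP : θ ((L.map fun s => FreeGroup.of false ^ s.1 * FreeGroup.of true ^ s.2).prod) =
      (L.map fun s => shearB (ZMod p) ^ s.1 * shearA (ZMod p) ^ s.2).prod := by
    rw [map_list_prod, List.map_map]
    congr 1
    apply List.map_congr_left
    intro s _
    simp [hA, hBB]
  simp only [map_mul, map_zpow, hP, hA, hBB] at hk
  have hk2 : (L.map fun s => shearB (ZMod p) ^ s.1 * shearA (ZMod p) ^ s.2).prod =
      shearA (ZMod p) ^ (x0 - x) * shearB (ZMod p) ^ (y0 - y) := by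
    set P := (L.map fun s => shearB (ZMod p) ^ s.1 * shearA (ZMod p) ^ s.2).prod
    have : P = shearA (ZMod p) ^ (x0 - x) * (shearA (ZMod p) ^ (-x0) * (shearA (ZMod p) ^ x * P *
      shearB (ZMod p) ^ y) * shearB (ZMod p) ^ (-y0)) * shearB (ZMod p) ^ (y0 - y) := by
      group
    rw [this, hk, mul_one]
  rw [hk2, Equiv.Perm.mul_apply, shearB_zpow, shearA_zpow] at h1
  simp at h1
  rw [← h1.2, Polynomial.degree_one] at h3
  have : 0 = 2 * L.length := by exact_mod_cast h3
  exact hne (List.length_eq_zero_iff.mp (by omega))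

theorem sepB {α : Type} {a : FreeGroup α} (ha : a ≠ 1) (hp : NotProperPower a)
    (f f' : FreeGroup α) (hf : f ∉ zpowers a) (M : ℕ) (hM : 0 < M) :
    ∃ (Γ : Type) (_ : Group Γ) (_ : Finite Γ) (ψ : FreeGroup α →* Γ),
      ∀ x y : ℤ, ψ f' = ψ (a ^ x * f * a ^ y) → ∃ x' y' : ℤ, (M : ℤ) ∣ x' - x ∧ (M : ℤ) ∣ y' - y ∧
        f' = a ^ x' * f * a ^ y' := by
  have h2 : Free2 a (f * a * f⁻¹) := free2_of_not_mem ha hp (conj_not_mem ha hp hf)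
  set b := f * a * f⁻¹ with hb
  have hbz : ∀ y : ℤ, b ^ y = f * a ^ y * f⁻¹ := fun y => by rw [hb, conj_zpow]
  have conv : ∀ x y : ℤ, f' * f⁻¹ = a ^ x * b ^ y ↔ f' = a ^ x * f * a ^ y := by
    intro x y
    rw [hbz, mul_inv_eq_iff_eq_mul]; simp [mul_assoc]
  have red : ∀ m : ℕ, 0 < m → ∃ (Γ : Type) (_ : Group Γ) (_ : Finite Γ) (ψ : FreeGroup α →* Γ),
      ∀ x y : ℤ, ψ f' = ψ (a ^ x * f * a ^ y) → ∃ x0 y0 : ℤ, (m : ℤ) ∣ x0 - x ∧ (m : ℤ) ∣ y0 - y ∧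
        a ^ (-x0) * (f' * f⁻¹) * b ^ (-y0) ∈ closure {a ^ m, b ^ m} := by
    intro m hm
    obtain ⟨Γ, g1, g2, ψ, hψ⟩ := sepB1 a b (f' * f⁻¹) m hm
    refine ⟨Γ, g1, g2, ψ, fun x y h => hψ x y ?_⟩
    rw [map_mul, h, ← map_mul, hbz]
    congr 1
    group
  by_cases hc : ∃ p q : ℤ, f' * f⁻¹ = a ^ p * b ^ q
  · obtain ⟨p, q, hpq⟩ := hc
    obtain ⟨Γ, g1, g2, ψ, hψ⟩ := red M hM
    refine ⟨Γ, g1, g2, ψ, fun x y h => ?_⟩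
    obtain ⟨x0, y0, h3, h4, h5⟩ := hψ x y h
    have h6 := closure_pull h2 M (FreeGroup.of true ^ (-x0 + p) * FreeGroup.of false ^ (q - y0)) (by
      rw [hpq] at h5
      convert h5 using 1
      simp only [map_mul, map_zpow, FreeGroup.lift_apply_of, cond_true, cond_false]
      rw [zpow_add, zpow_sub, zpow_neg b]; group)
    have hA := closure_kill (FreeGroup.lift (fun i : Bool => cond i
      (Multiplicative.ofAdd (1 : ZMod M)) 1)) M _ (by simp [← ofAdd_nsmul]) (by simp) h6
    have hB := closure_kill (FreeGroup.lift (fun i : Bool => cond i 1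
      (Multiplicative.ofAdd (1 : ZMod M)))) M _ (by simp) (by simp [← ofAdd_nsmul]) h6
    simp only [map_mul, map_zpow, FreeGroup.lift_apply_of, cond_true, cond_false, one_zpow,
      mul_one, one_mul, ← ofAdd_zsmul, ofAdd_eq_one, zsmul_one,
      ZMod.intCast_zmod_eq_zero_iff_dvd] at hA hB
    refine ⟨p, q, ?_, ?_, (conv p q).1 hpq⟩
    · rw [show p - x = (-x0 + p) + (x0 - x) by ring]
      exact dvd_add hA h3
    · rw [show q - y = (q - y0) + (y0 - y) by ring]
      exact dvd_add hB h4
  · by_cases hK : ∃ W, FreeGroup.lift (fun i : Bool => cond i a b) W = f' * f⁻¹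
    · obtain ⟨W, hW⟩ := hK
      obtain ⟨m, hm, hm2⟩ := sepB_free W (fun p q h => hc ⟨p, q, by rw [← hW, h]; simp⟩)
      obtain ⟨Γ, g1, g2, ψ, hψ⟩ := red m hm
      refine ⟨Γ, g1, g2, ψ, fun x y h => ?_⟩
      obtain ⟨x0, y0, h3, h4, h5⟩ := hψ x y h
      exfalso
      apply hm2 x0 y0
      apply closure_pull h2
      convert h5 using 1
      simp [hW]
    · obtain ⟨Γ, g1, g2, ψ, hψ⟩ := red 1 one_pos
      refine ⟨Γ, g1, g2, ψ, fun x y h => ?_⟩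
      obtain ⟨x0, y0, h3, h4, h5⟩ := hψ x y h
      exfalso
      apply hK
      have h6 : a ^ (-x0) * (f' * f⁻¹) * b ^ (-y0) ∈
          (FreeGroup.lift (fun i : Bool => cond i a b)).range := by
        refine (closure_le _).2 ?_ h5
        rintro z (rfl | rfl)
        · exact ⟨FreeGroup.of true, by simp⟩
        · exact ⟨FreeGroup.of false, by simp⟩
      obtain ⟨W, hW⟩ := h6
      refine ⟨FreeGroup.of true ^ x0 * W * FreeGroup.of false ^ y0, ?_⟩
      simp only [map_mul, map_zpow, FreeGroup.lift_apply_of, cond_true, cond_false, hW]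
      group

theorem sep {α : Type} {a : FreeGroup α} (ha : a ≠ 1) (hp : NotProperPower a)
    (S : Set (FreeGroup α)) (hfin : S.Finite) (hS : ∀ f ∈ S, f ∉ zpowers a) (M : ℕ) (hM : 0 < M) :
    ∃ (Γ : Type) (_ : Group Γ) (_ : Finite Γ) (ψ : FreeGroup α →* Γ),
      (∀ f ∈ S, ∀ x : ℤ, ψ f ≠ ψ (a ^ x)) ∧
      ∀ f ∈ S, ∀ f' ∈ S, ∀ x y : ℤ, ψ f' = ψ (a ^ x * f * a ^ y) →
        ∃ x' y' : ℤ, (M : ℤ) ∣ x' - x ∧ (M : ℤ) ∣ y' - y ∧ f' = a ^ x' * f * a ^ y' := by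
  have : Finite S := hfin
  obtain ⟨Γ1, _, _, ψ1, h1⟩ := combine (ι := S) (T := ℤ) (fun f _ => (f : FreeGroup α))
    (fun _ x => a ^ x) (fun _ _ => False) (fun f => sepA a f (hS f f.2))
  obtain ⟨Γ2, _, _, ψ2, h2⟩ := combine (ι := S × S) (T := ℤ × ℤ) (fun f _ => (f.2 : FreeGroup α))
    (fun f x => a ^ x.1 * f.1 * a ^ x.2) (fun f x => ∃ x' y' : ℤ, (M : ℤ) ∣ x' - x.1 ∧
      (M : ℤ) ∣ y' - x.2 ∧ (f.2 : FreeGroup α) = a ^ x' * f.1 * a ^ y')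
    (fun f => by
      obtain ⟨Γ, g1, g2, ψ, hψ⟩ := sepB ha hp f.1 f.2 (hS f.1 f.1.2) M hM
      exact ⟨Γ, g1, g2, ψ, fun t => hψ t.1 t.2⟩)
  refine ⟨Γ1 × Γ2, inferInstance, inferInstance, ψ1.prod ψ2, ?_, ?_⟩
  · intro f hf x h
    exact h1 ⟨f, hf⟩ x (congrArg Prod.fst h)
  · intro f hf f' hf' x y h
    exact h2 (⟨f, hf⟩, ⟨f', hf'⟩) (x, y) (congrArg Prod.snd h)


structure IsAmalg {F₁ F₂ H : Type} [Group F₁] [Group F₂] [Group H] (a : F₁) (b : F₂)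
    (ι₁ : F₁ →* H) (ι₂ : F₂ →* H) : Prop where
  comm : ι₁ a = ι₂ b
  lift : ∀ (K : Type) [Group K] (φ₁ : F₁ →* K) (φ₂ : F₂ →* K), φ₁ a = φ₂ b →
    ∃ Φ : H →* K, (∀ f, Φ (ι₁ f) = φ₁ f) ∧ (∀ h, Φ (ι₂ h) = φ₂ h)
  gen : closure (Set.range ι₁ ∪ Set.range ι₂) = ⊤

theorem IsAmalg.symm {F₁ F₂ H : Type} [Group F₁] [Group F₂] [Group H] {a : F₁} {b : F₂}
    {ι₁ : F₁ →* H} {ι₂ : F₂ →* H} (A : IsAmalg a b ι₁ ι₂) : IsAmalg b a ι₂ ι₁ where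
  comm := A.comm.symm
  lift K _ φ₂ φ₁ h := by
    obtain ⟨Φ, h1, h2⟩ := A.lift K φ₁ φ₂ h.symm
    exact ⟨Φ, h2, h1⟩
  gen := by rw [Set.union_comm]; exact A.gen

theorem orbit_coord {Y ι : Type} (s : Equiv.Perm Y) (n : ℕ) (hn : 0 < n)
    (hfree : ∀ y (k : ℤ), (s ^ k) y = y ↔ (n : ℤ) ∣ k) (A : ι → Y)
    (hA : ∀ i j, s.SameCycle (A i) (A j) → i = j) :
    ∃ (Q : Type) (E : Y ≃ Q × ZMod n) (q : ι → Q), Function.Injective q ∧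
      (∀ y, E (s y) = ((E y).1, (E y).2 + 1)) ∧ ∀ i, E (A i) = (q i, 0) := by
  classical
  have : NeZero n := ⟨hn.ne'⟩
  let Q := Quotient (Equiv.Perm.SameCycle.setoid s)
  let q : ι → Q := fun i => Quotient.mk _ (A i)
  have hq : Function.Injective q := fun i j h => hA i j (Quotient.exact h)
  let σ : Q → Y := fun x => if h : ∃ i, q i = x then A h.choose else x.out
  have hσ : ∀ x, Quotient.mk _ (σ x) = x := by
    intro x
    by_cases h : ∃ i, q i = x
    · simp only [σ, dif_pos h]; exact h.choose_spec
    · simp only [σ, dif_neg h]; exact Quotient.out_eq x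
  have hσq : ∀ i, σ (q i) = A i := by
    intro i
    have h : ∃ j, q j = q i := ⟨i, rfl⟩
    simp only [σ, dif_pos h]
    rw [hq h.choose_spec]
  have hval : ∀ (k : ℤ) (y : Y), (s ^ (((k : ZMod n).val : ℤ))) y = (s ^ k) y := by
    intro k y
    have h1 : (n : ℤ) ∣ ((k : ZMod n).val : ℤ) - k := by
      rw [ZMod.val_intCast]
      exact ⟨-(k / n), by have := Int.mul_ediv_add_emod k n; linarith⟩
    have h2 := (hfree ((s ^ k) y) _).2 h1
    rw [← Equiv.Perm.mul_apply, ← zpow_add, sub_add_cancel] at h2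
    exact h2
  let T : Q × ZMod n → Y := fun x => (s ^ (x.2.val : ℤ)) (σ x.1)
  have hmk : ∀ (y : Y) (k : ℤ), (Quotient.mk (Equiv.Perm.SameCycle.setoid s) ((s ^ k) y))
      = Quotient.mk _ y := by
    intro y k
    exact Quotient.sound (⟨-k, by rw [← Equiv.Perm.mul_apply, ← zpow_add]; simp⟩ : s.SameCycle _ _)
  have hT : Function.Bijective T := by
    constructor
    · rintro ⟨x, k⟩ ⟨x', k'⟩ h
      have h1 : x = x' := by
        have := congrArg (Quotient.mk (Equiv.Perm.SameCycle.setoid s)) h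
        simp only [T] at this
        rw [hmk, hmk, hσ, hσ] at this
        exact this
      subst h1
      have h2 : (s ^ ((k.val : ℤ) - k'.val)) (σ x) = σ x := by
        rw [sub_eq_neg_add, zpow_add, Equiv.Perm.mul_apply]
        have h' : (s ^ (k.val : ℤ)) (σ x) = (s ^ (k'.val : ℤ)) (σ x) := h
        rw [h', ← Equiv.Perm.mul_apply, ← zpow_add]; simp
      rw [hfree] at h2
      rw [← ZMod.intCast_zmod_eq_zero_iff_dvd] at h2
      push_cast at h2
      rw [ZMod.natCast_zmod_val, ZMod.natCast_zmod_val, sub_eq_zero] at h2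
      rw [h2]
    · intro y
      have h1 : s.SameCycle (σ (Quotient.mk _ y)) y := Quotient.exact (hσ (Quotient.mk _ y))
      obtain ⟨k, hk⟩ := h1
      refine ⟨(Quotient.mk _ y, (k : ZMod n)), ?_⟩
      simp only [T]
      rw [hval, hk]
  let E := Equiv.ofBijective T hT
  have hE : ∀ x, E x = T x := fun x => rfl
  refine ⟨Q, E.symm, q, hq, ?_, ?_⟩
  · intro y
    rw [Equiv.symm_apply_eq, hE]
    obtain ⟨⟨x, k⟩, rfl⟩ := E.surjective y
    rw [Equiv.symm_apply_apply, hE]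
    simp only [T]
    have : k + 1 = (((k.val : ℤ) + 1 : ℤ) : ZMod n) := by push_cast; rw [ZMod.natCast_zmod_val]
    rw [this, hval, add_comm, zpow_add, zpow_one, Equiv.Perm.mul_apply]
  · intro i
    rw [Equiv.symm_apply_eq, hE]
    simp [T, hσq]

theorem equiv_match {Y₁ Y₂ ι : Type} [Finite Y₁] (s : Equiv.Perm Y₁)
    (t : Equiv.Perm Y₂) (n : ℕ) (hn : 0 < n)
    (hs : ∀ y (k : ℤ), (s ^ k) y = y ↔ (n : ℤ) ∣ k)
    (ht : ∀ y (k : ℤ), (t ^ k) y = y ↔ (n : ℤ) ∣ k)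
    (e12 : Y₁ ≃ Y₂) (A : ι → Y₁) (B : ι → Y₂)
    (hA : ∀ i j, s.SameCycle (A i) (A j) → i = j)
    (hB : ∀ i j, t.SameCycle (B i) (B j) → i = j) :
    ∃ Θ : Y₁ ≃ Y₂, (∀ y, Θ (s y) = t (Θ y)) ∧ ∀ i, Θ (A i) = B i := by
  classical
  obtain ⟨Q₁, E₁, q₁, hq₁, hE₁, hA₁⟩ := orbit_coord s n hn hs A hA
  obtain ⟨Q₂, E₂, q₂, hq₂, hE₂, hA₂⟩ := orbit_coord t n hn ht B hB
  have : NeZero n := ⟨hn.ne'⟩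
  have : Finite Y₂ := Finite.of_equiv _ e12
  have f1 : Finite Q₁ := Finite.of_injective (fun x => E₁.symm (x, 0)) (fun x y h => by simpa using h)
  have f2 : Finite Q₂ := Finite.of_injective (fun x => E₂.symm (x, 0)) (fun x y h => by simpa using h)
  have hc : Nat.card Q₁ = Nat.card Q₂ := by
    have h1 := Nat.card_congr E₁
    have h2 := Nat.card_congr E₂
    have h3 := Nat.card_congr e12
    rw [Nat.card_prod, Nat.card_zmod] at h1 h2
    have : Nat.card Q₁ * n = Nat.card Q₂ * n := by omega
    exact Nat.eq_of_mul_eq_mul_right hn this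
  obtain ⟨e⟩ := Finite.card_eq.mp hc
  have hinj : Function.Injective (fun i => e (q₁ i)) := e.injective.comp hq₁
  let r := (((Equiv.ofInjective _ hinj).symm.trans (Equiv.ofInjective _ hq₂)) :
    {x // x ∈ Set.range (fun i => e (q₁ i))} ≃ {x // x ∈ Set.range q₂}).extendSubtype
  have hr : ∀ i, r (e (q₁ i)) = q₂ i := by
    intro i
    have hm : e (q₁ i) ∈ Set.range (fun i => e (q₁ i)) := ⟨i, rfl⟩
    simp only [r]
    rw [Equiv.extendSubtype_apply_of_mem _ _ hm]
    have : (Equiv.ofInjective _ hinj).symm ⟨e (q₁ i), hm⟩ = i := by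
      rw [Equiv.symm_apply_eq]; rfl
    simp only [Equiv.trans_apply]
    rw [this]; rfl
  refine ⟨(E₁.trans ((e.trans r).prodCongr (Equiv.refl _))).trans E₂.symm, ?_, ?_⟩
  · intro y
    simp only [Equiv.trans_apply, hE₁]
    rw [Equiv.symm_apply_eq, hE₂]
    simp
  · intro i
    simp only [Equiv.trans_apply, hA₁]
    rw [Equiv.symm_apply_eq, hA₂]
    simp [hr]

def lmul (Γ Z : Type) [Group Γ] : Γ →* Equiv.Perm (Γ × Z) where
  toFun g := (Equiv.mulLeft g).prodCongr (Equiv.refl Z)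
  map_one' := by ext x <;> simp
  map_mul' g h := by ext x <;> simp [mul_assoc]

@[simp] theorem lmul_apply {Γ Z : Type} [Group Γ] (g : Γ) (x : Γ × Z) :
    lmul Γ Z g x = (g * x.1, x.2) := rfl

theorem lmul_free {Γ Z : Type} [Group Γ] (g : Γ) (n : ℕ) (h : orderOf g = n) (y : Γ × Z) (k : ℤ) :
    ((lmul Γ Z g) ^ k) y = y ↔ (n : ℤ) ∣ k := by
  rw [← map_zpow, lmul_apply, ← h, orderOf_dvd_iff_zpow_eq_one]
  constructor
  · intro h; simpa using congrArg Prod.fst h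
  · intro h; simp [h]

theorem lmul_cycle {Γ Z : Type} [Group Γ] (g : Γ) (y z : Γ × Z) :
    (lmul Γ Z g).SameCycle y z ↔ y.2 = z.2 ∧ ∃ k : ℤ, g ^ k * y.1 = z.1 := by
  constructor
  · rintro ⟨k, hk⟩
    rw [← map_zpow, lmul_apply] at hk
    subst hk
    exact ⟨rfl, k, rfl⟩
  · rintro ⟨h, k, hk⟩
    exact ⟨k, by rw [← map_zpow, lmul_apply, hk, h]⟩

section
variable {F₁ F₂ H : Type} [Group F₁] [Group F₂] [Group H] {a : F₁} {b : F₂}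
    {ι₁ : F₁ →* H} {ι₂ : F₂ →* H}

theorem build_gen (A : IsAmalg a b ι₁ ι₂) {Γ₁ Γ₂ Z ι : Type} [Group Γ₁] [Group Γ₂]
    [Finite Γ₁] [Finite Γ₂] [Finite Z] (ψ₁ : F₁ →* Γ₁) (ψ₂ : F₂ →* Γ₂) 
    (hn : orderOf (ψ₁ a) = orderOf (ψ₂ b)) (U : ι → Γ₁ × Γ₂ × Z) (V : ι → Γ₂ × Γ₁ × Z)
    (hU : ∀ i j, (U i).2 = (U j).2 → ∀ k : ℤ, (ψ₁ a) ^ k * (U i).1 = (U j).1 → i = j)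
    (hV : ∀ i j, (V i).2 = (V j).2 → ∀ k : ℤ, (ψ₂ b) ^ k * (V i).1 = (V j).1 → i = j) :
    ∃ (Θ : Γ₁ × Γ₂ × Z ≃ Γ₂ × Γ₁ × Z) (Φ : H →* Equiv.Perm (Γ₁ × Γ₂ × Z)),
      (∀ i, Θ (U i) = V i) ∧ (∀ f x, Φ (ι₁ f) x = (ψ₁ f * x.1, x.2)) ∧
      (∀ h x, Θ (Φ (ι₂ h) x) = (ψ₂ h * (Θ x).1, (Θ x).2)) := by
  let n := orderOf (ψ₁ a)
  have hpos : 0 < n := orderOf_pos _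
  obtain ⟨Θ, h1, h2⟩ := equiv_match (lmul Γ₁ (Γ₂ × Z) (ψ₁ a)) (lmul Γ₂ (Γ₁ × Z) (ψ₂ b)) n hpos
    (lmul_free _ n rfl) (lmul_free _ n hn.symm)
    ⟨fun x => (x.2.1, x.1, x.2.2), fun x => (x.2.1, x.1, x.2.2), fun x => rfl, fun x => rfl⟩ U V
    (fun i j h => by
      rw [lmul_cycle] at h
      obtain ⟨h, k, hk⟩ := h
      exact hU i j h k hk)
    (fun i j h => by
      rw [lmul_cycle] at h
      obtain ⟨h, k, hk⟩ := h
      exact hV i j h k hk)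
  let c : Equiv.Perm (Γ₂ × Γ₁ × Z) ≃* Equiv.Perm (Γ₁ × Γ₂ × Z) := Θ.symm.permCongrHom
  have hc : ∀ σ x, Θ (c σ x) = σ (Θ x) := by
    intro σ x
    show Θ (Θ.symm (σ (Θ.symm.symm x))) = _
    simp
  obtain ⟨Φ, h3, h4⟩ := A.lift _ ((lmul Γ₁ (Γ₂ × Z)).comp ψ₁)
    (c.toMonoidHom.comp ((lmul Γ₂ (Γ₁ × Z)).comp ψ₂)) (by
      ext1 x
      apply Θ.injective
      show Θ (lmul Γ₁ (Γ₂ × Z) (ψ₁ a) x) = Θ (c (lmul Γ₂ (Γ₁ × Z) (ψ₂ b)) x)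
      rw [hc, h1])
  refine ⟨Θ, Φ, h2, ?_, ?_⟩
  · intro f x
    rw [h3]; rfl
  · intro h x
    rw [h4]
    show Θ (c (lmul Γ₂ (Γ₁ × Z) (ψ₂ h)) x) = _
    rw [hc]; rfl

/-- extension of a matching pair of finite quotients of the factors -/
theorem extend_pair (A : IsAmalg a b ι₁ ι₂) {Γ₁ Γ₂ : Type} [Group Γ₁] [Group Γ₂]
    [Finite Γ₁] [Finite Γ₂] (ψ₁ : F₁ →* Γ₁) (ψ₂ : F₂ →* Γ₂) 
    (hn : orderOf (ψ₁ a) = orderOf (ψ₂ b)) :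
    ∃ (X : Type) (_ : Finite X) (Φ : H →* Equiv.Perm X),
      (∀ f, orderOf (Φ (ι₁ f)) = orderOf (ψ₁ f)) ∧ (∀ h, orderOf (Φ (ι₂ h)) = orderOf (ψ₂ h)) := by
  obtain ⟨Θ, Φ, -, h1, h2⟩ := build_gen A (Z := Unit) (ι := Empty) ψ₁ ψ₂ hn Empty.elim Empty.elim
    (fun i => i.elim) (fun i => i.elim)
  have h3 : ∀ f, Φ (ι₁ f) = 1 ↔ ψ₁ f = 1 := by
    intro f
    constructor
    · intro h
      have := h1 f (1, 1, ())
      rw [h] at this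
      simpa using (congrArg Prod.fst this).symm
    · intro h
      ext1 x
      rw [h1, h]; simp
  have h4 : ∀ f, Φ (ι₂ f) = 1 ↔ ψ₂ f = 1 := by
    intro f
    constructor
    · intro h
      have := h2 f (Θ.symm (1, 1, ()))
      rw [h] at this
      simp at this
      exact this.symm
    · intro h
      ext1 x
      apply Θ.injective
      rw [h2, h]; simp
  refine ⟨_, inferInstance, Φ, fun f => ?_, fun f => ?_⟩
  · apply orderOf_eq_orderOf_iff.mpr
    intro k
    rw [← map_pow, ← map_pow, h3, map_pow]
  · apply orderOf_eq_orderOf_iff.mpr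
    intro k
    rw [← map_pow, ← map_pow, h4, map_pow]

/-- a circle in a finite permutation representation -/
structure Circ (ι₁ : F₁ →* H) (ι₂ : F₂ →* H) {X : Type} (Φ : H →* Equiv.Perm X) (k : ℕ)
    (f : ZMod k → F₁) (h : ZMod k → F₂) (ψ₁ : F₁ → Prop) (ψ₂ : F₂ → Prop)
    (p q : ZMod k → X) : Prop where
  pq : ∀ j, Φ (ι₁ (f j)) (p j) = q j
  qp : ∀ j, Φ (ι₂ (h j)) (q j) = p (j + 1)
  stab₁ : ∀ g i j, Φ (ι₁ g) (p j) = p i → i = j ∧ ψ₁ g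
  stab₂ : ∀ g i j, Φ (ι₂ g) (q j) = q i → i = j ∧ ψ₂ g

theorem build (A : IsAmalg a b ι₁ ι₂) {Γ₁ Γ₂ : Type} [Group Γ₁] [Group Γ₂]
    [Finite Γ₁] [Finite Γ₂] (ψ₁ : F₁ →* Γ₁) (ψ₂ : F₂ →* Γ₂) 
    (hn : orderOf (ψ₁ a) = orderOf (ψ₂ b)) (k : ℕ) [NeZero k] (f : ZMod k → F₁) (h : ZMod k → F₂)
    (hf : ∀ j, ∀ x : ℤ, ψ₁ (f j) ≠ ψ₁ (a ^ x)) (hh : ∀ j, ∀ x : ℤ, ψ₂ (h j) ≠ ψ₂ (b ^ x)) :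
    ∃ (X : Type) (_ : Finite X) (Φ : H →* Equiv.Perm X) (p q : ZMod k → X),
      Circ ι₁ ι₂ Φ k f h (fun g => ψ₁ g = 1) (fun g => ψ₂ g = 1) p q := by
  obtain ⟨Θ, Φ, h0, h1, h2⟩ := build_gen A (Z := ZMod k) (ι := ZMod k ⊕ ZMod k) ψ₁ ψ₂ hn
    (Sum.elim (fun j => (ψ₁ (f j), 1, j)) (fun j => (1, 1, j + 1)))
    (Sum.elim (fun j => (1, 1, j)) (fun j => (ψ₂ (h j), 1, j)))
    (by
      rintro (i | i) (j | j) he x hx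
      · simp at he; rw [he]
      · simp at he hx
        exact absurd (show ψ₁ (f i) = ψ₁ (a ^ (-x)) by
          rw [map_zpow, zpow_neg]; exact eq_inv_of_mul_eq_one_right hx) (hf i _)
      · simp at he hx
        exact absurd (show ψ₁ (f j) = ψ₁ (a ^ x) by rw [map_zpow, hx]) (hf j _)
      · simp at he; rw [he])
    (by
      rintro (i | i) (j | j) he x hx
      · simp at he; rw [he]
      · simp at he hx
        exact absurd (show ψ₂ (h j) = ψ₂ (b ^ x) by rw [map_zpow, hx]) (hh j _)
      · simp at he hx
        exact absurd (show ψ₂ (h i) = ψ₂ (b ^ (-x)) by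
          rw [map_zpow, zpow_neg]; exact eq_inv_of_mul_eq_one_right hx) (hh i _)
      · simp at he; rw [he])
  have e1 : ∀ j, Θ (ψ₁ (f j), 1, j) = (1, 1, j) := fun j => h0 (Sum.inl j)
  have e2 : ∀ j, Θ (1, 1, j + 1) = (ψ₂ (h j), 1, j) := fun j => h0 (Sum.inr j)
  refine ⟨_, inferInstance, Φ, fun j => (1, 1, j), fun j => (ψ₁ (f j), 1, j), ?_, ?_, ?_, ?_⟩
  · intro j; rw [h1]; simp
  · intro j
    apply Θ.injective
    rw [h2, e1, e2]; simp
  · intro g i j he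
    rw [h1] at he
    simp at he
    exact ⟨he.2.symm, he.1⟩
  · intro g i j he
    have := congrArg Θ he
    rw [h2, e1, e1] at this
    simp at this
    exact ⟨this.2.symm, this.1⟩
end


section
variable {F₁ F₂ H : Type} [Group F₁] [Group F₂] [Group H] {a : F₁} {b : F₂}
    {ι₁ : F₁ →* H} {ι₂ : F₂ →* H}

/-- partial products of the cyclic word, starting at position `j` -/
def wordU (ι₁ : F₁ →* H) (ι₂ : F₂ →* H) {k : ℕ} (f : ZMod k → F₁) (h : ZMod k → F₂)
    (j : ZMod k) : ℕ → H
  | 0 => 1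
  | n + 1 => ι₂ (h (j + n)) * ι₁ (f (j + n)) * wordU ι₁ ι₂ f h j n

theorem wordU_add {k : ℕ} (f : ZMod k → F₁) (h : ZMod k → F₂) (j : ZMod k) (m n : ℕ) :
    wordU ι₁ ι₂ f h j (m + n) = wordU ι₁ ι₂ f h (j + m) n * wordU ι₁ ι₂ f h j m := by
  induction n with
  | zero => simp [wordU]
  | succ n ih =>
    rw [← add_assoc, wordU, ih, wordU]
    push_cast
    simp [mul_assoc, add_assoc]

theorem wordU_conj {k : ℕ} [NeZero k] (f : ZMod k → F₁) (h : ZMod k → F₂) (j : ZMod k) :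
    IsConj (wordU ι₁ ι₂ f h j k) (wordU ι₁ ι₂ f h 0 k) := by
  have h1 := wordU_add (ι₁ := ι₁) (ι₂ := ι₂) f h 0 j.val k
  have h2 := wordU_add (ι₁ := ι₁) (ι₂ := ι₂) f h 0 k j.val
  rw [add_comm, h2] at h1
  simp at h1
  apply IsConj.symm
  rw [isConj_iff]
  exact ⟨wordU ι₁ ι₂ f h 0 j.val, by rw [h1]; simp⟩

theorem wordU_pow {k : ℕ} (f : ZMod k → F₁) (h : ZMod k → F₂) (j : ZMod k) (m : ℕ) :
    wordU ι₁ ι₂ f h j (k * m) = wordU ι₁ ι₂ f h j k ^ m := by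
  induction m with
  | zero => simp [wordU]
  | succ m ih =>
    rw [Nat.mul_succ, wordU_add, ih, pow_succ']
    simp

/-- reversed word -/
theorem wordU_rev {k : ℕ} (f : ZMod k → F₁) (h : ZMod k → F₂) (n : ℕ) :
    wordU ι₁ ι₂ (fun i : ZMod k => (f (-i))⁻¹) (fun i : ZMod k => (h (-i - 1))⁻¹) 0 n =
      ι₁ (f (-n)) * (wordU ι₁ ι₂ f h (-n) n)⁻¹ * (ι₁ (f 0))⁻¹ := by
  induction n with
  | zero => simp [wordU]
  | succ n ih =>
    rw [wordU, ih, add_comm n 1, wordU_add]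
    have e1 : (-((1 + n : ℕ) : ZMod k)) + ((1 : ℕ) : ZMod k) = -n := by push_cast; ring
    have e2 : (-((1 + n : ℕ) : ZMod k)) = -n - 1 := by push_cast; ring
    rw [e1, e2]
    simp [wordU, mul_assoc]

theorem wordU_rev_conj {k : ℕ} [NeZero k] (f : ZMod k → F₁) (h : ZMod k → F₂) :
    IsConj (wordU ι₁ ι₂ (fun i : ZMod k => (f (-i))⁻¹) (fun i : ZMod k => (h (-i - 1))⁻¹) 0 k)
      (wordU ι₁ ι₂ f h 0 k)⁻¹ := by
  rw [wordU_rev]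
  simp only [CharP.cast_eq_zero, neg_zero]
  apply IsConj.symm
  rw [isConj_iff]
  exact ⟨ι₁ (f 0), rfl⟩

def evl (ι₁ : F₁ →* H) (ι₂ : F₂ →* H) (L : List (F₂ × F₁)) : H :=
  (L.map fun s => ι₂ s.1 * ι₁ s.2).prod

theorem evl_append (L L' : List (F₂ × F₁)) :
    evl ι₁ ι₂ (L ++ L') = evl ι₁ ι₂ L * evl ι₁ ι₂ L' := by simp [evl]

theorem evl_cons (s) (L' : List (F₂ × F₁)) :
    evl ι₁ ι₂ (s :: L') = ι₂ s.1 * ι₁ s.2 * evl ι₁ ι₂ L' := by simp [evl]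

theorem evl_surj (A : IsAmalg a b ι₁ ι₂) (g : H) : ∃ L, evl ι₁ ι₂ L = g := by
  have hg : g ∈ closure (Set.range ι₁ ∪ Set.range ι₂) := by rw [A.gen]; trivial
  induction hg using closure_induction with
  | mem x hx =>
    rcases hx with ⟨f, rfl⟩ | ⟨h, rfl⟩
    · exact ⟨[(1, f)], by simp [evl]⟩
    · exact ⟨[(h, 1)], by simp [evl]⟩
  | one => exact ⟨[], by simp [evl]⟩
  | mul x y _ _ hx hy =>
    obtain ⟨L, rfl⟩ := hx
    obtain ⟨L', rfl⟩ := hy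
    exact ⟨L ++ L', evl_append L L'⟩
  | inv x hxm hx =>
    obtain ⟨L, rfl⟩ := hx
    clear hxm
    induction L with
    | nil => exact ⟨[], by simp [evl]⟩
    | cons s L ih =>
      obtain ⟨L', hL'⟩ := ih
      refine ⟨L' ++ [(1, s.2⁻¹), (s.1⁻¹, 1)], ?_⟩
      rw [evl_append, hL', evl_cons]
      simp [evl]

theorem A_zpow (A : IsAmalg a b ι₁ ι₂) (c : ℤ) : ι₁ (a ^ c) = ι₂ (b ^ c) := by
  rw [map_zpow, map_zpow, A.comm]

theorem evl_rot (L L' : List (F₂ × F₁)) : IsConj (evl ι₁ ι₂ (L ++ L')) (evl ι₁ ι₂ (L' ++ L)) := by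
  rw [evl_append, evl_append, isConj_iff]
  exact ⟨(evl ι₁ ι₂ L)⁻¹, by group⟩

theorem classify (A : IsAmalg a b ι₁ ι₂) (g : H) :
    (∃ f, IsConj g (ι₁ f)) ∨ (∃ h, IsConj g (ι₂ h)) ∨
    ∃ (k : ℕ) (_ : NeZero k) (f : ZMod k → F₁) (h : ZMod k → F₂),
      (∀ j, f j ∉ zpowers a) ∧ (∀ j, h j ∉ zpowers b) ∧ IsConj g (wordU ι₁ ι₂ f h 0 k) := by
  classical
  have hex : ∃ n, ∃ L : List (F₂ × F₁), L.length = n ∧ IsConj g (evl ι₁ ι₂ L) := by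
    obtain ⟨L, hL⟩ := evl_surj A g
    exact ⟨_, L, rfl, by rw [hL]⟩
  obtain ⟨L, hlen, hconj⟩ := Nat.find_spec hex
  have hmin : ∀ L' : List (F₂ × F₁), IsConj g (evl ι₁ ι₂ L') → L.length ≤ L'.length := by
    intro L' h
    rw [hlen]
    exact Nat.find_min' hex ⟨L', rfl, h⟩
  by_cases hf : ∃ s ∈ L, s.2 ∈ zpowers a
  · obtain ⟨s, hs, hsa⟩ := hf
    obtain ⟨c, hc⟩ := mem_zpowers_iff.mp hsa
    obtain ⟨l1, l2, rfl⟩ := List.append_of_mem hs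
    have h1 := hconj.trans (evl_rot l1 (s :: l2))
    have hl : (l2 ++ l1).length + 1 = (l1 ++ s :: l2).length := by simp; omega
    rw [List.cons_append] at h1
    rcases hl' : l2 ++ l1 with _ | ⟨t, m⟩
    · right; left
      refine ⟨s.1 * b ^ c, ?_⟩
      rw [hl', evl_cons, ← hc, A_zpow A] at h1
      simpa [evl] using h1
    · exfalso
      rw [hl', evl_cons, evl_cons, ← hc, A_zpow A] at h1
      have := hmin ((s.1 * b ^ c * t.1, t.2) :: m) (by
        rw [evl_cons]; simpa [mul_assoc] using h1)
      rw [← hl, hl'] at this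
      simp at this
  by_cases hh : ∃ s ∈ L, s.1 ∈ zpowers b
  · obtain ⟨s, hs, hsa⟩ := hh
    obtain ⟨c, hc⟩ := mem_zpowers_iff.mp hsa
    obtain ⟨l1, l2, rfl⟩ := List.append_of_mem hs
    have h0 := hconj.trans (evl_rot l1 (s :: l2))
    have hl : (l2 ++ l1).length + 1 = (l1 ++ s :: l2).length := by simp; omega
    rw [List.cons_append] at h0
    rcases List.eq_nil_or_concat (l2 ++ l1) with hl' | ⟨m, t, hl'⟩
    · left
      refine ⟨a ^ c * s.2, ?_⟩
      rw [hl', evl_cons, ← hc, ← A_zpow A] at h0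
      simpa [evl] using h0
    · exfalso
      have h1 : IsConj g (evl ι₁ ι₂ (t :: s :: m)) := by
        rw [hl', List.concat_eq_append] at h0
        exact h0.trans (evl_rot (s :: m) [t])
      rw [evl_cons, evl_cons, ← hc, ← A_zpow A] at h1
      have := hmin ((t.1, t.2 * a ^ c * s.2) :: m) (by
        rw [evl_cons]; simpa [mul_assoc] using h1)
      rw [← hl, hl'] at this
      simp at this
  push Not at hf hh
  by_cases h0 : L = []
  · left; exact ⟨1, by rw [h0] at hconj; simpa [evl] using hconj⟩
  right; right
  let R := L.reverse
  have hR : R.length = L.length := List.length_reverse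
  have hk : NeZero R.length := ⟨by rw [hR]; simpa using h0⟩
  refine ⟨R.length, hk, fun j => (R[j.val]'(ZMod.val_lt j)).2, fun j => (R[j.val]'(ZMod.val_lt j)).1,
    fun j => hf _ (List.mem_reverse.mp (List.getElem_mem _)),
    fun j => hh _ (List.mem_reverse.mp (List.getElem_mem _)), ?_⟩
  have key : ∀ n, n ≤ R.length → wordU ι₁ ι₂ (fun j : ZMod R.length => (R[j.val]'(ZMod.val_lt j)).2)
      (fun j : ZMod R.length => (R[j.val]'(ZMod.val_lt j)).1) 0 n = evl ι₁ ι₂ (R.take n).reverse := by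
    intro n
    induction n with
    | zero => simp [wordU, evl]
    | succ n ih =>
      intro hn
      rw [wordU, ih (by omega), List.take_add_one, List.getElem?_eq_getElem (by omega)]
      have : (0 + (n : ZMod R.length)).val = n := by
        rw [zero_add, ZMod.val_natCast, Nat.mod_eq_of_lt (by omega)]
      simp only [this]
      simp only [Option.toList_some, List.reverse_append, List.reverse_cons, List.reverse_nil,
        List.nil_append, List.singleton_append]
      rw [evl_cons]
  rw [key _ le_rfl, List.take_length]
  simp only [R, List.reverse_reverse]
  exact hconj
end


section
variable {F₁ F₂ H : Type} [Group F₁] [Group F₂] [Group H] {a : F₁} {b : F₂}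
    {ι₁ : F₁ →* H} {ι₂ : F₂ →* H}

theorem eq_of_congr {M : ℕ} {x y : ℤ} (hx : 2 * |x| < M) (hy : 2 * |y| < M)
    (h : (M : ℤ) ∣ x - y) : x = y := by
  by_contra hne
  have h1 : 0 < |x - y| := abs_pos.mpr (sub_ne_zero.mpr hne)
  have h2 : (M : ℤ) ≤ |x - y| := Int.le_of_dvd h1 ((dvd_abs _ _).mpr h)
  have h3 := abs_sub x y
  have h4 := abs_sub_abs_le_abs_sub x y
  have : |x - y| ≤ |x| + |y| := by
    simpa using abs_sub x y
  omega

/-- data needed to recognize one word along the circle of another -/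
structure MD {Γ₁ Γ₂ : Type} [Group Γ₁] [Group Γ₂] (a : F₁) (b : F₂) (M : ℕ) (ψ₁ : F₁ →* Γ₁)
    (ψ₂ : F₂ →* Γ₂) {k l : ℕ} (f : ZMod k → F₁) (h : ZMod k → F₂) (f' : ZMod l → F₁)
    (h' : ZMod l → F₂) : Prop where
  α₁ : ∀ i, ∀ x : ℤ, ψ₁ (f' i) ≠ ψ₁ (a ^ x)
  α₂ : ∀ i, ∀ x : ℤ, ψ₂ (h' i) ≠ ψ₂ (b ^ x)
  β₁ : ∀ i j, ∀ x y : ℤ, ψ₁ (f' i) = ψ₁ (a ^ x * f j * a ^ y) →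
    ∃ x' y' : ℤ, (M : ℤ) ∣ x' - x ∧ (M : ℤ) ∣ y' - y ∧ f' i = a ^ x' * f j * a ^ y'
  β₂ : ∀ i j, ∀ x y : ℤ, ψ₂ (h' i) = ψ₂ (b ^ x * h j * b ^ y) →
    ∃ x' y' : ℤ, (M : ℤ) ∣ x' - x ∧ (M : ℤ) ∣ y' - y ∧ h' i = b ^ x' * h j * b ^ y'
  bd₁ : ∀ i j, ∀ x y : ℤ, f' i = a ^ x * f j * a ^ y → 2 * |x| < M ∧ 2 * |y| < M
  bd₂ : ∀ i j, ∀ x y : ℤ, h' i = b ^ x * h j * b ^ y → 2 * |x| < M ∧ 2 * |y| < M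
  un₁ : ∀ j, ∀ x y x' y' : ℤ, a ^ x * f j * a ^ y = a ^ x' * f j * a ^ y' → x = x' ∧ y = y'

theorem match_fwd (A : IsAmalg a b ι₁ ι₂) {Γ₁ Γ₂ X : Type} [Group Γ₁] [Group Γ₂] {M : ℕ}
    {ψ₁ : F₁ →* Γ₁} {ψ₂ : F₂ →* Γ₂} {k l : ℕ} [NeZero k] [NeZero l]
    {f : ZMod k → F₁} {h : ZMod k → F₂}
    {f' : ZMod l → F₁} {h' : ZMod l → F₂} (D : MD a b M ψ₁ ψ₂ f h f' h')
    {Φ : H →* Equiv.Perm X} {p q : ZMod k → X}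
    (C : Circ ι₁ ι₂ Φ k f h (fun g => ψ₁ g = 1) (fun g => ψ₂ g = 1) p q)
    (x : X)
    (hz : ∀ n, (∃ (c : ℤ) (j : _), Φ (wordU ι₁ ι₂ f' h' 0 n) x = Φ (ι₁ (a ^ c)) (p j)) ∨
      (∃ (c : ℤ) (j : _), Φ (wordU ι₁ ι₂ f' h' 0 n) x = Φ (ι₁ (a ^ c)) (q j)))
    (hw : ∀ n : ℕ, (∃ (c : ℤ) (j : _), Φ (ι₁ (f' n) * wordU ι₁ ι₂ f' h' 0 n) x = Φ (ι₁ (a ^ c)) (p j)) ∨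
      (∃ (c : ℤ) (j : _), Φ (ι₁ (f' n) * wordU ι₁ ι₂ f' h' 0 n) x = Φ (ι₁ (a ^ c)) (q j)))
    (c₀ : ℤ) (j : ZMod k) (h0 : x = Φ (ι₁ (a ^ c₀)) (p j)) :
    IsConj (wordU ι₁ ι₂ f h 0 k ^ l) (wordU ι₁ ι₂ f' h' 0 l ^ k) ∧
    (k = l → IsConj (wordU ι₁ ι₂ f h 0 k) (wordU ι₁ ι₂ f' h' 0 l)) := by
  have stepw : ∀ (n : ℕ) (c : ℤ) (m : ZMod k), Φ (wordU ι₁ ι₂ f' h' 0 n) x = Φ (ι₁ (a ^ c)) (p m) →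
      ∃ d : ℤ, Φ (ι₁ (f' n) * wordU ι₁ ι₂ f' h' 0 n) x = Φ (ι₁ (a ^ d)) (q m) := by
    intro n c m hc
    rcases hw n with ⟨d, i, hd⟩ | ⟨d, i, hd⟩
    · exfalso
      rw [map_mul, Equiv.Perm.mul_apply, hc] at hd
      have := C.stab₁ (a ^ (-d) * f' n * a ^ c) i m (by
        simp only [map_mul, Equiv.Perm.mul_apply]
        rw [hd, ← Equiv.Perm.mul_apply, ← map_mul, ← map_mul, ← zpow_add]; simp)
      apply D.α₁ n (d - c)
      have h2 := this.2
      simp only [map_mul, map_zpow] at h2 ⊢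
      rw [sub_eq_add_neg, zpow_add, zpow_neg (ψ₁ a) c, eq_mul_inv_iff_mul_eq]
      rw [zpow_neg, mul_assoc, inv_mul_eq_one] at h2
      exact h2.symm
    · refine ⟨d, ?_⟩
      rw [map_mul, Equiv.Perm.mul_apply, hc, ← C.pq] at hd
      have := C.stab₁ ((f i)⁻¹ * a ^ (-d) * f' n * a ^ c) i m (by
        simp only [map_mul, Equiv.Perm.mul_apply]
        rw [hd]
        simp)
      rw [map_mul, Equiv.Perm.mul_apply, hc, hd, this.1, C.pq]
  have stepz : ∀ (n : ℕ) (d : ℤ) (m : ZMod k),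
      Φ (ι₁ (f' n) * wordU ι₁ ι₂ f' h' 0 n) x = Φ (ι₁ (a ^ d)) (q m) →
      ∃ e : ℤ, Φ (wordU ι₁ ι₂ f' h' 0 (n + 1)) x = Φ (ι₁ (a ^ e)) (p (m + 1)) := by
    intro n d m hd
    have hz' := hz (n + 1)
    rw [wordU, mul_assoc, zero_add, map_mul, Equiv.Perm.mul_apply, hd] at hz' ⊢
    rcases hz' with ⟨e, i, he⟩ | ⟨e, i, he⟩
    · refine ⟨e, ?_⟩
      obtain ⟨i, rfl⟩ : ∃ i', i = i' + 1 := ⟨i - 1, by ring⟩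
      rw [← C.qp, A_zpow A, A_zpow A] at he
      have := C.stab₂ ((h i)⁻¹ * b ^ (-e) * h' n * b ^ d) i m (by
        simp only [map_mul, Equiv.Perm.mul_apply]
        rw [he]
        simp)
      rw [A_zpow A, he, A_zpow A, this.1, C.qp]
    · exfalso
      rw [A_zpow A, A_zpow A] at he
      have := C.stab₂ (b ^ (-e) * h' n * b ^ d) i m (by
        simp only [map_mul, Equiv.Perm.mul_apply]
        rw [he, ← Equiv.Perm.mul_apply, ← map_mul, ← map_mul, ← zpow_add]; simp)
      apply D.α₂ n (e - d)
      have h2 := this.2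
      simp only [map_mul, map_zpow] at h2 ⊢
      rw [sub_eq_add_neg, zpow_add, zpow_neg (ψ₂ b) d, eq_mul_inv_iff_mul_eq]
      rw [zpow_neg, mul_assoc, inv_mul_eq_one] at h2
      exact h2.symm
  have hzc : ∀ n : ℕ, ∃ c : ℤ, Φ (wordU ι₁ ι₂ f' h' 0 n) x = Φ (ι₁ (a ^ c)) (p (j + n)) := by
    intro n
    induction n with
    | zero => exact ⟨c₀, by simpa [wordU] using h0⟩
    | succ n ih =>
      obtain ⟨c, hc⟩ := ih
      obtain ⟨d, hd⟩ := stepw n c _ hc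
      obtain ⟨e, he⟩ := stepz n d _ hd
      exact ⟨e, by rw [he]; push_cast; rw [add_assoc]⟩
  choose c hc using hzc
  have hwd : ∀ n : ℕ, ∃ d : ℤ, Φ (ι₁ (f' n) * wordU ι₁ ι₂ f' h' 0 n) x = Φ (ι₁ (a ^ d)) (q (j + n)) :=
    fun n => stepw n _ _ (hc n)
  choose d hd using hwd
  have hf : ∀ n : ℕ, ∃ ξ η : ℤ, (M : ℤ) ∣ ξ - d n ∧ (M : ℤ) ∣ η - (- c n) ∧
      f' n = a ^ ξ * f (j + n) * a ^ η := by
    intro n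
    apply D.β₁
    have hd' := hd n
    rw [map_mul, Equiv.Perm.mul_apply, hc, ← C.pq] at hd'
    have := C.stab₁ ((f (j + n))⁻¹ * a ^ (- d n) * f' n * a ^ c n) (j + n) (j + n) (by
        simp only [map_mul, Equiv.Perm.mul_apply]
        rw [hd']
        simp)
    have h2 := this.2
    simp only [map_mul, map_zpow, map_inv, zpow_neg] at h2 ⊢
    rw [mul_assoc, mul_assoc, inv_mul_eq_one, eq_inv_mul_iff_mul_eq] at h2
    rw [h2]; simp
  have hh : ∀ n : ℕ, ∃ ξ η : ℤ, (M : ℤ) ∣ ξ - c (n + 1) ∧ (M : ℤ) ∣ η - (- d n) ∧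
      h' n = b ^ ξ * h (j + n) * b ^ η := by
    intro n
    apply D.β₂
    have hd' := hc (n + 1)
    rw [wordU, mul_assoc, zero_add, map_mul, Equiv.Perm.mul_apply, hd, A_zpow A, A_zpow A] at hd'
    push_cast at hd'
    rw [← add_assoc, ← C.qp] at hd'
    have := C.stab₂ ((h (j + n))⁻¹ * b ^ (- c (n + 1)) * h' n * b ^ d n) (j + n) (j + n) (by
        simp only [map_mul, Equiv.Perm.mul_apply]
        rw [hd']
        simp)
    have h2 := this.2
    simp only [map_mul, map_zpow, map_inv, zpow_neg] at h2 ⊢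
    rw [mul_assoc, mul_assoc, inv_mul_eq_one, eq_inv_mul_iff_mul_eq] at h2
    rw [h2]; simp
  choose ξ η hξ hη hf using hf
  choose ζ θ hζ hθ hh using hh
  have E1 : ∀ n, ξ n = - θ n := by
    intro n
    apply eq_of_congr (D.bd₁ _ _ _ _ (hf n)).1
      (by rw [abs_neg]; exact (D.bd₂ _ _ _ _ (hh n)).2)
    have e : ξ n - -θ n = (ξ n - d n) + (θ n - - d n) := by ring
    rw [e]; exact dvd_add (hξ n) (hθ n)
  have E2 : ∀ n, ζ n = - η (n + 1) := by
    intro n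
    apply eq_of_congr (D.bd₂ _ _ _ _ (hh n)).1
      (by rw [abs_neg]; exact (D.bd₁ _ _ _ _ (hf (n + 1))).2)
    have e : ζ n - -η (n + 1) = (ζ n - c (n + 1)) + (η (n + 1) - - c (n + 1)) := by ring
    rw [e]; exact dvd_add (hζ n) (hη (n + 1))
  have hV : ∀ n, wordU ι₁ ι₂ f' h' 0 n =
      ι₁ (a ^ (- η n)) * wordU ι₁ ι₂ f h j n * ι₁ (a ^ η 0) := by
    intro n
    induction n with
    | zero => simp [wordU]
    | succ n ih =>
      rw [wordU, ih, wordU, zero_add, hf n, hh n, E1, E2]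
      simp only [map_mul, ← A_zpow A]
      simp only [map_zpow, zpow_neg]
      simp [mul_assoc]
  have hper : ∀ m : ℕ, (k : ℕ) ∣ m → l ∣ m → η m = η 0 := by
    intro m h1 h2
    have e1 : (m : ZMod k) = 0 := (ZMod.natCast_eq_zero_iff m k).mpr h1
    have e2 : (m : ZMod l) = 0 := (ZMod.natCast_eq_zero_iff m l).mpr h2
    have h3 := hf m
    have h4 := hf 0
    rw [e1, e2] at h3
    simp only [Nat.cast_zero] at h4
    rw [h3] at h4
    exact (D.un₁ _ _ _ _ _ h4).2
  have hfin : ∀ m : ℕ, (k : ℕ) ∣ m → l ∣ m →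
      IsConj (wordU ι₁ ι₂ f h j m) (wordU ι₁ ι₂ f' h' 0 m) := by
    intro m h1 h2
    rw [isConj_iff]
    refine ⟨ι₁ (a ^ (-η 0)), ?_⟩
    rw [hV m, hper m h1 h2]
    simp
  constructor
  · have h1 := hfin (k * l) (dvd_mul_right _ _) (dvd_mul_left _ _)
    rw [wordU_pow] at h1
    rw [mul_comm k l, wordU_pow] at h1
    exact ((wordU_conj f h j).pow l).symm.trans h1
  · rintro rfl
    exact (wordU_conj f h j).symm.trans (hfin k dvd_rfl dvd_rfl)

/-- reversing a circle -/
theorem Circ.rev {Γ₁ Γ₂ X : Type} [Group Γ₁] [Group Γ₂] 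
    {ψ₁ : F₁ →* Γ₁} {ψ₂ : F₂ →* Γ₂} {k : ℕ} [NeZero k]
    {f : ZMod k → F₁} {h : ZMod k → F₂}
    {Φ : H →* Equiv.Perm X} {p q : ZMod k → X}
    (C : Circ ι₁ ι₂ Φ k f h (fun g => ψ₁ g = 1) (fun g => ψ₂ g = 1) p q) :
    Circ ι₁ ι₂ Φ k (fun i => (f (-i))⁻¹) (fun i => (h (-i - 1))⁻¹)
      (fun g => ψ₁ g = 1) (fun g => ψ₂ g = 1) (fun i => q (-i)) (fun i => p (-i)) := by
  constructor
  · intro j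
    rw [← C.pq]; simp
  · intro j
    have := C.qp (-j - 1)
    rw [sub_add_cancel] at this
    rw [← this]
    simp [neg_add]
    congr 1; ring
  · intro g i j hg
    rw [← C.pq, ← C.pq] at hg
    have := C.stab₁ ((f (-i))⁻¹ * g * f (-j)) (-i) (-j) (by
      simp only [map_mul, Equiv.Perm.mul_apply]; rw [hg]; simp)
    have h1 := neg_injective this.1
    refine ⟨h1, ?_⟩
    have h2 := this.2
    rw [h1] at h2
    simp only [map_mul, map_inv] at h2
    rw [mul_assoc, inv_mul_eq_one] at h2
    exact (mul_eq_right.mp h2.symm)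
  · intro g i j hg
    have e := C.qp (-j - 1)
    rw [sub_add_cancel] at e
    have e' := C.qp (-i - 1)
    rw [sub_add_cancel] at e'
    rw [← e, ← e'] at hg
    have := C.stab₂ ((h (-i - 1))⁻¹ * g * h (-j - 1)) (-i - 1) (-j - 1) (by
      simp only [map_mul, Equiv.Perm.mul_apply]; rw [hg]; simp)
    have h1 := neg_injective (sub_left_injective this.1)
    refine ⟨h1, ?_⟩
    have h2 := this.2
    rw [h1] at h2
    simp only [map_mul, map_inv] at h2
    rw [mul_assoc, inv_mul_eq_one] at h2
    exact (mul_eq_right.mp h2.symm)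
end


theorem exp_bound {α : Type} {a : FreeGroup α} (ha : a ≠ 1) (hp : NotProperPower a)
    (S : Set (FreeGroup α)) (hfin : S.Finite) (hS : ∀ f ∈ S, f ∉ zpowers a) :
    ∃ M : ℕ, ∀ f ∈ S, ∀ f' ∈ S, ∀ x y : ℤ, f' = a ^ x * f * a ^ y → 2 * |x| < M ∧ 2 * |y| < M := by
  have h1 : ∀ s : FreeGroup α × FreeGroup α, ∃ m : ℕ, s.1 ∈ S → ∀ x y : ℤ,
      s.2 = a ^ x * s.1 * a ^ y → 2 * |x| < m ∧ 2 * |y| < m := by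
    intro s
    by_cases he : s.1 ∈ S ∧ ∃ x y : ℤ, s.2 = a ^ x * s.1 * a ^ y
    · obtain ⟨hs, x, y, hxy⟩ := he
      refine ⟨(2 * |x| + 2 * |y| + 1).toNat, fun _ x' y' h' => ?_⟩
      rw [hxy] at h'
      obtain ⟨rfl, rfl⟩ := double_unique ha hp (hS _ hs) h'
      have := abs_nonneg x
      have := abs_nonneg y
      omega
    · refine ⟨0, fun hs x y h => absurd ⟨hs, x, y, h⟩ he⟩
  choose m hm using h1
  obtain ⟨M, hM⟩ := ((hfin.prod hfin).image m).bddAbove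
  refine ⟨M, fun f hf f' hf' x y h => ?_⟩
  have h2 := hm (f, f') hf x y h
  have h3 : m (f, f') ≤ M := hM ⟨(f, f'), ⟨hf, hf'⟩, rfl⟩
  omega

/-- separation package for one factor -/
structure Pk {F Γ : Type} [Group F] [Group Γ] (a : F) (S : Set F) (M : ℕ) (ψ : F →* Γ) : Prop where
  α : ∀ f ∈ S, ∀ x : ℤ, ψ f ≠ ψ (a ^ x)
  β : ∀ f ∈ S, ∀ f' ∈ S, ∀ x y : ℤ, ψ f' = ψ (a ^ x * f * a ^ y) →
    ∃ x' y' : ℤ, (M : ℤ) ∣ x' - x ∧ (M : ℤ) ∣ y' - y ∧ f' = a ^ x' * f * a ^ y'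

theorem Pk.prod {F Γ Γ' : Type} [Group F] [Group Γ] [Group Γ'] {a : F} {S : Set F} {M : ℕ}
    {ψ : F →* Γ} (P : Pk a S M ψ) (χ : F →* Γ') : Pk a S M (ψ.prod χ) := by
  constructor
  · intro f hf x h
    exact P.α f hf x (congrArg Prod.fst h)
  · intro f hf f' hf' x y h
    exact P.β f hf f' hf' x y (congrArg Prod.fst h)

theorem prepS {α β : Type} {a : FreeGroup α} {b : FreeGroup β} (ha : a ≠ 1) (hb : b ≠ 1)
    (hpa : NotProperPower a) (hpb : NotProperPower b)
    (S : Set (FreeGroup α)) (hfin : S.Finite) (hS : ∀ f ∈ S, f ∉ zpowers a)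
    (T : Set (FreeGroup β)) (hfinT : T.Finite) (hT : ∀ f ∈ T, f ∉ zpowers b) :
    ∃ (M : ℕ) (Γ₁ Γ₂ : Type) (_ : Group Γ₁) (_ : Group Γ₂) (_ : Finite Γ₁) (_ : Finite Γ₂)
      (ψ₁ : FreeGroup α →* Γ₁) (ψ₂ : FreeGroup β →* Γ₂),
      orderOf (ψ₁ a) = orderOf (ψ₂ b) ∧ Pk a S M ψ₁ ∧ Pk b T M ψ₂ ∧
      (∀ f ∈ S, ∀ f' ∈ S, ∀ x y : ℤ, f' = a ^ x * f * a ^ y → 2 * |x| < M ∧ 2 * |y| < M) ∧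
      (∀ f ∈ T, ∀ f' ∈ T, ∀ x y : ℤ, f' = b ^ x * f * b ^ y → 2 * |x| < M ∧ 2 * |y| < M) := by
  obtain ⟨M₁, hM₁⟩ := exp_bound ha hpa S hfin hS
  obtain ⟨M₂, hM₂⟩ := exp_bound hb hpb T hfinT hT
  obtain ⟨Γ₁, i1, i2, ψ₁, hψ1, hψ2⟩ := sep ha hpa S hfin hS (M₁ + M₂ + 1) (by omega)
  obtain ⟨Γ₂, i3, i4, ψ₂, hψ3, hψ4⟩ := sep hb hpb T hfinT hT (M₁ + M₂ + 1) (by omega)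
  have n1 : 0 < orderOf (ψ₁ a) := orderOf_pos _
  have n2 : 0 < orderOf (ψ₂ b) := orderOf_pos _
  obtain ⟨Γ₃, i5, i6, χ₁, hχ₁⟩ := potency a ha (orderOf (ψ₁ a) * orderOf (ψ₂ b)) (by positivity)
  obtain ⟨Γ₄, i7, i8, χ₂, hχ₂⟩ := potency b hb (orderOf (ψ₁ a) * orderOf (ψ₂ b)) (by positivity)
  refine ⟨M₁ + M₂ + 1, Γ₁ × Γ₃, Γ₂ × Γ₄, inferInstance, inferInstance, inferInstance, inferInstance,
    ψ₁.prod χ₁, ψ₂.prod χ₂, ?_, Pk.prod ⟨hψ1, hψ2⟩ _, Pk.prod ⟨hψ3, hψ4⟩ _, ?_, ?_⟩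
  · simp only [Prod.orderOf, MonoidHom.prod_apply]
    rw [hχ₁, hχ₂, Nat.lcm_eq_right (dvd_mul_right _ _), Nat.lcm_eq_right (dvd_mul_left _ _)]
  · intro f hf f' hf' x y h
    have := hM₁ f hf f' hf' x y h
    push_cast; omega
  · intro f hf f' hf' x y h
    have := hM₂ f hf f' hf' x y h
    push_cast; omega

theorem prep {α β : Type} {a : FreeGroup α} {b : FreeGroup β} (ha : a ≠ 1) (hb : b ≠ 1)
    (hpa : NotProperPower a) (hpb : NotProperPower b) {k l : ℕ} [NeZero k] [NeZero l]
    (f : ZMod k → FreeGroup α) (h : ZMod k → FreeGroup β)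
    (f' : ZMod l → FreeGroup α) (h' : ZMod l → FreeGroup β)
    (hf : ∀ j, f j ∉ zpowers a) (hh : ∀ j, h j ∉ zpowers b)
    (hf' : ∀ j, f' j ∉ zpowers a) (hh' : ∀ j, h' j ∉ zpowers b) :
    ∃ (M : ℕ) (Γ₁ Γ₂ : Type) (_ : Group Γ₁) (_ : Group Γ₂) (_ : Finite Γ₁) (_ : Finite Γ₂)
      (ψ₁ : FreeGroup α →* Γ₁) (ψ₂ : FreeGroup β →* Γ₂),
      orderOf (ψ₁ a) = orderOf (ψ₂ b) ∧
      (∀ j, ∀ x : ℤ, ψ₁ (f j) ≠ ψ₁ (a ^ x)) ∧ (∀ j, ∀ x : ℤ, ψ₂ (h j) ≠ ψ₂ (b ^ x)) ∧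
      MD a b M ψ₁ ψ₂ f h f' h' ∧
      MD a b M ψ₁ ψ₂ (fun i : ZMod k => (f (-i))⁻¹) (fun i : ZMod k => (h (-i - 1))⁻¹) f' h' := by
  obtain ⟨M, Γ₁, Γ₂, i1, i2, i3, i4, ψ₁, ψ₂, h0, P1, P2, B1, B2⟩ := prepS ha hb hpa hpb
    (Set.range f ∪ Set.range (fun j => (f j)⁻¹) ∪ Set.range f')
    (((Set.finite_range _).union (Set.finite_range _)).union (Set.finite_range _))
    (by rintro _ ((⟨j, rfl⟩ | ⟨j, rfl⟩) | ⟨j, rfl⟩)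
        · exact hf j
        · simpa using hf j
        · exact hf' j)
    (Set.range h ∪ Set.range (fun j => (h j)⁻¹) ∪ Set.range h')
    (((Set.finite_range _).union (Set.finite_range _)).union (Set.finite_range _))
    (by rintro _ ((⟨j, rfl⟩ | ⟨j, rfl⟩) | ⟨j, rfl⟩)
        · exact hh j
        · simpa using hh j
        · exact hh' j)
  refine ⟨M, Γ₁, Γ₂, i1, i2, i3, i4, ψ₁, ψ₂, h0,
    fun j => P1.α _ (Or.inl (Or.inl ⟨j, rfl⟩)), fun j => P2.α _ (Or.inl (Or.inl ⟨j, rfl⟩)), ?_, ?_⟩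
  · constructor
    · exact fun j => P1.α _ (Or.inr ⟨j, rfl⟩)
    · exact fun j => P2.α _ (Or.inr ⟨j, rfl⟩)
    · exact fun i j => P1.β _ (Or.inl (Or.inl ⟨j, rfl⟩)) _ (Or.inr ⟨i, rfl⟩)
    · exact fun i j => P2.β _ (Or.inl (Or.inl ⟨j, rfl⟩)) _ (Or.inr ⟨i, rfl⟩)
    · exact fun i j => B1 _ (Or.inl (Or.inl ⟨j, rfl⟩)) _ (Or.inr ⟨i, rfl⟩)
    · exact fun i j => B2 _ (Or.inl (Or.inl ⟨j, rfl⟩)) _ (Or.inr ⟨i, rfl⟩)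
    · exact fun j x y x' y' he => double_unique ha hpa (hf j) he
  · constructor
    · exact fun j => P1.α _ (Or.inr ⟨j, rfl⟩)
    · exact fun j => P2.α _ (Or.inr ⟨j, rfl⟩)
    · exact fun i j => P1.β _ (Or.inl (Or.inr ⟨-j, rfl⟩)) _ (Or.inr ⟨i, rfl⟩)
    · exact fun i j => P2.β _ (Or.inl (Or.inr ⟨-j - 1, rfl⟩)) _ (Or.inr ⟨i, rfl⟩)
    · exact fun i j => B1 _ (Or.inl (Or.inr ⟨-j, rfl⟩)) _ (Or.inr ⟨i, rfl⟩)
    · exact fun i j => B2 _ (Or.inl (Or.inr ⟨-j - 1, rfl⟩)) _ (Or.inr ⟨i, rfl⟩)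
    · exact fun j x y x' y' he => double_unique ha hpa
        (by simpa using hf (-j)) he

section
variable {F₁ F₂ H : Type} [Group F₁] [Group F₂] [Group H] {a : F₁} {b : F₂}
    {ι₁ : F₁ →* H} {ι₂ : F₂ →* H}

/-- matching in either direction -/
theorem match_both (A : IsAmalg a b ι₁ ι₂) {Γ₁ Γ₂ X : Type} [Group Γ₁] [Group Γ₂] {M : ℕ}
    {ψ₁ : F₁ →* Γ₁} {ψ₂ : F₂ →* Γ₂} {k l : ℕ} [NeZero k] [NeZero l]
    {f : ZMod k → F₁} {h : ZMod k → F₂}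
    {f' : ZMod l → F₁} {h' : ZMod l → F₂} (D : MD a b M ψ₁ ψ₂ f h f' h')
    (D' : MD a b M ψ₁ ψ₂ (fun i : ZMod k => (f (-i))⁻¹) (fun i : ZMod k => (h (-i - 1))⁻¹) f' h')
    {Φ : H →* Equiv.Perm X} {p q : ZMod k → X}
    (C : Circ ι₁ ι₂ Φ k f h (fun g => ψ₁ g = 1) (fun g => ψ₂ g = 1) p q)
    (x : X)
    (hz : ∀ n, (∃ (c : ℤ) (j : _), Φ (wordU ι₁ ι₂ f' h' 0 n) x = Φ (ι₁ (a ^ c)) (p j)) ∨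
      (∃ (c : ℤ) (j : _), Φ (wordU ι₁ ι₂ f' h' 0 n) x = Φ (ι₁ (a ^ c)) (q j)))
    (hw : ∀ n : ℕ, (∃ (c : ℤ) (j : _), Φ (ι₁ (f' n) * wordU ι₁ ι₂ f' h' 0 n) x = Φ (ι₁ (a ^ c)) (p j)) ∨
      (∃ (c : ℤ) (j : _), Φ (ι₁ (f' n) * wordU ι₁ ι₂ f' h' 0 n) x = Φ (ι₁ (a ^ c)) (q j))) :
    (IsConj (wordU ι₁ ι₂ f h 0 k ^ l) (wordU ι₁ ι₂ f' h' 0 l ^ k) ∧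
    (k = l → IsConj (wordU ι₁ ι₂ f h 0 k) (wordU ι₁ ι₂ f' h' 0 l))) ∨
    (IsConj ((wordU ι₁ ι₂ f h 0 k)⁻¹ ^ l) (wordU ι₁ ι₂ f' h' 0 l ^ k) ∧
    (k = l → IsConj (wordU ι₁ ι₂ f h 0 k)⁻¹ (wordU ι₁ ι₂ f' h' 0 l))) := by
  rcases hz 0 with ⟨c, j, hc⟩ | ⟨c, j, hc⟩
  · left
    exact match_fwd A D C x hz hw c j (by simpa [wordU] using hc)
  · right
    have := match_fwd A D' C.rev x
      (fun n => (hz n).symm.imp (fun ⟨c, j, h⟩ => ⟨c, -j, by simpa using h⟩)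
        (fun ⟨c, j, h⟩ => ⟨c, -j, by simpa using h⟩))
      (fun n => (hw n).symm.imp (fun ⟨c, j, h⟩ => ⟨c, -j, by simpa using h⟩)
        (fun ⟨c, j, h⟩ => ⟨c, -j, by simpa using h⟩)) c (-j) (by simpa [wordU] using hc)
    refine ⟨?_, fun hkl => ?_⟩
    · exact ((wordU_rev_conj f h).pow l).symm.trans this.1
    · exact (wordU_rev_conj f h).symm.trans (this.2 hkl)
end


section
variable {F₁ F₂ H : Type} [Group F₁] [Group F₂] [Group H] {a : F₁} {b : F₂}
    {ι₁ : F₁ →* H} {ι₂ : F₂ →* H}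

/-- total displacement of a function along the path of a word -/
def shf (ι₁ : F₁ →* H) (ι₂ : F₂ →* H) {X R : Type} [AddCommGroup R] (Φ : H →* Equiv.Perm X)
    (lam : X → R) {k : ℕ} (f : ZMod k → F₁) (h : ZMod k → F₂) (n : ℕ) (x : X) : R :=
  ∑ i ∈ Finset.range n, (lam (Φ (wordU ι₁ ι₂ f h 0 (i + 1)) x) -
    lam (Φ (ι₁ (f i) * wordU ι₁ ι₂ f h 0 i) x))

/-- product action -/
def padAct {F X R : Type} [Group F] (φ : F →* Equiv.Perm X) : F →* Equiv.Perm (X × R) where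
  toFun g := (φ g).prodCongr (Equiv.refl R)
  map_one' := by ext x <;> simp
  map_mul' g h := by ext x <;> simp

/-- shear -/
def shr {X R : Type} [AddCommGroup R] (lam : X → R) : Equiv.Perm (X × R) where
  toFun x := (x.1, x.2 + lam x.1)
  invFun x := (x.1, x.2 - lam x.1)
  left_inv x := by simp
  right_inv x := by simp

theorem cocyc (A : IsAmalg a b ι₁ ι₂) {X R : Type} [AddCommGroup R] (Φ : H →* Equiv.Perm X)
    (lam : X → R) (hl : ∀ x, lam (Φ (ι₁ a) x) = lam x) :
    ∃ Ω : H →* Equiv.Perm (X × R),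
      (∀ g x τ, Ω (ι₁ g) (x, τ) = (Φ (ι₁ g) x, τ)) ∧
      (∀ g x τ, Ω (ι₂ g) (x, τ) = (Φ (ι₂ g) x, τ + (lam (Φ (ι₂ g) x) - lam x))) ∧
      (∀ (k : ℕ) (f : ZMod k → F₁) (h : ZMod k → F₂) (n : ℕ) (x : X) (τ : R),
        Ω (wordU ι₁ ι₂ f h 0 n) (x, τ) =
          (Φ (wordU ι₁ ι₂ f h 0 n) x, τ + shf ι₁ ι₂ Φ lam f h n x)) := by
  obtain ⟨Ω, h1, h2⟩ := A.lift (Equiv.Perm (X × R)) (padAct (Φ.comp ι₁))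
    ((MulAut.conj (shr lam)).toMonoidHom.comp (padAct (Φ.comp ι₂))) (by
      ext x
      · simp [padAct, shr, Equiv.Perm.inv_def, A.comm]
      · simp [padAct, shr, Equiv.Perm.inv_def, A.comm]
        rw [← A.comm, hl]; simp)
  have e1 : ∀ g x τ, Ω (ι₁ g) (x, τ) = (Φ (ι₁ g) x, τ) := by
    intro g x τ
    rw [h1]; simp [padAct]
  have e2 : ∀ g x τ, Ω (ι₂ g) (x, τ) = (Φ (ι₂ g) x, τ + (lam (Φ (ι₂ g) x) - lam x)) := by
    intro g x τ
    rw [h2]; simp [padAct, shr, Equiv.Perm.inv_def]; abel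
  refine ⟨Ω, e1, e2, ?_⟩
  intro k f h n
  induction n with
  | zero => intro x τ; simp [wordU, shf]
  | succ n ih =>
    intro x τ
    rw [wordU, map_mul, Equiv.Perm.mul_apply, ih, map_mul, Equiv.Perm.mul_apply, e1, e2]
    simp only [map_mul, Equiv.Perm.mul_apply, shf, Finset.sum_range_succ, wordU, zero_add]
    simp only [add_assoc]

theorem generic {V ι : Type} [AddCommGroup V] (s : Finset ι) (A : ι → V →+ ℤ)
    (h : ∀ i ∈ s, ∃ v, A i v ≠ 0) : ∃ v, ∀ i ∈ s, A i v ≠ 0 := by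
  classical
  induction s using Finset.induction_on with
  | empty => exact ⟨0, by simp⟩
  | insert i s hi ih =>
    obtain ⟨v, hv⟩ := ih (fun j hj => h j (Finset.mem_insert_of_mem hj))
    obtain ⟨w, hw⟩ := h i (Finset.mem_insert_self _ _)
    by_cases h0 : A i v = 0
    · let N : ℤ := 1 + ∑ j ∈ s, |A j w|
      refine ⟨N • v + w, fun j hj => ?_⟩
      rw [map_add, map_zsmul]
      rcases Finset.mem_insert.mp hj with rfl | hj
      · rw [h0]; simpa using hw
      · intro he
        have h1 : |A j w| = |N * A j v| := by
          rw [← abs_neg]; congr 1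
          simp only [smul_eq_mul] at he
          linarith
        have h2 : |A j w| ≤ ∑ j ∈ s, |A j w| :=
          Finset.single_le_sum (f := fun j => |A j w|) (fun _ _ => abs_nonneg _) hj
        have h3 : 1 ≤ |A j v| := Int.one_le_abs (hv j hj)
        have h4 : 0 < N := by have := abs_nonneg (A j w); simp only [N]; linarith
        rw [abs_mul, abs_of_pos h4] at h1
        nlinarith
    · exact ⟨v, fun j hj => by
        rcases Finset.mem_insert.mp hj with rfl | hj
        · exact h0
        · exact hv j hj⟩

theorem sum_prog {q : ℕ} [Fact q.Prime] {R : Type} [AddCommGroup R] (A τ : ZMod q) (hA : A ≠ 0)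
    (G : ZMod q → R) : ∑ t ∈ Finset.range q, G (τ + t * A) = ∑ y, G y := by
  have hinj : Set.InjOn (fun t : ℕ => τ + (t : ZMod q) * A) (Finset.range q) := by
    intro t ht t' ht' he
    simp only [add_right_inj] at he
    have h1 := mul_right_cancel₀ hA he
    rw [ZMod.natCast_eq_natCast_iff'] at h1
    simp at ht ht'
    rwa [Nat.mod_eq_of_lt ht, Nat.mod_eq_of_lt ht'] at h1
  refine Finset.sum_nbij (fun t : ℕ => τ + (t : ZMod q) * A) (by simp) hinj ?_ (by simp)
  apply Finset.surjOn_of_injOn_of_card_le _ (by simp) hinj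
  simp [ZMod.card]

theorem pow_shift {X R : Type} [AddCommGroup R] (T : Equiv.Perm (X × R)) (S : X → X) (g : X → R)
    (h : ∀ x τ, T (x, τ) = (S x, τ + g x)) (m : ℕ) (x : X) (τ : R) :
    (T ^ m) (x, τ) = (S^[m] x, τ + ∑ t ∈ Finset.range m, g (S^[t] x)) := by
  induction m with
  | zero => simp
  | succ m ih =>
    rw [pow_succ', Equiv.Perm.mul_apply, ih, h, Finset.sum_range_succ, Function.iterate_succ_apply']
    simp [add_assoc]
end


section
open Classical in
/-- indicator of a left orbit of the cyclic group generated by `t` -/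
noncomputable def indC {K : Type} [Group K] (t y0 y : K) : ℤ := if ∃ c : ℤ, y = t ^ c * y0 then 1 else 0

theorem indC_mul {K : Type} [Group K] (t y0 y : K) : indC t y0 (t * y) = indC t y0 y := by
  unfold indC
  congr 1
  apply propext
  constructor
  · rintro ⟨c, hc⟩
    exact ⟨-1 + c, by rw [zpow_add, mul_assoc, ← hc]; simp⟩
  · rintro ⟨c, rfl⟩
    exact ⟨1 + c, by rw [zpow_add, mul_assoc]; simp⟩

theorem indC_self {K : Type} [Group K] (t y0 : K) : indC t y0 y0 = 1 := by
  unfold indC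
  rw [if_pos ⟨0, by simp⟩]

theorem indC_nonneg {K : Type} [Group K] (t y0 y : K) : 0 ≤ indC t y0 y := by
  unfold indC
  split_ifs <;> simp

theorem indC_le {K : Type} [Group K] (t y0 y : K) : indC t y0 y ≤ 1 := by
  unfold indC
  split_ifs <;> simp

variable {F₁ F₂ H : Type} [Group F₁] [Group F₂] [Group H] {a : F₁} {b : F₂}
    {ι₁ : F₁ →* H} {ι₂ : F₂ →* H}

/-- left multiplication through a homomorphism -/
def lact {K : Type} [Group K] (Θ : H →* K) : H →* Equiv.Perm K := (MulAction.toPermHom K K).comp Θ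

@[simp] theorem lact_apply {K : Type} [Group K] (Θ : H →* K) (w : H) (x : K) : lact Θ w x = Θ w * x := rfl

/-- orbits of the points on the path of a word -/
def onPath (a : F₁) (ι₁ : F₁ →* H) (ι₂ : F₂ →* H) {K : Type} [Group K] (Θ : H →* K) {k : ℕ}
    (f : ZMod k → F₁) (h : ZMod k → F₂) : Set K :=
  {y | ∃ (c : ℤ) (n : ℕ), y = Θ (ι₁ a) ^ c * Θ (wordU ι₁ ι₂ f h 0 n) ∨
    y = Θ (ι₁ a) ^ c * Θ (ι₁ (f n) * wordU ι₁ ι₂ f h 0 n)}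

theorem onPath_mul {K : Type} [Group K] (Θ : H →* K) {k : ℕ}
    (f : ZMod k → F₁) (h : ZMod k → F₂) (c : ℤ) (y : K)
    (hy : Θ (ι₁ a) ^ c * y ∈ onPath a ι₁ ι₂ Θ f h) : y ∈ onPath a ι₁ ι₂ Θ f h := by
  obtain ⟨d, n, hd⟩ := hy
  refine ⟨-c + d, n, hd.imp ?_ ?_⟩ <;>
  · intro he
    rw [zpow_add, mul_assoc, ← he]; simp

theorem word_pow_card {K : Type} [Group K] [Finite K] (Θ : H →* K) {k : ℕ}
    (f : ZMod k → F₁) (h : ZMod k → F₂) : Θ (wordU ι₁ ι₂ f h 0 (k * Nat.card K)) = 1 := by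
  rw [wordU_pow, map_pow, pow_card_eq_one']

theorem word_per {K : Type} [Group K] [Finite K] (Θ : H →* K) {k : ℕ}
    (f : ZMod k → F₁) (h : ZMod k → F₂) (n : ℕ) :
    Θ (wordU ι₁ ι₂ f h 0 (n + k * Nat.card K)) = Θ (wordU ι₁ ι₂ f h 0 n) := by
  rw [add_comm, wordU_add, map_mul, word_pow_card]
  simp

theorem word_mod {K : Type} [Group K] [Finite K] (Θ : H →* K) {k : ℕ} [NeZero k]
    (f : ZMod k → F₁) (h : ZMod k → F₂) (n : ℕ) :
    ∃ i < k * Nat.card K, Θ (wordU ι₁ ι₂ f h 0 (i + 1)) = Θ (wordU ι₁ ι₂ f h 0 n) := by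
  have hN : 0 < k * Nat.card K := Nat.mul_pos (NeZero.pos k) Nat.card_pos
  have hp : Function.Periodic (fun n => Θ (wordU ι₁ ι₂ f h 0 n)) (k * Nat.card K) := word_per Θ f h
  refine ⟨(n + k * Nat.card K - 1) % (k * Nat.card K), Nat.mod_lt _ hN, ?_⟩
  have h1 := hp.map_mod_nat ((n + k * Nat.card K - 1) % (k * Nat.card K) + 1)
  have h2 := hp.map_mod_nat n
  rw [← h1, ← h2, Nat.mod_add_mod, Nat.sub_add_cancel (by omega)]
  simp

theorem word_mod' {K : Type} [Group K] [Finite K] (Θ : H →* K) {k : ℕ} [NeZero k]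
    (f : ZMod k → F₁) (h : ZMod k → F₂) (n : ℕ) :
    ∃ i < k * Nat.card K, Θ (ι₁ (f i) * wordU ι₁ ι₂ f h 0 i) = Θ (ι₁ (f n) * wordU ι₁ ι₂ f h 0 n) := by
  have hN : 0 < k * Nat.card K := Nat.mul_pos (NeZero.pos k) Nat.card_pos
  have hp : Function.Periodic (fun n : ℕ => Θ (ι₁ (f n) * wordU ι₁ ι₂ f h 0 n)) (k * Nat.card K) := by
    intro n
    simp only [map_mul, word_per]
    simp
  exact ⟨n % (k * Nat.card K), Nat.mod_lt _ hN, hp.map_mod_nat n⟩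

theorem HHlam {K : Type} [Group K] [Finite K] (Θ : H →* K) {l : ℕ} [NeZero l]
    (f' : ZMod l → F₁) (h' : ZMod l → F₂) (E : Set K)
    (hE : ∀ (c : ℤ) (y : K), Θ (ι₁ a) ^ c * y ∈ E → y ∈ E)
    (Fv : ∀ (m n : ℕ) (c : ℤ), Θ (ι₁ (f' n) * wordU ι₁ ι₂ f' h' 0 n) ≠
      Θ (ι₁ a) ^ c * Θ (wordU ι₁ ι₂ f' h' 0 m))
    (Nm : ∀ x : K, ∃ n : ℕ, Θ (wordU ι₁ ι₂ f' h' 0 n) * x ∉ E ∨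
      Θ (ι₁ (f' n) * wordU ι₁ ι₂ f' h' 0 n) * x ∉ E) :
    ∃ lam : K → ℤ, (∀ x, lam (Θ (ι₁ a) * x) = lam x) ∧ (∀ y ∈ E, lam y = 0) ∧
      ∀ x, shf ι₁ ι₂ (lact Θ) lam f' h' (l * Nat.card K) x ≠ 0 := by
  let V : AddSubgroup (K → ℤ) :=
    { carrier := {v | (∀ x, v (Θ (ι₁ a) * x) = v x) ∧ ∀ y ∈ E, v y = 0}
      zero_mem' := by simp
      add_mem' := by
        rintro v w ⟨h1, h2⟩ ⟨h3, h4⟩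
        exact ⟨fun x => by simp [h1, h3], fun y hy => by simp [h2 y hy, h4 y hy]⟩
      neg_mem' := by
        rintro v ⟨h1, h2⟩
        exact ⟨fun x => by simp [h1], fun y hy => by simp [h2 y hy]⟩ }
  let B : K → V →+ ℤ := fun x => AddMonoidHom.mk'
    (fun v => shf ι₁ ι₂ (lact Θ) v.1 f' h' (l * Nat.card K) x) (by
      intro v w
      simp only [shf, AddSubgroup.coe_add, Pi.add_apply, ← Finset.sum_add_distrib]
      refine Finset.sum_congr rfl fun i _ => by ring)
  have : Fintype K := Fintype.ofFinite K
  have hindV : ∀ y ∉ E, indC (Θ (ι₁ a)) y ∈ V := by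
    intro y hy
    refine ⟨fun x => indC_mul _ _ _, fun z hz => ?_⟩
    unfold indC
    rw [if_neg]
    rintro ⟨c, rfl⟩
    exact hy (hE _ _ hz)
  obtain ⟨v, hv⟩ := generic Finset.univ B (by
    intro x _
    obtain ⟨n, hn | hn⟩ := Nm x
    · refine ⟨⟨_, hindV _ hn⟩, ?_⟩
      obtain ⟨i, hi, hin⟩ := word_mod Θ f' h' n
      change shf ι₁ ι₂ (lact Θ) _ f' h' (l * Nat.card K) x ≠ 0
      apply ne_of_gt
      refine Finset.sum_pos' ?_ ⟨i, Finset.mem_range.mpr hi, ?_⟩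
      · intro j _
        have : indC (Θ (ι₁ a)) (Θ (wordU ι₁ ι₂ f' h' 0 n) * x)
          (lact Θ (ι₁ (f' j) * wordU ι₁ ι₂ f' h' 0 j) x) = 0 := by
          unfold indC
          rw [if_neg]
          rintro ⟨c, hc⟩
          rw [lact_apply, ← mul_assoc] at hc
          exact Fv n j c (mul_right_cancel hc)
        simp only [this]
        simpa using indC_nonneg _ _ _
      · have : indC (Θ (ι₁ a)) (Θ (wordU ι₁ ι₂ f' h' 0 n) * x)
          (lact Θ (ι₁ (f' i) * wordU ι₁ ι₂ f' h' 0 i) x) = 0 := by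
          unfold indC
          rw [if_neg]
          rintro ⟨c, hc⟩
          rw [lact_apply, ← mul_assoc] at hc
          exact Fv n i c (mul_right_cancel hc)
        simp only [this]
        rw [lact_apply, hin, indC_self]; simp
    · refine ⟨⟨_, hindV _ hn⟩, ?_⟩
      obtain ⟨i, hi, hin⟩ := word_mod' Θ f' h' n
      change shf ι₁ ι₂ (lact Θ) _ f' h' (l * Nat.card K) x ≠ 0
      have key : ∀ j, indC (Θ (ι₁ a)) (Θ (ι₁ (f' n) * wordU ι₁ ι₂ f' h' 0 n) * x)
          (lact Θ (wordU ι₁ ι₂ f' h' 0 j) x) = 0 := by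
        intro j
        unfold indC
        rw [if_neg]
        rintro ⟨c, hc⟩
        rw [lact_apply, ← mul_assoc] at hc
        have := mul_right_cancel hc
        exact Fv j n (-c) (by rw [this]; simp)
      apply ne_of_lt
      rw [← neg_pos]
      unfold shf
      rw [← Finset.sum_neg_distrib]
      refine Finset.sum_pos' ?_ ⟨i, Finset.mem_range.mpr hi, ?_⟩
      · intro j _
        simp only [key]
        simpa using indC_nonneg _ _ _
      · simp only [key]
        rw [lact_apply, hin, indC_self]; simp)
  exact ⟨v.1, v.2.1, v.2.2, fun x => hv x (Finset.mem_univ _)⟩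
end


section
variable {F₁ F₂ H : Type} [Group F₁] [Group F₂] [Group H] {a : F₁} {b : F₂}
    {ι₁ : F₁ →* H} {ι₂ : F₂ →* H}

theorem exists_prime_gt (s : Finset ℕ) : ∃ q, q.Prime ∧ ∀ n ∈ s, n < q := by
  obtain ⟨q, hq, hp⟩ := Nat.exists_infinite_primes (s.sup id + 1)
  refine ⟨q, hp, fun n hn => ?_⟩
  have : n ≤ s.sup id := Finset.le_sup (f := id) hn
  omega

/-- orders agree when the extension by a large prime is trivial on a power -/
theorem order_same {X R : Type} [AddCommGroup R] (p : ℕ) (hp : p.Prime) (hR : ∀ r : R, p • r = 0)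
    (T : Equiv.Perm X) (T' : Equiv.Perm (X × R))
    (hpow : ∀ n : ℕ, ∃ g : X → R, ∀ x τ, (T' ^ n) (x, τ) = ((T ^ n) x, τ + g x))
    (N : ℕ) (hN : T' ^ N = 1) (hT : T ^ N = 1) (hpN : ¬ p ∣ N) : orderOf T = orderOf T' := by
  apply Nat.dvd_antisymm
  · apply orderOf_dvd_of_pow_eq_one
    obtain ⟨g, hg⟩ := hpow (orderOf T')
    ext x
    have := hg x 0
    rw [pow_orderOf_eq_one] at this
    exact (congrArg Prod.fst this).symm
  · apply orderOf_dvd_of_pow_eq_one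
    obtain ⟨g, hg⟩ := hpow (orderOf T)
    obtain ⟨m, hm⟩ := orderOf_dvd_of_pow_eq_one hT
    rw [pow_orderOf_eq_one] at hg
    have h1 := fun x τ => pow_shift _ id g hg m x τ
    rw [← pow_mul, ← hm, hN] at h1
    ext1 ⟨x, τ⟩
    rw [hg]
    have h2 := h1 x 0
    simp at h2
    have hc : Nat.Coprime p m := (Nat.Prime.coprime_iff_not_dvd hp).mpr
      (fun hd => hpN (hm ▸ hd.mul_left _))
    have h3 := hR (g x)
    have h4 : addOrderOf (g x) ∣ Nat.gcd p m :=
      Nat.dvd_gcd (addOrderOf_dvd_of_nsmul_eq_zero h3) (addOrderOf_dvd_of_nsmul_eq_zero h2.symm)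
    rw [hc] at h4
    have h5 : g x = 0 := by
      rw [← AddMonoid.addOrderOf_eq_one_iff]; exact Nat.dvd_one.mp h4
    simp [h5]

theorem HHstep (A : IsAmalg a b ι₁ ι₂) {K : Type} [Group K] [Finite K] (Θ : H →* K)
    {k l : ℕ} [NeZero k] [NeZero l]
    (f : ZMod k → F₁) (h : ZMod k → F₂) (f' : ZMod l → F₁) (h' : ZMod l → F₂)
    (Fu : ∀ (m n : ℕ) (c : ℤ), Θ (ι₁ (f n) * wordU ι₁ ι₂ f h 0 n) ≠
      Θ (ι₁ a) ^ c * Θ (wordU ι₁ ι₂ f h 0 m))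
    (lam : K → ℤ) (hl : ∀ x, lam (Θ (ι₁ a) * x) = lam x)
    (hl0 : ∀ y ∈ onPath a ι₁ ι₂ Θ f h, lam y = 0)
    (hl1 : ∀ x, shf ι₁ ι₂ (lact Θ) lam f' h' (l * Nat.card K) x ≠ 0) :
    ∃ (X Y : Type) (_ : Finite X) (_ : Finite Y) (Ω : H →* Equiv.Perm X) (Ω' : H →* Equiv.Perm Y),
      orderOf (Ω (wordU ι₁ ι₂ f' h' 0 l)) = orderOf (Ω' (wordU ι₁ ι₂ f' h' 0 l)) ∧
      orderOf (Ω (wordU ι₁ ι₂ f h 0 k)) ≠ orderOf (Ω' (wordU ι₁ ι₂ f h 0 k)) := by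
  classical
  have : Fintype K := Fintype.ofFinite K
  obtain ⟨q, hq, hqb⟩ := exists_prime_gt (Finset.univ.image fun x =>
    (shf ι₁ ι₂ (lact Θ) lam f' h' (l * Nat.card K) x).natAbs)
  have : Fact q.Prime := ⟨hq⟩
  have : Fact (1 < q) := ⟨hq.one_lt⟩
  have hqA : ∀ x, ((shf ι₁ ι₂ (lact Θ) lam f' h' (l * Nat.card K) x : ℤ) : ZMod q) ≠ 0 := by
    intro x he
    rw [ZMod.intCast_zmod_eq_zero_iff_dvd] at he
    have h1 := hqb _ (Finset.mem_image_of_mem _ (Finset.mem_univ x))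
    have h2 := Nat.le_of_dvd (Int.natAbs_pos.mpr (hl1 x)) (Int.natCast_dvd.mp he)
    omega
  have hcast : ∀ (k : ℕ) (f : ZMod k → F₁) (h : ZMod k → F₂) (n : ℕ) (x : K),
      shf ι₁ ι₂ (lact Θ) (fun x => (lam x : ZMod q)) f h n x =
      ((shf ι₁ ι₂ (lact Θ) lam f h n x : ℤ) : ZMod q) := by
    intro k f h n x
    simp [shf]
  obtain ⟨Ω, hΩ1, -, hΩ⟩ := cocyc A (lact Θ) (fun x => (lam x : ZMod q)) (by
    intro x; simp [hl])
  simp only [hcast] at hΩ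
  set s := Nat.card K with hs
  have hspos : 0 < s := Nat.card_pos
  have hkpos : 0 < k := NeZero.pos k
  -- second layer
  obtain ⟨p, hp, hpb⟩ := exists_prime_gt {k * s, s * q, Nat.card (Equiv.Perm (K × ZMod q))}
  have hp1 : k * s < p := hpb _ (by simp)
  have hp2 : s * q < p := hpb _ (by simp)
  have hp3 : Nat.card (Equiv.Perm (K × ZMod q)) < p := hpb _ (by simp)
  have : Fact p.Prime := ⟨hp⟩
  set t := Θ (ι₁ a) with ht
  let y1 := Θ (wordU ι₁ ι₂ f h 0 1)
  let mu : K × ZMod q → ZMod p := fun z => (indC t y1 z.1 : ZMod p) *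
    ((if z.2 = 0 then 1 else 0) - (if z.2 = 1 then 1 else 0))
  obtain ⟨Ω', -, -, hΩ'⟩ := cocyc A Ω mu (by
    rintro ⟨x, τ⟩
    rw [hΩ1]
    simp only [mu, lact_apply]
    rw [← ht, indC_mul])
  have hmu0 : ∀ (y : K) (c : ZMod q), ∑ τ, mu (y, τ + c) = 0 := by
    intro y c
    have := Equiv.sum_comp (Equiv.addRight c) (fun τ => mu (y, τ))
    simp only [Equiv.coe_addRight] at this
    rw [this]
    simp only [mu]
    rw [← Finset.mul_sum, Finset.sum_sub_distrib]
    simp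
  refine ⟨K × ZMod q, (K × ZMod q) × ZMod p, inferInstance, inferInstance, Ω, Ω', ?_, ?_⟩
  · -- orders of v
    apply order_same p hp (fun r => by simp) _ _ _ (s * q)
    · -- big power trivial upstairs
      have hT : ∀ (z : K × ZMod q) (σ : ZMod p), (Ω' (wordU ι₁ ι₂ f' h' 0 l) ^ s) (z, σ) =
          ((z.1, z.2 + ((shf ι₁ ι₂ (lact Θ) lam f' h' (l * s) z.1 : ℤ) : ZMod q)),
            σ + shf ι₁ ι₂ Ω mu f' h' (l * s) z) := by
        rintro ⟨x, τ⟩ σ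
        rw [← map_pow, ← wordU_pow, hΩ', hΩ, lact_apply, hs, word_pow_card, one_mul]
      have hit : ∀ (m : ℕ) (x : K) (τ : ZMod q),
          (fun z : K × ZMod q => (z.1, z.2 + ((shf ι₁ ι₂ (lact Θ) lam f' h' (l * s) z.1 : ℤ) : ZMod q)))^[m] (x, τ)
          = (x, τ + m * ((shf ι₁ ι₂ (lact Θ) lam f' h' (l * s) x : ℤ) : ZMod q)) := by
        intro m x τ
        induction m with
        | zero => simp
        | succ m ih =>
          rw [Function.iterate_succ_apply', ih]
          simp; ring
      rw [pow_mul]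
      ext1 ⟨⟨x, τ⟩, σ⟩
      rw [pow_shift _ _ _ hT]
      simp only [hit]
      have := sum_prog _ τ (hqA x) (fun y => shf ι₁ ι₂ Ω mu f' h' (l * s) (x, y))
      rw [this]
      have h0 : ∑ y, shf ι₁ ι₂ Ω mu f' h' (l * s) (x, y) = 0 := by
        simp only [shf]
        rw [Finset.sum_comm]
        apply Finset.sum_eq_zero
        intro i _
        rw [Finset.sum_sub_distrib]
        simp only [map_mul, Equiv.Perm.mul_apply, hΩ, hΩ1, hmu0, sub_zero]
      rw [h0]
      simp
    · rw [← map_pow, ← map_one Ω] 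
      rw [← wordU_pow]
      ext1 ⟨x, τ⟩
      have : l * (s * q) = (l * s) * q := by ring
      have h1 : Ω (wordU ι₁ ι₂ f' h' 0 l ^ s) = Ω (wordU ι₁ ι₂ f' h' 0 (l * s)) := by rw [wordU_pow]
      rw [wordU_pow, pow_mul, map_pow, h1]
      have hT : ∀ (x : K) (τ : ZMod q), (Ω (wordU ι₁ ι₂ f' h' 0 (l * s))) (x, τ) =
          (id x, τ + ((shf ι₁ ι₂ (lact Θ) lam f' h' (l * s) x : ℤ) : ZMod q)) := by
        intro x τ
        rw [hΩ, lact_apply, hs, word_pow_card, one_mul]; rfl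
      rw [pow_shift _ _ _ hT]
      simp
    · intro hd
      exact absurd (Nat.le_of_dvd (Nat.mul_pos hspos hq.pos) hd) (by omega)
    · intro n
      refine ⟨fun z => shf ι₁ ι₂ Ω mu f' h' (l * n) z, fun z σ => ?_⟩
      rw [← map_pow, ← wordU_pow, hΩ', wordU_pow, map_pow]
  · -- orders of u
    have hshf0 : ∀ n, shf ι₁ ι₂ (lact Θ) lam f h n 1 = 0 := by
      intro n
      apply Finset.sum_eq_zero
      intro i _
      rw [lact_apply, lact_apply, hl0, hl0, sub_zero]
      · exact ⟨0, i, Or.inr (by simp)⟩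
      · exact ⟨0, i + 1, Or.inl (by simp)⟩
    have hu0 : ∀ n, Ω (wordU ι₁ ι₂ f h 0 n) (1, 0) = (Θ (wordU ι₁ ι₂ f h 0 n), 0) := by
      intro n
      rw [hΩ, hshf0]; simp
    have hw0 : ∀ n : ℕ, Ω (ι₁ (f n) * wordU ι₁ ι₂ f h 0 n) (1, 0) =
        (Θ (ι₁ (f n) * wordU ι₁ ι₂ f h 0 n), 0) := by
      intro n
      rw [map_mul, Equiv.Perm.mul_apply, hu0, hΩ1]; simp
    let B : ℤ := ∑ i ∈ Finset.range (k * s), indC t y1 (Θ (wordU ι₁ ι₂ f h 0 (i + 1)))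
    have hB : shf ι₁ ι₂ Ω mu f h (k * s) (1, 0) = (B : ZMod p) := by
      simp only [B, Int.cast_sum, shf]
      refine Finset.sum_congr rfl fun i _ => ?_
      rw [hu0, hw0]
      have : indC t y1 (Θ (ι₁ (f i) * wordU ι₁ ι₂ f h 0 i)) = 0 := by
        unfold indC
        rw [if_neg]
        rintro ⟨c, hc⟩
        exact Fu 1 i c hc
      rw [map_mul] at this
      simp [mu, this]
    have hB1 : 1 ≤ B := by
      have := Finset.single_le_sum (f := fun i => indC t y1 (Θ (wordU ι₁ ι₂ f h 0 (i + 1))))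
        (fun i _ => indC_nonneg _ _ _) (Finset.mem_range.mpr (Nat.mul_pos hkpos hspos))
      simp only [zero_add] at this
      rw [show Θ (wordU ι₁ ι₂ f h 0 1) = y1 from rfl, indC_self] at this
      exact this
    have hB2 : B ≤ (k * s : ℕ) := by
      have := Finset.sum_le_card_nsmul (Finset.range (k * s))
        (fun i => indC t y1 (Θ (wordU ι₁ ι₂ f h 0 (i + 1)))) 1 (fun i _ => indC_le _ _ _)
      simpa using this
    have hBp : (B : ZMod p) ≠ 0 := by
      intro he
      rw [ZMod.intCast_zmod_eq_zero_iff_dvd] at he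
      have := Int.le_of_dvd (by omega) he
      omega
    have hus : ∀ n : ℕ, ∀ σ, (Ω' (wordU ι₁ ι₂ f h 0 (k * s)) ^ n) ((1, 0), σ) = ((1, 0), σ + n * B) := by
      intro n
      induction n with
      | zero => simp
      | succ n ih =>
        intro σ
        rw [pow_succ, Equiv.Perm.mul_apply, hΩ', hB, hu0, hs, word_pow_card, ← hs, ih]
        push_cast
        congr 1; ring
    have hdvd : p ∣ orderOf (Ω' (wordU ι₁ ι₂ f h 0 k)) := by
      set n := orderOf (Ω' (wordU ι₁ ι₂ f h 0 k)) with hn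
      have h1 := hus n 0
      rw [wordU_pow, ← map_pow, ← pow_mul, mul_comm s n, pow_mul, map_pow, map_pow, hn, pow_orderOf_eq_one] at h1
      simp [← hn] at h1
      rcases h1 with h1 | h1
      · exact (ZMod.natCast_eq_zero_iff _ _).mp h1
      · exact absurd h1 hBp
    intro he
    rw [← he] at hdvd
    have := Nat.le_of_dvd Nat.card_pos (hdvd.trans (orderOf_dvd_natCard _))
    omega
end


section
variable {F₁ F₂ H : Type} [Group F₁] [Group F₂] [Group H] {a : F₁} {b : F₂}
    {ι₁ : F₁ →* H} {ι₂ : F₂ →* H}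

theorem circ_p {X : Type} {k : ℕ} {f : ZMod k → F₁} {h : ZMod k → F₂}
    {Φ : H →* Equiv.Perm X} {p q : ZMod k → X} {P : F₁ → Prop} {Q : F₂ → Prop}
    (C : Circ ι₁ ι₂ Φ k f h P Q p q) (n : ℕ) : Φ (wordU ι₁ ι₂ f h 0 n) (p 0) = p n := by
  induction n with
  | zero => simp [wordU]
  | succ n ih =>
    rw [wordU, zero_add, map_mul, map_mul, Equiv.Perm.mul_apply, Equiv.Perm.mul_apply, ih, C.pq, C.qp]
    simp

theorem circ_q {X : Type} {k : ℕ} {f : ZMod k → F₁} {h : ZMod k → F₂}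
    {Φ : H →* Equiv.Perm X} {p q : ZMod k → X} {P : F₁ → Prop} {Q : F₂ → Prop}
    (C : Circ ι₁ ι₂ Φ k f h P Q p q) (n : ℕ) :
    Φ (ι₁ (f n) * wordU ι₁ ι₂ f h 0 n) (p 0) = q n := by
  rw [map_mul, Equiv.Perm.mul_apply, circ_p C, C.pq]

theorem circ_disj {Γ₁ X : Type} [Group Γ₁] {k : ℕ} {f : ZMod k → F₁} {h : ZMod k → F₂}
    {Φ : H →* Equiv.Perm X} {p q : ZMod k → X} {ψ₁ : F₁ →* Γ₁} {Q : F₂ → Prop}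
    (C : Circ ι₁ ι₂ Φ k f h (fun g => ψ₁ g = 1) Q p q) (hα : ∀ j, ∀ x : ℤ, ψ₁ (f j) ≠ ψ₁ (a ^ x))
    (i j : ZMod k) (c : ℤ) : q i ≠ (Φ (ι₁ a) ^ c) (p j) := by
  intro he
  rw [← C.pq, ← map_zpow, ← map_zpow] at he
  have := C.stab₁ ((f i)⁻¹ * a ^ c) i j (by
    rw [map_mul, map_mul, Equiv.Perm.mul_apply, ← he]; simp)
  apply hα i c
  have h2 := this.2
  rw [map_mul, map_inv, inv_mul_eq_one] at h2
  exact h2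

theorem Bigger (A : IsAmalg a b ι₁ ι₂) {Γ₁ X : Type} [Group Γ₁] {k : ℕ} [NeZero k]
    {f : ZMod k → F₁} {h : ZMod k → F₂}
    {Φ : H →* Equiv.Perm X} {p q : ZMod k → X} {ψ₁ : F₁ →* Γ₁} {Q : F₂ → Prop}
    (C : Circ ι₁ ι₂ Φ k f h (fun g => ψ₁ g = 1) Q p q) (hα : ∀ j, ∀ x : ℤ, ψ₁ (f j) ≠ ψ₁ (a ^ x))
    (N : ℕ) : ∃ Ω : H →* Equiv.Perm (X × ZMod N), N ∣ orderOf (Ω (wordU ι₁ ι₂ f h 0 k)) ∧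
      (∀ g, orderOf (Ω (ι₁ g)) ∣ orderOf (Φ (ι₁ g))) ∧
      (∀ g, orderOf (Ω (ι₂ g)) ∣ orderOf (Φ (ι₂ g))) := by
  classical
  let lam : X → ZMod N := fun y => if ∃ c : ℤ, y = (Φ (ι₁ a) ^ c) (p 1) then 1 else 0
  obtain ⟨Ω, h1, h2, h3⟩ := cocyc A Φ lam (by
    intro x
    simp only [lam]
    congr 1
    apply propext
    constructor
    · rintro ⟨c, hc⟩
      exact ⟨-1 + c, by rw [zpow_add, Equiv.Perm.mul_apply, ← hc]; simp⟩
    · rintro ⟨c, rfl⟩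
      exact ⟨1 + c, by rw [zpow_add, Equiv.Perm.mul_apply]; simp⟩)
  refine ⟨Ω, ?_, ?_, ?_⟩
  · have hs : shf ι₁ ι₂ Φ lam f h k (p 0) = 1 := by
      unfold shf
      rw [Finset.sum_eq_single 0]
      · rw [circ_p C, circ_q C]
        simp only [lam]
        rw [if_pos ⟨0, by simp⟩, if_neg]
        · simp
        · rintro ⟨c, hc⟩
          exact circ_disj C hα _ _ c hc
      · intro i hi hi0
        rw [circ_p C, circ_q C]
        simp only [lam]
        rw [if_neg, if_neg]
        · simp
        · rintro ⟨c, hc⟩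
          exact circ_disj C hα _ _ c hc
        · rintro ⟨c, hc⟩
          rw [← map_zpow, ← map_zpow] at hc
          have := (C.stab₁ _ _ _ hc.symm).1
          push_cast at this
          rw [add_eq_right, ZMod.natCast_eq_zero_iff] at this
          exact hi0 (Nat.eq_zero_of_dvd_of_lt this (Finset.mem_range.mp hi))
      · intro h0
        exact absurd (Finset.mem_range.mpr (NeZero.pos k)) h0
    have hpow : ∀ n : ℕ, (Ω (wordU ι₁ ι₂ f h 0 k) ^ n) (p 0, 0) = (p 0, (n : ZMod N)) := by
      intro n
      induction n with
      | zero => simp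
      | succ n ih =>
        rw [pow_succ', Equiv.Perm.mul_apply, ih, h3, hs, circ_p C]
        simp
    have := hpow (orderOf (Ω (wordU ι₁ ι₂ f h 0 k)))
    rw [pow_orderOf_eq_one] at this
    have h4 := congrArg Prod.snd this
    exact (ZMod.natCast_eq_zero_iff _ _).mp h4.symm
  · intro g
    apply orderOf_dvd_of_pow_eq_one
    rw [← map_pow, ← map_pow]
    ext1 ⟨x, τ⟩
    rw [h1, map_pow, map_pow, pow_orderOf_eq_one]; simp
  · intro g
    apply orderOf_dvd_of_pow_eq_one
    rw [← map_pow, ← map_pow]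
    ext1 ⟨x, τ⟩
    rw [h2, map_pow, map_pow, pow_orderOf_eq_one]; simp
end

section
variable {α β H : Type} [Group H] {a : FreeGroup α} {b : FreeGroup β}
    {ι₁ : FreeGroup α →* H} {ι₂ : FreeGroup β →* H}

theorem Big (A : IsAmalg a b ι₁ ι₂) (ha : a ≠ 1) (hb : b ≠ 1)
    (hpa : NotProperPower a) (hpb : NotProperPower b) {k : ℕ} [NeZero k]
    (f : ZMod k → FreeGroup α) (h : ZMod k → FreeGroup β)
    (hf : ∀ j, f j ∉ zpowers a) (hh : ∀ j, h j ∉ zpowers b) (N : ℕ) [NeZero N] :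
    ∃ (X : Type) (_ : Finite X) (Ω : H →* Equiv.Perm X), N ∣ orderOf (Ω (wordU ι₁ ι₂ f h 0 k)) := by
  obtain ⟨M, Γ₁, Γ₂, i1, i2, i3, i4, ψ₁, ψ₂, h0, α1, α2, -, -⟩ :=
    prep ha hb hpa hpb f h f h hf hh hf hh
  obtain ⟨X, i5, Φ, p, q, C⟩ := build A ψ₁ ψ₂ h0 k f h α1 α2
  obtain ⟨Ω, hΩ, -⟩ := Bigger A C α1 N
  exact ⟨_, inferInstance, Ω, hΩ⟩

theorem HE (A : IsAmalg a b ι₁ ι₂) (ha : a ≠ 1) (hb : b ≠ 1)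
    (hpa : NotProperPower a) (hpb : NotProperPower b) {k : ℕ} [NeZero k]
    (f : ZMod k → FreeGroup α) (h : ZMod k → FreeGroup β)
    (hf : ∀ j, f j ∉ zpowers a) (hh : ∀ j, h j ∉ zpowers b) :
    ∃ (X : Type) (_ : Finite X) (Ω : H →* Equiv.Perm X),
      (∀ g, orderOf (Ω (wordU ι₁ ι₂ f h 0 k)) ≠ orderOf (Ω (ι₁ g))) ∧
      (∀ g, orderOf (Ω (wordU ι₁ ι₂ f h 0 k)) ≠ orderOf (Ω (ι₂ g))) := by
  obtain ⟨M, Γ₁, Γ₂, i1, i2, i3, i4, ψ₁, ψ₂, h0, α1, α2, -, -⟩ :=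
    prep ha hb hpa hpb f h f h hf hh hf hh
  obtain ⟨X, i5, Φ, p, q, C⟩ := build A ψ₁ ψ₂ h0 k f h α1 α2
  obtain ⟨N, hN, hNb⟩ := exists_prime_gt {Nat.card (Equiv.Perm X)}
  have hNb := hNb _ (Finset.mem_singleton_self _)
  have : NeZero N := ⟨hN.ne_zero⟩
  obtain ⟨Ω, hΩ, h1, h2⟩ := Bigger A C α1 N
  refine ⟨_, inferInstance, Ω, ?_, ?_⟩
  · intro g he
    rw [he] at hΩ
    have := Nat.le_of_dvd Nat.card_pos ((hΩ.trans (h1 g)).trans (orderOf_dvd_natCard _))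
    omega
  · intro g he
    rw [he] at hΩ
    have := Nat.le_of_dvd Nat.card_pos ((hΩ.trans (h2 g)).trans (orderOf_dvd_natCard _))
    omega

theorem HH (A : IsAmalg a b ι₁ ι₂) (ha : a ≠ 1) (hb : b ≠ 1)
    (hpa : NotProperPower a) (hpb : NotProperPower b) {k l : ℕ} [NeZero k] [NeZero l]
    (f : ZMod k → FreeGroup α) (h : ZMod k → FreeGroup β)
    (f' : ZMod l → FreeGroup α) (h' : ZMod l → FreeGroup β)
    (hf : ∀ j, f j ∉ zpowers a) (hh : ∀ j, h j ∉ zpowers b)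
    (hf' : ∀ j, f' j ∉ zpowers a) (hh' : ∀ j, h' j ∉ zpowers b) :
    ((IsConj (wordU ι₁ ι₂ f h 0 k ^ l) (wordU ι₁ ι₂ f' h' 0 l ^ k) ∧
    (k = l → IsConj (wordU ι₁ ι₂ f h 0 k) (wordU ι₁ ι₂ f' h' 0 l))) ∨
    (IsConj ((wordU ι₁ ι₂ f h 0 k)⁻¹ ^ l) (wordU ι₁ ι₂ f' h' 0 l ^ k) ∧
    (k = l → IsConj (wordU ι₁ ι₂ f h 0 k)⁻¹ (wordU ι₁ ι₂ f' h' 0 l)))) ∨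
    ∃ (X Y : Type) (_ : Finite X) (_ : Finite Y) (Ω : H →* Equiv.Perm X) (Ω' : H →* Equiv.Perm Y),
      orderOf (Ω (wordU ι₁ ι₂ f' h' 0 l)) = orderOf (Ω' (wordU ι₁ ι₂ f' h' 0 l)) ∧
      orderOf (Ω (wordU ι₁ ι₂ f h 0 k)) ≠ orderOf (Ω' (wordU ι₁ ι₂ f h 0 k)) := by
  obtain ⟨M, Γ₁, Γ₂, i1, i2, i3, i4, ψ₁, ψ₂, h0, α1, α2, D, D'⟩ :=
    prep ha hb hpa hpb f h f' h' hf hh hf' hh'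
  obtain ⟨X, i5, Φ, p, q, C⟩ := build A ψ₁ ψ₂ h0 k f h α1 α2
  obtain ⟨X', i6, Φ', p', q', C'⟩ := build A ψ₁ ψ₂ h0 l f' h' D.α₁ D.α₂
  let Θ := Φ.prod Φ'
  by_cases Nm : ∀ x : Equiv.Perm X × Equiv.Perm X', ∃ n : ℕ,
      Θ (wordU ι₁ ι₂ f' h' 0 n) * x ∉ onPath a ι₁ ι₂ Θ f h ∨
      Θ (ι₁ (f' n) * wordU ι₁ ι₂ f' h' 0 n) * x ∉ onPath a ι₁ ι₂ Θ f h
  · right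
    obtain ⟨lam, hl, hl0, hl1⟩ := HHlam (a := a) Θ f' h' (onPath a ι₁ ι₂ Θ f h)
      (fun c y => onPath_mul Θ f h c y) (by
        intro m n c he
        have h1 : Φ' (ι₁ (f' n) * wordU ι₁ ι₂ f' h' 0 n) =
          Φ' (ι₁ a) ^ c * Φ' (wordU ι₁ ι₂ f' h' 0 m) := congrArg Prod.snd he
        have h2 := congrArg (fun s => s (p' 0)) h1
        simp only [Equiv.Perm.mul_apply] at h2
        rw [circ_q C', circ_p C'] at h2
        exact circ_disj C' D.α₁ _ _ c h2) Nm
    exact HHstep A Θ f h f' h' (by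
        intro m n c he
        have h1 : Φ (ι₁ (f n) * wordU ι₁ ι₂ f h 0 n) =
          Φ (ι₁ a) ^ c * Φ (wordU ι₁ ι₂ f h 0 m) := congrArg Prod.fst he
        have h2 := congrArg (fun s => s (p 0)) h1
        simp only [Equiv.Perm.mul_apply] at h2
        rw [circ_q C, circ_p C] at h2
        exact circ_disj C α1 _ _ c h2) lam hl hl0 hl1
  · left
    push Not at Nm
    obtain ⟨x, hx⟩ := Nm
    have key : ∀ w : H, Θ w * x ∈ onPath a ι₁ ι₂ Θ f h →
        (∃ (c : ℤ) (j : _), Φ w (x.1 (p 0)) = Φ (ι₁ (a ^ c)) (p j)) ∨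
        (∃ (c : ℤ) (j : _), Φ w (x.1 (p 0)) = Φ (ι₁ (a ^ c)) (q j)) := by
      rintro w ⟨c, n, he | he⟩
      · left
        refine ⟨c, n, ?_⟩
        have h1 : Φ w * x.1 = Φ (ι₁ a) ^ c * Φ (wordU ι₁ ι₂ f h 0 n) := congrArg Prod.fst he
        have h2 := congrArg (fun s => s (p 0)) h1
        simp only [Equiv.Perm.mul_apply] at h2
        rw [h2, circ_p C, map_zpow, map_zpow]
      · right
        refine ⟨c, n, ?_⟩
        have h1 : Φ w * x.1 = Φ (ι₁ a) ^ c * Φ (ι₁ (f n) * wordU ι₁ ι₂ f h 0 n) := congrArg Prod.fst he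
        have h2 := congrArg (fun s => s (p 0)) h1
        simp only [Equiv.Perm.mul_apply] at h2
        rw [h2, circ_q C, map_zpow, map_zpow]
    exact match_both A D D' C (x.1 (p 0)) (fun n => key _ (hx n).1) (fun n => key _ (hx n).2)
end


theorem isConj_hom {G K : Type} [Group G] [Group K] (φ : G →* K) {x y : G} (h : IsConj x y) :
    IsConj (φ x) (φ y) := by
  obtain ⟨c, rfl⟩ := isConj_iff.1 h
  exact isConj_iff.2 ⟨φ c, by simp⟩

/-- Equality of orders of conjugate elements. -/
theorem orderOf_conj_eq {G : Type} [Group G] {x y : G} (h : IsConj x y) :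
    orderOf x = orderOf y := by
  obtain ⟨c, rfl⟩ := isConj_iff.1 h
  exact (orderOf_injective (MulAut.conj c).toMonoidHom (MulAut.conj c).injective x).symm

/-- Two elements are told apart by the orders of images in a finite quotient. -/
def OrdSep {H : Type} [Group H] (u v : H) : Prop :=
  ∃ (X : Type) (_ : Finite X) (Ω : H →* Equiv.Perm X), orderOf (Ω u) ≠ orderOf (Ω v)

theorem OrdSep.symm {H : Type} [Group H] {u v : H} (h : OrdSep u v) : OrdSep v u := by
  obtain ⟨X, i, Ω, h⟩ := h
  exact ⟨X, i, Ω, h.symm⟩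

theorem OrdSep.conj {H : Type} [Group H] {u v u' v' : H} (h : OrdSep u v) (hu : IsConj u' u)
    (hv : IsConj v' v) : OrdSep u' v' := by
  obtain ⟨X, i, Ω, h⟩ := h
  refine ⟨X, i, Ω, ?_⟩
  rwa [orderOf_conj_eq (isConj_hom Ω hu), orderOf_conj_eq (isConj_hom Ω hv)]

theorem OrdSep.of_group {H Γ : Type} [Group H] [Group Γ] [Finite Γ] {u v : H} (ψ : H →* Γ)
    (h : orderOf (ψ u) ≠ orderOf (ψ v)) : OrdSep u v := by
  refine ⟨Γ, inferInstance, (MulAction.toPermHom Γ Γ).comp ψ, ?_⟩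
  have hi : Function.Injective (MulAction.toPermHom Γ Γ) := MulAction.toPerm_injective
  rwa [MonoidHom.comp_apply, MonoidHom.comp_apply, orderOf_injective _ hi, orderOf_injective _ hi]

theorem OrdSep.map {H K : Type} [Group H] [Group K] (σ : H →* K) {u v : H}
    (h : OrdSep (σ u) (σ v)) : OrdSep u v := by
  obtain ⟨X, i, Ω, h⟩ := h
  exact ⟨X, i, Ω.comp σ, h⟩

/-- Two finite quotients with equal orders of `v` and different orders of `u`. -/
def Alt2 {H : Type} [Group H] (u v : H) : Prop :=
  ∃ (X Y : Type) (_ : Finite X) (_ : Finite Y) (Ω : H →* Equiv.Perm X) (Ω' : H →* Equiv.Perm Y),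
      orderOf (Ω v) = orderOf (Ω' v) ∧ orderOf (Ω u) ≠ orderOf (Ω' u)

theorem Alt2.conj {H : Type} [Group H] {u v u' v' : H} (h : Alt2 u v) (hu : IsConj u' u)
    (hv : IsConj v' v) : Alt2 u' v' := by
  obtain ⟨X, Y, i, j, Ω, Ω', h, h'⟩ := h
  refine ⟨X, Y, i, j, Ω, Ω', ?_, ?_⟩
  · rwa [orderOf_conj_eq (isConj_hom Ω hv), orderOf_conj_eq (isConj_hom Ω' hv)]
  · rwa [orderOf_conj_eq (isConj_hom Ω hu), orderOf_conj_eq (isConj_hom Ω' hu)]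

theorem Alt2.sep {H : Type} [Group H] {u v : H} (h : Alt2 u v) : OrdSep u v := by
  obtain ⟨X, Y, i, j, Ω, Ω', h, h'⟩ := h
  by_contra hn
  have h1 : orderOf (Ω u) = orderOf (Ω v) := by
    by_contra hc; exact hn ⟨X, i, Ω, hc⟩
  have h2 : orderOf (Ω' u) = orderOf (Ω' v) := by
    by_contra hc; exact hn ⟨Y, j, Ω', hc⟩
  exact h' (by rw [h1, h2, h])

theorem isConj_pow' {G : Type} [Group G] {x y : G} (h : IsConj x y) (n : ℕ) :
    IsConj (x ^ n) (y ^ n) := by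
  obtain ⟨c, rfl⟩ := isConj_iff.1 h
  exact isConj_iff.2 ⟨c, by rw [conj_pow]⟩

theorem isConj_inv' {G : Type} [Group G] {x y : G} (h : IsConj x y) :
    IsConj x⁻¹ y⁻¹ := by
  obtain ⟨c, rfl⟩ := isConj_iff.1 h
  exact isConj_iff.2 ⟨c, by rw [conj_inv]⟩

section
variable {α β H : Type} [Group H] {a : FreeGroup α} {b : FreeGroup β}
  {ι₁ : FreeGroup α →* H} {ι₂ : FreeGroup β →* H}

theorem HHgen (A : IsAmalg a b ι₁ ι₂) (ha : a ≠ 1) (hb : b ≠ 1)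
    (hpa : NotProperPower a) (hpb : NotProperPower b) (u v : H)
    (hu1 : ∀ f, ¬ IsConj u (ι₁ f)) (hu2 : ∀ f, ¬ IsConj u (ι₂ f))
    (hv1 : ∀ f, ¬ IsConj v (ι₁ f)) (hv2 : ∀ f, ¬ IsConj v (ι₂ f)) :
    ((∀ N : ℕ, 0 < N → ∃ (X : Type) (_ : Finite X) (Ω : H →* Equiv.Perm X), N ∣ orderOf (Ω u)) ∧
      ∃ k l : ℕ, 0 < k ∧ 0 < l ∧ (IsConj (u ^ l) (v ^ k) ∨ IsConj (u⁻¹ ^ l) (v ^ k)) ∧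
        (k = l → IsConj u v ∨ IsConj u⁻¹ v)) ∨ Alt2 u v := by
  rcases classify A u with ⟨f, h⟩ | ⟨f, h⟩ | ⟨k, ik, f, h, hf, hh, hu⟩
  · exact (hu1 f h).elim
  · exact (hu2 f h).elim
  rcases classify A v with ⟨f', h⟩ | ⟨f', h⟩ | ⟨l, il, f', h', hf', hh', hv⟩
  · exact (hv1 f' h).elim
  · exact (hv2 f' h).elim
  have main := HH A ha hb hpa hpb f h f' h' hf hh hf' hh'
  have big := Big A ha hb hpa hpb f h hf hh
  generalize wordU ι₁ ι₂ f h 0 k = u' at *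
  generalize wordU ι₁ ι₂ f' h' 0 l = v' at *
  rcases main with main | main
  · left
    refine ⟨?_, k, l, Nat.pos_of_neZero k, Nat.pos_of_neZero l, ?_, ?_⟩
    · intro N hN
      have : NeZero N := ⟨hN.ne'⟩
      obtain ⟨X, i, Ω, hd⟩ := big N
      exact ⟨X, i, Ω, by rwa [orderOf_conj_eq (isConj_hom Ω hu)]⟩
    · rcases main with main | main
      · exact .inl (((isConj_pow' hu l).trans main.1).trans (isConj_pow' hv k).symm)
      · exact .inr (((isConj_pow' (isConj_inv' hu) l).trans main.1).trans (isConj_pow' hv k).symm)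
    · intro e
      rcases main with main | main
      · exact .inl ((hu.trans (main.2 e)).trans hv.symm)
      · exact .inr (((isConj_inv' hu).trans (main.2 e)).trans hv.symm)
  · right
    exact Alt2.conj main hu hv

theorem HHfin (A : IsAmalg a b ι₁ ι₂) (ha : a ≠ 1) (hb : b ≠ 1)
    (hpa : NotProperPower a) (hpb : NotProperPower b) (u v : H)
    (hu1 : ∀ f, ¬ IsConj u (ι₁ f)) (hu2 : ∀ f, ¬ IsConj u (ι₂ f))
    (hv1 : ∀ f, ¬ IsConj v (ι₁ f)) (hv2 : ∀ f, ¬ IsConj v (ι₂ f))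
    (h1 : ¬ IsConj u v) (h2 : ¬ IsConj u⁻¹ v) : OrdSep u v := by
  rcases HHgen A ha hb hpa hpb u v hu1 hu2 hv1 hv2 with ⟨big, k, l, hk, hl, hc, he⟩ | h
  swap
  · exact h.sep
  by_contra hn
  obtain ⟨X, i, Ω, hd⟩ := big (k * l) (Nat.mul_pos hk hl)
  have huv : orderOf (Ω u) = orderOf (Ω v) := by
    by_contra hc; exact hn ⟨X, i, Ω, hc⟩
  have hpow : orderOf (Ω u ^ l) = orderOf (Ω v ^ k) := by
    rcases hc with hc | hc
    · simpa using orderOf_conj_eq (isConj_hom Ω hc)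
    · simpa using orderOf_conj_eq (isConj_hom Ω hc)
  have hpos : 0 < orderOf (Ω u) := orderOf_pos _
  rw [orderOf_pow_of_dvd hl.ne' ((Dvd.intro_left k rfl).trans hd),
    orderOf_pow_of_dvd hk.ne' (huv ▸ (Dvd.intro l rfl).trans hd), ← huv] at hpow
  obtain ⟨m, hm⟩ := hd
  rw [hm] at hpow hpos
  have hm0 : 0 < m := Nat.pos_of_mul_pos_left hpos
  have e1 : k * l * m / l = k * m := by
    rw [show k * l * m = k * m * l by ring, Nat.mul_div_cancel _ hl]
  have e2 : k * l * m / k = l * m := by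
    rw [show k * l * m = l * m * k by ring, Nat.mul_div_cancel _ hk]
  rw [e1, e2] at hpow
  exact (he (Nat.eq_of_mul_eq_mul_right hm0 hpow)).elim h1 h2
end

/-- Left factor of the pushout. -/
def amL {α β : Type} (a : FreeGroup α) (b : FreeGroup β) :
    FreeGroup α →* PushoutI (amalMaps a b) := PushoutI.of (φ := amalMaps a b) true

/-- Right factor of the pushout. -/
def amR {α β : Type} (a : FreeGroup α) (b : FreeGroup β) :
    FreeGroup β →* PushoutI (amalMaps a b) := PushoutI.of (φ := amalMaps a b) false

theorem am_base_L {α β : Type} (a : FreeGroup α) (b : FreeGroup β) (x : FreeGroup Unit) :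
    amL a b (FreeGroup.lift (fun _ => a) x) = PushoutI.base (amalMaps a b) x :=
  PushoutI.of_apply_eq_base (amalMaps a b) true x

theorem am_base_R {α β : Type} (a : FreeGroup α) (b : FreeGroup β) (x : FreeGroup Unit) :
    amR a b (FreeGroup.lift (fun _ => b) x) = PushoutI.base (amalMaps a b) x :=
  PushoutI.of_apply_eq_base (amalMaps a b) false x

/-- The pair of homomorphisms as a family. -/
def amPair {α β K : Type} [Group K] (φ₁ : FreeGroup α →* K) (φ₂ : FreeGroup β →* K) :
    ∀ i : Bool, fam α β i →* K
  | true => φ₁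
  | false => φ₂

theorem amIs {α β : Type} (a : FreeGroup α) (b : FreeGroup β) :
    IsAmalg a b (amL a b) (amR a b) where
  comm := by
    have h1 := am_base_L a b (FreeGroup.of ())
    have h2 := am_base_R a b (FreeGroup.of ())
    rw [FreeGroup.lift_apply_of] at h1 h2
    rw [h1, h2]
  lift := by
    intro K _ φ₁ φ₂ h
    refine ⟨PushoutI.lift (amPair φ₁ φ₂) (FreeGroup.lift fun _ => φ₁ a) ?_, ?_, ?_⟩
    · rintro (_ | _)
      · apply FreeGroup.ext_hom
        intro x
        change φ₂ (FreeGroup.lift (fun _ => b) (FreeGroup.of x)) = _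
        simp [h]
      · apply FreeGroup.ext_hom
        intro x
        change φ₁ (FreeGroup.lift (fun _ => a) (FreeGroup.of x)) = _
        simp
    · intro f
      exact PushoutI.lift_of (φ := amalMaps a b) (i := true) _ _ _ f
    · intro f
      exact PushoutI.lift_of (φ := amalMaps a b) (i := false) _ _ _ f
  gen := by
    rw [eq_top_iff]
    intro x _
    induction x using PushoutI.induction_on with
    | of i g =>
      cases i
      · exact subset_closure (.inr ⟨g, rfl⟩)
      · exact subset_closure (.inl ⟨g, rfl⟩)
    | base h =>
      rw [← am_base_L]
      exact subset_closure (.inl ⟨_, rfl⟩)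
    | mul x y hx hy => exact mul_mem (hx trivial) (hy trivial)

theorem npp_of {α : Type} (x : α) : NotProperPower (FreeGroup.of x) := by
  intro w k h
  have h1 := congrArg (fun z => Multiplicative.toAdd
    (FreeGroup.lift (fun _ => Multiplicative.ofAdd (1 : ℤ)) z)) h
  simp at h1
  have := Int.natAbs_mul k (Multiplicative.toAdd (FreeGroup.lift (fun _ => Multiplicative.ofAdd (1 : ℤ)) w))
  rw [← h1] at this
  have h2 : k.natAbs ∣ 1 := ⟨_, this⟩
  exact Nat.le_of_dvd one_pos h2

/-- Embedding of a free group into an amalgam by hyperbolic elements. -/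
theorem embed (α : Type) : ∃ (σ : FreeGroup α →* PushoutI (amalMaps
      (FreeGroup.of (none : Option α)) (FreeGroup.of (none : Option α))))
    (ρ : PushoutI (amalMaps
      (FreeGroup.of (none : Option α)) (FreeGroup.of (none : Option α))) →* FreeGroup α),
    (∀ u, ρ (σ u) = u) ∧
    (∀ u, u ≠ 1 → (∀ f, ¬ IsConj (σ u) (amL _ _ f)) ∧ (∀ f, ¬ IsConj (σ u) (amR _ _ f))) := by
  let e : FreeGroup α := 1
  let κ : FreeGroup (Option α) →* FreeGroup α :=
    FreeGroup.lift fun o => o.elim 1 FreeGroup.of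
  obtain ⟨ρ, hρ1, hρ2⟩ := (amIs (FreeGroup.of (none : Option α)) (FreeGroup.of (none : Option α))).lift
    (FreeGroup α) κ 1 (by simp [κ])
  obtain ⟨τ, hτ1, hτ2⟩ := (amIs (FreeGroup.of (none : Option α)) (FreeGroup.of (none : Option α))).lift
    (FreeGroup α) 1 κ (by simp [κ])
  let σ : FreeGroup α →* PushoutI (amalMaps
      (FreeGroup.of (none : Option α)) (FreeGroup.of (none : Option α))) :=
    FreeGroup.lift fun x => amL _ _ (FreeGroup.of (some x)) * amR _ _ (FreeGroup.of (some x))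
  have h1 : ∀ u, ρ (σ u) = u := by
    intro u
    have : ρ.comp σ = MonoidHom.id _ := by
      apply FreeGroup.ext_hom
      intro x
      simp [σ, hρ1, hρ2, κ]
    exact DFunLike.congr_fun this u
  have h2 : ∀ u, τ (σ u) = u := by
    intro u
    have : τ.comp σ = MonoidHom.id _ := by
      apply FreeGroup.ext_hom
      intro x
      simp [σ, hτ1, hτ2, κ]
    exact DFunLike.congr_fun this u
  refine ⟨σ, ρ, h1, fun u hu => ⟨fun f hc => hu ?_, fun f hc => hu ?_⟩⟩
  · have := isConj_hom τ hc
    rw [h2, hτ1] at this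
    simpa using this
  · have := isConj_hom ρ hc
    rw [h1, hρ2] at this
    simpa using this

theorem free_sep {α : Type} (u v : FreeGroup α) (h1 : ¬ IsConj u v) (h2 : ¬ IsConj u⁻¹ v) :
    OrdSep u v := by
  by_cases hu : u = 1
  · subst hu
    have hv : v ≠ 1 := fun h => h1 (by rw [h])
    obtain ⟨Γ, _, _, ψ, h⟩ := potency v hv 2 two_pos
    exact OrdSep.of_group ψ (by simp [h])
  by_cases hv : v = 1
  · subst hv
    obtain ⟨Γ, _, _, ψ, h⟩ := potency u hu 2 two_pos
    exact OrdSep.of_group ψ (by simp [h])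
  obtain ⟨σ, ρ, hr, hs⟩ := embed α
  apply OrdSep.map σ
  refine HHfin (amIs _ _) (FreeGroup.of_ne_one _) (FreeGroup.of_ne_one _) (npp_of _) (npp_of _)
    _ _ (hs u hu).1 (hs u hu).2 (hs v hv).1 (hs v hv).2 ?_ ?_
  · intro h
    have := isConj_hom ρ h
    rw [hr, hr] at this
    exact h1 this
  · intro h
    have := isConj_hom ρ h
    rw [map_inv, hr, hr] at this
    exact h2 this

theorem free_alt {α : Type} (a u : FreeGroup α) (ha : a ≠ 1) (hp : NotProperPower a)
    (hu : ∀ c : ℤ, ¬ IsConj u (a ^ c)) : Alt2 u a := by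
  have hu1 : u ≠ 1 := fun h => hu 0 (by simp [h])
  obtain ⟨σ, ρ, hr, hs⟩ := embed α
  have key : ∀ (k : ℕ) (l : ℤ), 0 < k → ¬ IsConj (u ^ l) (a ^ k) := by
    intro k l hk hc
    obtain ⟨c, hc⟩ := isConj_iff.1 hc
    have h3 : (c * u * c⁻¹) ^ l = a ^ (k : ℤ) := by
      rw [conj_zpow, hc, zpow_natCast]
    obtain ⟨m, hm⟩ := root_mem ha hp _ _ (by exact_mod_cast hk.ne') h3
    exact hu m (isConj_iff.2 ⟨c, hm.symm⟩)
  rcases HHgen (amIs _ _) (FreeGroup.of_ne_one _) (FreeGroup.of_ne_one _) (npp_of _) (npp_of _)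
    _ _ (hs u hu1).1 (hs u hu1).2 (hs a ha).1 (hs a ha).2 with
    ⟨-, k, l, hk, hl, hc, -⟩ | ⟨X, Y, i, j, Ω, Ω', h, h'⟩
  · exfalso
    rcases hc with hc | hc
    · have := isConj_hom ρ hc
      simp only [map_pow, hr] at this
      exact key k l hk (by simpa using this)
    · have := isConj_hom ρ hc
      simp only [map_pow, map_inv, hr] at this
      exact key k (-l) hk (by simpa using this)
  · exact ⟨X, Y, i, j, Ω.comp σ, Ω'.comp σ, h, h'⟩

section
variable {α β H : Type} [Group H] {a : FreeGroup α} {b : FreeGroup β}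
  {ι₁ : FreeGroup α →* H} {ι₂ : FreeGroup β →* H}

theorem E1 (A : IsAmalg a b ι₁ ι₂) (hb : b ≠ 1) (u v : FreeGroup α)
    (h1 : ¬ IsConj (ι₁ u) (ι₁ v)) (h2 : ¬ IsConj (ι₁ u)⁻¹ (ι₁ v)) : OrdSep (ι₁ u) (ι₁ v) := by
  obtain ⟨X, _, ψ, h⟩ := free_sep u v (fun h => h1 (isConj_hom ι₁ h)) (fun h => h2 (by
    have := isConj_hom ι₁ h
    rwa [map_inv] at this))
  obtain ⟨Γ, _, _, ψ₂, hψ⟩ := potency b hb (orderOf (ψ a)) (orderOf_pos _)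
  obtain ⟨Z, i, Φ, e1, e2⟩ := extend_pair A ψ ψ₂ hψ.symm
  exact ⟨Z, i, Φ, by rwa [e1, e1]⟩

theorem E2 (A : IsAmalg a b ι₁ ι₂) (ha : a ≠ 1) (hb : b ≠ 1) (hpa : NotProperPower a)
    (u : FreeGroup α) (v : FreeGroup β)
    (h1 : ¬ IsConj (ι₁ u) (ι₂ v)) (h2 : ¬ IsConj (ι₁ u)⁻¹ (ι₂ v)) : OrdSep (ι₁ u) (ι₂ v) := by
  by_cases hu : ∀ c : ℤ, ¬ IsConj u (a ^ c)
  · obtain ⟨X, Y, _, _, ψ, ψ', h, h'⟩ := free_alt a u ha hpa hu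
    obtain ⟨Γ, _, _, ψ₂, hψ⟩ := potency b hb (orderOf (ψ a)) (orderOf_pos _)
    obtain ⟨Z, i, Φ, e1, e2⟩ := extend_pair A ψ ψ₂ hψ.symm
    obtain ⟨Z', i', Φ', e1', e2'⟩ := extend_pair A ψ' ψ₂ (by rw [hψ, h])
    apply Alt2.sep
    exact ⟨Z, Z', i, i', Φ, Φ', by rw [e2, e2'], by rwa [e1, e1']⟩
  · push Not at hu
    obtain ⟨c, hc⟩ := hu
    have hc' := isConj_hom ι₁ hc
    rw [A_zpow A c] at hc'
    refine OrdSep.conj (E1 A.symm ha (b ^ c) v ?_ ?_) hc' (IsConj.refl _)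
    · exact fun h => h1 (hc'.trans h)
    · exact fun h => h2 ((isConj_inv' hc').trans h)

theorem HEsep (A : IsAmalg a b ι₁ ι₂) (ha : a ≠ 1) (hb : b ≠ 1)
    (hpa : NotProperPower a) (hpb : NotProperPower b) (u : H)
    (hu1 : ∀ f, ¬ IsConj u (ι₁ f)) (hu2 : ∀ f, ¬ IsConj u (ι₂ f)) :
    (∀ g, OrdSep u (ι₁ g)) ∧ (∀ g, OrdSep u (ι₂ g)) := by
  rcases classify A u with ⟨f, h⟩ | ⟨f, h⟩ | ⟨k, ik, f, h, hf, hh, hu⟩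
  · exact (hu1 f h).elim
  · exact (hu2 f h).elim
  obtain ⟨X, i, Ω, p, q⟩ := HE A ha hb hpa hpb f h hf hh
  exact ⟨fun g => OrdSep.conj ⟨X, i, Ω, p g⟩ hu (IsConj.refl _),
    fun g => OrdSep.conj ⟨X, i, Ω, q g⟩ hu (IsConj.refl _)⟩

theorem all_sep (A : IsAmalg a b ι₁ ι₂) (ha : a ≠ 1) (hb : b ≠ 1)
    (hpa : NotProperPower a) (hpb : NotProperPower b) (u v : H)
    (h1 : ¬ IsConj u v) (h2 : ¬ IsConj u⁻¹ v) : OrdSep u v := by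
  by_cases hu1 : ∃ f, IsConj u (ι₁ f)
  · obtain ⟨f, hf⟩ := hu1
    by_cases hv1 : ∃ f, IsConj v (ι₁ f)
    · obtain ⟨f', hf'⟩ := hv1
      exact OrdSep.conj (E1 A hb f f' (fun h => h1 ((hf.trans h).trans hf'.symm))
        (fun h => h2 (((isConj_inv' hf).trans h).trans hf'.symm))) hf hf'
    by_cases hv2 : ∃ f, IsConj v (ι₂ f)
    · obtain ⟨f', hf'⟩ := hv2
      exact OrdSep.conj (E2 A ha hb hpa f f' (fun h => h1 ((hf.trans h).trans hf'.symm))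
        (fun h => h2 (((isConj_inv' hf).trans h).trans hf'.symm))) hf hf'
    push Not at hv1 hv2
    exact OrdSep.conj ((HEsep A ha hb hpa hpb v hv1 hv2).1 f).symm hf (IsConj.refl _)
  by_cases hu2 : ∃ f, IsConj u (ι₂ f)
  · obtain ⟨f, hf⟩ := hu2
    by_cases hv1 : ∃ f, IsConj v (ι₁ f)
    · obtain ⟨f', hf'⟩ := hv1
      exact OrdSep.conj (E2 A.symm hb ha hpb f f' (fun h => h1 ((hf.trans h).trans hf'.symm))
        (fun h => h2 (((isConj_inv' hf).trans h).trans hf'.symm))) hf hf'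
    by_cases hv2 : ∃ f, IsConj v (ι₂ f)
    · obtain ⟨f', hf'⟩ := hv2
      exact OrdSep.conj (E1 A.symm ha f f' (fun h => h1 ((hf.trans h).trans hf'.symm))
        (fun h => h2 (((isConj_inv' hf).trans h).trans hf'.symm))) hf hf'
    push Not at hv1 hv2
    exact OrdSep.conj ((HEsep A ha hb hpa hpb v hv1 hv2).2 f).symm hf (IsConj.refl _)
  push Not at hu1 hu2
  by_cases hv1 : ∃ f, IsConj v (ι₁ f)
  · obtain ⟨f', hf'⟩ := hv1
    exact OrdSep.conj ((HEsep A ha hb hpa hpb u hu1 hu2).1 f') (IsConj.refl _) hf'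
  by_cases hv2 : ∃ f, IsConj v (ι₂ f)
  · obtain ⟨f', hf'⟩ := hv2
    exact OrdSep.conj ((HEsep A ha hb hpa hpb u hu1 hu2).2 f') (IsConj.refl _) hf'
  push Not at hv1 hv2
  exact HHfin A ha hb hpa hpb u v hu1 hu2 hv1 hv2 h1 h2
end

theorem stmt0 {α β : Type} (a : FreeGroup α) (b : FreeGroup β)
    (ha : a ≠ 1) (hb : b ≠ 1) (hpa : NotProperPower a) (hpb : NotProperPower b)
    (g₁ g₂ : PushoutI (amalMaps a b))
    (h1 : ¬ IsConj g₁ g₂) (h2 : ¬ IsConj g₁ g₂⁻¹) :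
    ∃ (Q : Type) (_ : Group Q) (_ : Finite Q) (φ : PushoutI (amalMaps a b) →* Q),
      Function.Surjective φ ∧ orderOf (φ g₁) ≠ orderOf (φ g₂) := by
  obtain ⟨X, i, Ω, h⟩ := all_sep (amIs a b) ha hb hpa hpb g₁ g₂ h1
    (fun h => h2 (by simpa using isConj_inv' h))
  refine ⟨Ω.range, inferInstance, inferInstance, Ω.rangeRestrict, Ω.rangeRestrict_surjective, ?_⟩
  rw [← Subgroup.orderOf_coe, ← Subgroup.orderOf_coe]
  exact h
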